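/- Let (S,𝔪) be an unramified regular local ring of mixed characteristic p ≥ 3. If the ideal Q := (p, f, g) of S has grade three (contains an S-regular sequence of length three), then R admits a birational maximal Cohen-Macaulay module: there exists a finitely generated R-submodule M of K with M ≠ 0 such that depth_S(M) = dim S, i.e. M is a maximal Cohen-Macaulay R-module. -/

import Mathlib

/-- A height one prime ideal of a commutative ring. -/
def IsHeightOnePrime {S : Type*} [CommRing S] (P : Ideal S) : Prop :=
  ∃ hP : P.IsPrime, Order.height (⟨P, hP⟩ : PrimeSpectrum S) = 1

/-- `c ∈ S` is square free if `P S_P = c S_P` for every height one prime `P` containing `c`. -/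
def PaperSquarefree {S : Type*} [CommRing S] (c : S) : Prop :=
  ∀ (P : Ideal S) (hP : P.IsPrime), Order.height (⟨P, hP⟩ : PrimeSpectrum S) = 1 → c ∈ P →
    haveI := hP
    Ideal.map (algebraMap S (Localization.AtPrime P)) P =
      Ideal.span {algebraMap S (Localization.AtPrime P) c}

/-- Two elements satisfy `𝒜₁` if no height one prime contains both of them. -/
def SatisfiesA1 {S : Type*} [CommRing S] (f g : S) : Prop :=
  ∀ P : Ideal S, IsHeightOnePrime P → ¬(f ∈ P ∧ g ∈ P)

/-- The depth of a module over a local ring: the supremum of the lengths of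
regular sequences on `M` contained in the maximal ideal. -/
noncomputable def modDepth (S : Type*) [CommRing S] [IsLocalRing S]
    (M : Type*) [AddCommGroup M] [Module S M] : ℕ∞ :=
  sSup {n : ℕ∞ | ∃ rs : List S, (rs.length : ℕ∞) = n ∧
    (∀ r ∈ rs, r ∈ IsLocalRing.maximalIdeal S) ∧ RingTheory.Sequence.IsRegular M rs}

/-- A commutative ring is Cohen-Macaulay if each of its localizations at a prime
has depth equal to its Krull dimension. -/
def IsCMRing (R : Type*) [CommRing R] : Prop :=
  ∀ (Q : Ideal R) (hQ : Q.IsPrime),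
    haveI := hQ
    (modDepth (Localization.AtPrime Q) (Localization.AtPrime Q) : WithBot ℕ∞) =
      ringKrullDim (Localization.AtPrime Q)

/-- The `n`-th symbolic power of a prime ideal `P`, i.e. `Pⁿ A_P ∩ A`. -/
noncomputable def symbPow {A : Type*} [CommRing A] (P : Ideal A) (hP : P.IsPrime) (n : ℕ) :
    Ideal A :=
  haveI := hP
  Ideal.comap (algebraMap A (Localization.AtPrime P))
    (Ideal.map (algebraMap A (Localization.AtPrime P)) (P ^ n))

/-- `ω`, as an element of the subalgebra `A = S[ω,μ]`. -/
noncomputable def omegaA {S : Type*} [CommRing S] {K : Type*} [Field K] [Algebra S K]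
    (ω μ : K) : Algebra.adjoin S ({ω, μ} : Set K) :=
  ⟨ω, Algebra.subset_adjoin (Set.mem_insert _ _)⟩

/-- `μ`, as an element of the subalgebra `A = S[ω,μ]`. -/
noncomputable def muA {S : Type*} [CommRing S] {K : Type*} [Field K] [Algebra S K]
    (ω μ : K) : Algebra.adjoin S ({ω, μ} : Set K) :=
  ⟨μ, Algebra.subset_adjoin (Set.mem_insert_of_mem _ rfl)⟩

/-- The ideal `P = (p, ω−h₁, μ−h₂)` of `A = S[ω,μ]`. -/
noncomputable def Pid {S : Type*} [CommRing S] {K : Type*} [Field K] [Algebra S K]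
    (p : ℕ) (ω μ : K) (h₁ h₂ : S) : Ideal (Algebra.adjoin S ({ω, μ} : Set K)) :=
  Ideal.span {(p : Algebra.adjoin S ({ω, μ} : Set K)),
    omegaA ω μ - algebraMap S _ h₁, muA ω μ - algebraMap S _ h₂}

/-- The colon module `(A :_K N) = {x ∈ K : x·N ⊆ A}`, as an `S`-submodule of `K`. -/
noncomputable def colonSubmodule (S : Type*) [CommRing S] (K : Type*) [Field K] [Algebra S K]
    (A : Subalgebra S K) (N : Set K) : Submodule S K where
  carrier := {x : K | ∀ z ∈ N, x * z ∈ A}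
  add_mem' := fun hx hy z hz => by
    simpa [add_mul] using add_mem (hx z hz) (hy z hz)
  zero_mem' := fun z hz => by simpa using A.zero_mem
  smul_mem' := fun c x hx z hz => by
    rw [Algebra.smul_def, mul_assoc]
    exact mul_mem (A.algebraMap_mem c) (hx z hz)

/-- `M` admits a free resolution `0 → Sⁿ → Sᵐ → M → 0`; for a finitely generated
module over a Noetherian local ring this says exactly `pd_S(M) ≤ 1`. -/
def HasFreeResLengthLE1 (S : Type*) [CommRing S] (M : Type*) [AddCommGroup M] [Module S M] :
    Prop :=
  ∃ (n m : ℕ) (φ : (Fin n → S) →ₗ[S] (Fin m → S)) (ψ : (Fin m → S) →ₗ[S] M),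
    Function.Injective φ ∧ Function.Surjective ψ ∧ LinearMap.range φ = LinearMap.ker ψ

/-- The ideal `Q` contains an `S`-regular sequence of length three, i.e. `Q` has grade
(at least) three. -/
def ContainsRegSeq3 (S : Type*) [CommRing S] (Q : Ideal S) : Prop :=
  ∃ rs : List S, rs.length = 3 ∧ (∀ r ∈ rs, r ∈ Q) ∧ RingTheory.Sequence.IsRegular S rs


section
set_option linter.all false
set_option linter.style.haveILetI false
open RingTheory.Sequence
open scoped Pointwise

universe uu
theorem reg_aux (n : ℕ) : ∀ (R : Type uu) [CommRing R] [IsNoetherianRing R] [IsLocalRing R]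
    (s : Finset R), Ideal.span (s : Set R) = IsLocalRing.maximalIdeal R → s.card ≤ n →
    ringKrullDim R = (n : WithBot ℕ∞) →
    IsDomain R ∧ ∃ rs : List R, rs.length = n ∧ (∀ r ∈ rs, r ∈ IsLocalRing.maximalIdeal R) ∧
      IsWeaklyRegular R rs := by
  classical
  induction n with
  | zero =>
    intro R _ _ _ s hs hc hd
    have : s = ∅ := by simpa using hc
    subst this
    have hb : IsLocalRing.maximalIdeal R = ⊥ := by rw [← hs]; simp
    have hF : IsField R := IsLocalRing.isField_iff_maximalIdeal_eq.mpr hb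
    exact ⟨hF.isDomain, [], rfl, by simp, .nil _ _⟩
  | succ n ih =>
    intro R _ _ _ s hs hc hd
    set m := IsLocalRing.maximalIdeal R with hm
    have hmfg : m.FG := IsNoetherian.noetherian m
    have hht : (m.height : WithBot ℕ∞) = ((n + 1 : ℕ) : WithBot ℕ∞) := by
      rw [← hd]; exact IsLocalRing.maximalIdeal_height_eq_ringKrullDim
    have hht0 : m.height ≠ 0 := by
      intro h; rw [h] at hht
      have : (0:ℕ) = n + 1 := by exact_mod_cast hht
      omega
    have hnotmin : m ∉ minimalPrimes R := by
      intro h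
      exact hht0 ((Ideal.height_eq_zero_iff).mpr h)
    have hsq : ¬ m ≤ m ^ 2 := by
      intro h
      have : m = ⊥ := by
        apply Submodule.eq_bot_of_le_smul_of_le_jacobson_bot m m hmfg
        · rw [smul_eq_mul, ← pow_two]; exact h
        · exact IsLocalRing.maximalIdeal_le_jacobson _
      apply hnotmin
      rw [minimalPrimes, this]
      refine ⟨⟨?_, le_refl _⟩, fun _ _ _ => bot_le⟩
      rw [← this]; infer_instance
    have hfin : (minimalPrimes R).Finite := minimalPrimes.finite_of_isNoetherianRing R
    have hav : ∃ x ∈ m, x ∉ m ^ 2 ∧ ∀ q ∈ minimalPrimes R, x ∉ q := by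
      by_contra hcon
      push Not at hcon
      have := (Ideal.subset_union_prime (s := insert (m^2) hfin.toFinset) (f := fun i => i) (m^2) (m^2)
        (by
          intro i hi h1 _
          have : i ∈ minimalPrimes R := by simpa [h1] using hi
          exact this.1.1) (I := m)).mp (by
          intro x hx
          by_cases h2 : x ∈ m ^ 2
          · simp only [Set.mem_iUnion]; exact ⟨m^2, by simp, h2⟩
          · obtain ⟨q, hq, hxq⟩ := hcon x hx h2
            simp only [Set.mem_iUnion]
            exact ⟨q, by simp [hq], hxq⟩)
      obtain ⟨i, hi, hmi⟩ := this
      simp only [Finset.mem_insert, Set.Finite.mem_toFinset] at hi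
      rcases hi with rfl | hi
      · exact hsq hmi
      · have h1 : i.IsPrime := hi.1.1
        have : i = m := le_antisymm (IsLocalRing.le_maximalIdeal h1.ne_top) hmi
        exact hnotmin (this ▸ hi)
    obtain ⟨x, hxm, hx2, hxq⟩ := hav
    -- the quotient
    set R' := R ⧸ Ideal.span {x} with hR'
    have hxle : Ideal.span {x} ≤ m := (Ideal.span_singleton_le_iff_mem _).mpr hxm
    have hne : Ideal.span {x} ≠ ⊤ := ne_top_of_le_ne_top (Ideal.IsPrime.ne_top inferInstance) hxle
    haveI : Nontrivial R' := Ideal.Quotient.nontrivial_iff.mpr hne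
    haveI : IsLocalRing R' := IsLocalRing.of_surjective' (Ideal.Quotient.mk (Ideal.span {x})) Ideal.Quotient.mk_surjective
    have hmap : IsLocalRing.maximalIdeal R' = m.map (Ideal.Quotient.mk (Ideal.span {x})) := by
      haveI : (m.map (Ideal.Quotient.mk (Ideal.span {x}))).IsMaximal := by
        apply Ideal.IsMaximal.map_of_surjective_of_ker_le Ideal.Quotient.mk_surjective
        rw [Ideal.mk_ker]; exact hxle
      exact (IsLocalRing.eq_maximalIdeal this).symm
    -- generators
    have hxs : x ∈ Ideal.span (s : Set R) := by rw [hs]; exact hxm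
    obtain ⟨c, hcs⟩ := Submodule.mem_span_finset.mp hxs
    have hc' : ∃ i ∈ s, c i ∉ m := by
      by_contra hcon
      push Not at hcon
      apply hx2
      rw [← hcs.2, pow_two]
      refine Ideal.sum_mem _ fun i hi => ?_
      exact Ideal.mul_mem_mul (hcon i hi) (by rw [← hs]; exact Ideal.subset_span hi)
    obtain ⟨i, his, hci⟩ := hc'
    have hcu : IsUnit (c i) := by simpa [m] using hci
    have hgen : Ideal.span (((s.erase i).image (Ideal.Quotient.mk (Ideal.span {x})) : Finset R') : Set R')
        = IsLocalRing.maximalIdeal R' := by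
      rw [hmap, ← hs, Finset.coe_image, ← Ideal.map_span]
      apply le_antisymm
      · exact Ideal.map_mono (Ideal.span_mono (by simp))
      · rw [Ideal.map_span, Ideal.span_le]
        rintro _ ⟨j, hj, rfl⟩
        by_cases hji : j = i
        · subst hji
          have h1 : Ideal.Quotient.mk (Ideal.span {x}) (c j * j) ∈ Ideal.map (Ideal.Quotient.mk (Ideal.span {x})) (Ideal.span ((s.erase j : Finset R) : Set R)) := by
            have : c j * j = x - ∑ k ∈ s.erase j, c k * k := by
              rw [← hcs.2, ← Finset.add_sum_erase s _ his]; simp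
            rw [this, map_sub, Ideal.Quotient.eq_zero_iff_mem.mpr (Ideal.mem_span_singleton_self x), zero_sub]
            apply neg_mem
            apply Ideal.mem_map_of_mem
            refine Ideal.sum_mem _ fun k hk => Ideal.mul_mem_left _ _ (Ideal.subset_span hk)
          rw [map_mul] at h1
          exact (Ideal.unit_mul_mem_iff_mem _ (hcu.map _)).mp h1
        · exact Ideal.mem_map_of_mem _ (Ideal.subset_span (by simp [hji]; exact hj))
    have hcard : ((s.erase i).image (Ideal.Quotient.mk (Ideal.span {x})) : Finset R').card ≤ n := by
      refine Finset.card_image_le.trans ?_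
      rw [Finset.card_erase_of_mem his]; omega
    -- dimension
    have hst : Ideal.span {x} = x • (⊤ : Ideal R) := by simp [← Submodule.ideal_span_singleton_smul]
    have hdim : ringKrullDim R' = (n : WithBot ℕ∞) := by
      have h1 := Module.supportDim_quotSMulTop_succ_eq_of_notMem_minimalPrimes_of_mem_maximalIdeal
        (R := R) (M := R) (x := x) (by
          intro q hq
          apply hxq
          rw [minimalPrimes]
          have : Module.annihilator R R = ⊥ := Module.annihilator_eq_bot.mpr inferInstance
          rwa [this] at hq) hxm
      rw [Module.supportDim_self_eq_ringKrullDim, hd] at h1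
      have h2 : Module.supportDim R (QuotSMulTop x R) = ringKrullDim R' := by
        have : Module.supportDim R (R ⧸ x • (⊤ : Ideal R)) = ringKrullDim R' := by
          rw [Module.supportDim_quotient_eq_ringKrullDim]
          exact ringKrullDim_eq_of_ringEquiv (Ideal.quotEquivOfEq hst.symm)
        exact this
      rw [h2] at h1
      have h3 : ringKrullDim R' + 1 = (n : WithBot ℕ∞) + 1 := by rw [h1]; push_cast; rfl
      generalize ringKrullDim R' = d at h3
      have h1n : (1 : WithBot ℕ∞) = ((1:ℕ∞) : WithBot ℕ∞) := rfl
      have hnn : (n : WithBot ℕ∞) = ((n:ℕ∞) : WithBot ℕ∞) := rfl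
      induction d with
      | bot => rw [h1n, hnn, WithBot.bot_add] at h3; exact absurd h3 (by rw [← WithBot.coe_add]; exact WithBot.bot_ne_coe)
      | coe d =>
        rw [h1n, hnn, ← WithBot.coe_add, ← WithBot.coe_add, WithBot.coe_inj] at h3
        rw [hnn, WithBot.coe_inj]
        exact (ENat.add_left_injective_of_ne_top (by simp)) h3
    obtain ⟨hdom, rs', hlen, hrm, hreg⟩ := ih R' _ hgen hcard hdim
    haveI hpx : (Ideal.span {x}).IsPrime := (Ideal.Quotient.isDomain_iff_prime _).mp hdom
    obtain ⟨q, hq, hqx⟩ := Ideal.exists_minimalPrimes_le (I := (⊥ : Ideal R)) (J := Ideal.span {x}) bot_le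
    have hq0 : q = ⊥ := by
      apply Submodule.eq_bot_of_le_smul_of_le_jacobson_bot (Ideal.span {x}) q (IsNoetherian.noetherian q)
      · intro y hy
        obtain ⟨z, rfl⟩ := Ideal.mem_span_singleton'.mp (hqx hy)
        have hz : z ∈ q := (hq.1.1.mem_or_mem hy).resolve_right (hxq q hq)
        rw [smul_eq_mul, mul_comm z x]
        exact Ideal.mul_mem_mul (Ideal.mem_span_singleton_self x) hz
      · exact hxle.trans (IsLocalRing.maximalIdeal_le_jacobson _)
    have hD : IsDomain R := by
      have : (⊥ : Ideal R).IsPrime := hq0 ▸ hq.1.1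
      exact IsDomain.of_bot_isPrime R
    refine ⟨hD, ?_⟩
    obtain ⟨rs, rfl⟩ := (Function.Surjective.list_map (Ideal.Quotient.mk_surjective (I := Ideal.span {x}))) rs'
    have hx0 : x ≠ 0 := by
      rintro rfl; exact hx2 (zero_mem _)
    refine ⟨x :: rs, by simpa using hlen, ?_, ?_⟩
    · intro r hr
      rcases List.mem_cons.mp hr with rfl | hr
      · exact hxm
      · have := hrm _ (List.mem_map_of_mem hr)
        rw [hmap] at this
        have h2 := Ideal.mem_comap.mpr this
        rwa [Ideal.comap_map_of_surjective _ Ideal.Quotient.mk_surjective, ← RingHom.ker_eq_comap_bot, Ideal.mk_ker, sup_eq_left.mpr hxle] at h2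
    · rw [isWeaklyRegular_cons_iff]
      constructor
      · exact (IsRegular.of_ne_zero hx0).left.isSMulRegular
      · have e : QuotSMulTop x R ≃ₗ[R] R' := Submodule.quotEquivOfEq _ _ hst.symm
        rw [e.isWeaklyRegular_congr]
        exact (isWeaklyRegular_map_algebraMap_iff R' R' rs).mp hreg

theorem depth_free {S : Type uu} [CommRing S] [IsNoetherianRing S] [IsLocalRing S]
    (hreg : ∃ s : Finset S, Ideal.span (s : Set S) = IsLocalRing.maximalIdeal S ∧
      (s.card : WithBot ℕ∞) = ringKrullDim S)
    {M : Type*} [AddCommGroup M] [Module S M] {ι : Type} [Finite ι] [Nonempty ι]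
    (e : M ≃ₗ[S] (ι → S)) :
    (modDepth S M : WithBot ℕ∞) = ringKrullDim S := by
  obtain ⟨s, hs, hc⟩ := hreg
  obtain ⟨_, rs, hlen, hrm, hw⟩ := reg_aux s.card S s hs le_rfl hc.symm
  haveI : Nontrivial M := e.toEquiv.nontrivial
  haveI : Module.Finite S M := Module.Finite.equiv e.symm
  have h1 : IsRegular M rs := by
    rw [IsLocalRing.isRegular_iff_isWeaklyRegular_of_subset_maximalIdeal hrm, e.isWeaklyRegular_congr]
    exact (isWeaklyRegular_map_algebraMap_iff (ι → S) (ι → S) rs).mp (IsWeaklyRegular.of_flat hw)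
  rw [← hc]
  have : modDepth S M = (s.card : ℕ∞) := by
    apply le_antisymm
    · apply sSup_le
      rintro n ⟨rs', hn, hrm', hr'⟩
      have h2 := Module.supportDim_add_length_eq_supportDim_of_isRegular rs' hr'
      have h3 : Module.supportDim S M ≤ (s.card : WithBot ℕ∞) := by
        rw [hc]; exact Module.supportDim_le_ringKrullDim S M
      rw [← h2] at h3
      haveI : Nontrivial (M ⧸ Ideal.ofList rs' • (⊤ : Submodule S M)) := by
        rw [Submodule.Quotient.nontrivial_iff]
        exact fun h => hr'.top_ne_smul h.symm
      have h4 : (0 : WithBot ℕ∞) ≤ Module.supportDim S (M ⧸ Ideal.ofList rs' • (⊤ : Submodule S M)) :=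
by
        obtain ⟨d, hd⟩ := WithBot.ne_bot_iff_exists.mp
          (Module.supportDim_ne_bot_of_nontrivial S (M ⧸ Ideal.ofList rs' • (⊤ : Submodule S M)))
        rw [← hd]; exact WithBot.coe_le_coe.mpr (zero_le)
      have h5 : (rs'.length : WithBot ℕ∞) ≤ s.card := by
        calc (rs'.length : WithBot ℕ∞) = 0 + rs'.length := by rw [zero_add]
          _ ≤ _ := by gcongr
          _ ≤ _ := h3
      rw [← hn]
      exact_mod_cast h5
    · apply le_sSup
      exact ⟨rs, by rw [hlen], hrm, h1⟩
  rw [this]; rfl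

end

section
set_option linter.all false

/-- denominators ideal -/
def denI (S : Type*) [CommRing S] {L : Type*} [Field L] [Algebra S L] (u : L) : Ideal S where
  carrier := {y | ∃ z : S, algebraMap S L z = algebraMap S L y * u}
  add_mem' := by
    rintro a b ⟨z, hz⟩ ⟨w, hw⟩
    exact ⟨z + w, by rw [map_add, map_add, hz, hw]; ring⟩
  zero_mem' := ⟨0, by simp⟩
  smul_mem' := by
    rintro c a ⟨z, hz⟩
    exact ⟨c * z, by rw [map_mul, hz, smul_eq_mul, map_mul]; ring⟩

theorem ht1 {S : Type*} [CommRing S] [IsDomain S] [IsNoetherianRing S] [IsIntegrallyClosed S]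
    {L : Type*} [Field L] [Algebra S L] [IsFractionRing S L] (t : L)
    (ht : ¬ ∃ z : S, algebraMap S L z = t) :
    ∃ (q : Ideal S) (x c s : S), q.IsPrime ∧ x ∈ q ∧ c ∉ q ∧
      algebraMap S L x * (algebraMap S L s * t) = algebraMap S L c ∧
      (∀ y ∈ q, ∃ y', c * y = y' * x) ∧
      (∀ y, (∃ z : S, algebraMap S L z = algebraMap S L y * t) → y ∈ q) ∧
      q ∈ (Ideal.span {x}).minimalPrimes := by
  have hinj := IsFractionRing.injective S L
  let A : Set (Ideal S) := {I | ∃ s : S, (¬ ∃ z : S, algebraMap S L z = algebraMap S L s * t) ∧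
    I = denI S (algebraMap S L s * t)}
  have hA : A.Nonempty := ⟨_, 1, by simpa using ht, rfl⟩
  obtain ⟨(q : Ideal S), ⟨s, hs, hqs⟩, hmax⟩ := set_has_maximal_iff_noetherian.mpr inferInstance A hA
  set τ := algebraMap S L s * t with hτ
  have hmem : ∀ y, y ∈ q ↔ ∃ z : S, algebraMap S L z = algebraMap S L y * τ := by
    intro y; rw [hqs]; rfl
  have hqp : q.IsPrime := by
    constructor
    · intro h
      have : (1 : S) ∈ q := h ▸ Submodule.mem_top
      rw [hmem] at this
      exact hs (by simpa using this)
    · intro a b hab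
      by_contra hcon
      push Not at hcon
      obtain ⟨ha, hb⟩ := hcon
      have h1 : denI S (algebraMap S L (b * s) * t) ∈ A := ⟨b * s, by
        rintro ⟨z, hz⟩; exact hb ((hmem b).mpr ⟨z, by rw [hz, hτ, map_mul]; ring⟩), rfl⟩
      apply hmax _ h1
      refine lt_of_le_of_ne ?_ ?_
      · intro y hy
        obtain ⟨z, hz⟩ := (hmem y).mp hy
        exact ⟨b * z, by rw [map_mul, hz, hτ, map_mul]; ring⟩
      · intro he
        apply ha
        rw [he]
        obtain ⟨z, hz⟩ := (hmem _).mp hab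
        exact ⟨z, by rw [hz, hτ, map_mul, map_mul]; ring⟩
  have hex : ∃ x ∈ q, ∃ c, c ∉ q ∧ algebraMap S L c = algebraMap S L x * τ := by
    by_contra hcon
    push Not at hcon
    apply hs
    have hint : IsIntegral S τ := by
      obtain ⟨⟨n, d⟩, hnd⟩ := IsLocalization.surj (nonZeroDivisors S) τ
      have hd0 : (d : S) ≠ 0 := nonZeroDivisors.ne_zero d.2
      apply isIntegral_of_smul_mem_submodule (M := L) (N := Submodule.map (Algebra.linearMap S L) q)
      · intro h
        have : (Algebra.linearMap S L) d ∈ Submodule.map (Algebra.linearMap S L) q :=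
          Submodule.mem_map_of_mem ((hmem _).mpr ⟨n, by rw [← hnd]; ring⟩)
        rw [h] at this
        exact hd0 (hinj (by simpa using this))
      · exact Submodule.FG.map _ (IsNoetherian.noetherian q)
      · rintro _ ⟨x, hx, rfl⟩
        obtain ⟨z, hz⟩ := (hmem x).mp hx
        refine ⟨z, ?_, by simp [hz, mul_comm]⟩
        by_contra hzq
        exact hcon x hx z hzq hz
    exact IsIntegrallyClosed.isIntegral_iff.mp hint
  obtain ⟨x, hx, c, hc, hxc⟩ := hex
  have hdiv : ∀ y ∈ q, ∃ y', c * y = y' * x := by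
    intro y hy
    obtain ⟨z, hz⟩ := (hmem y).mp hy
    exact ⟨z, hinj (by rw [map_mul, map_mul, hxc, hz]; ring)⟩
  refine ⟨q, x, c, s, hqp, hx, hc, hxc.symm, hdiv, ?_, ?_⟩
  · rintro y ⟨z, hz⟩
    exact (hmem y).mpr ⟨s * z, by rw [map_mul, hz, hτ]; ring⟩
  · refine ⟨⟨hqp, (Ideal.span_singleton_le_iff_mem _).mpr hx⟩, ?_⟩
    rintro q' ⟨hq', hxq'⟩ hle y hy
    obtain ⟨y', hy'⟩ := hdiv y hy
    have : c * y ∈ q' := by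
      rw [hy']; exact Ideal.mul_mem_left _ _ ((Ideal.span_singleton_le_iff_mem _).mp hxq')
    exact (hq'.mem_or_mem this).resolve_left (fun h => hc (hle h))

theorem order_height_eq {S : Type*} [CommRing S] (q : Ideal S) (hq : q.IsPrime) :
    Order.height (⟨q, hq⟩ : PrimeSpectrum S) = q.height := by
  exact (PrimeSpectrum.height_eq_orderHeight ⟨q, hq⟩).symm

/-- Part 2b -/
theorem denom_lemma {S : Type*} [CommRing S] [IsDomain S] [IsNoetherianRing S]
    [IsIntegrallyClosed S] {L : Type*} [Field L] [Algebra S L] [IsFractionRing S L]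
    {p : ℕ} {f g : S} (hp : 0 < p)
    (hfg : (¬IsUnit f ∧ ¬IsUnit g ∧ PaperSquarefree f ∧ PaperSquarefree g ∧ SatisfiesA1 f g) ∨
      (IsUnit f ∧ IsUnit g ∧ (∀ x : S, x ^ p ≠ f) ∧ (∀ x : S, x ^ p ≠ g)))
    (t : L) (i j : ℕ) (hi : i < p) (hj : j < p)
    (h : ∃ m : S, algebraMap S L m = t ^ p * algebraMap S L (f ^ i * g ^ j)) :
    ∃ z : S, algebraMap S L z = t := by
  have hinj := IsFractionRing.injective S L
  obtain ⟨m, hm⟩ := h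
  rcases hfg with ⟨hfu, hgu, hfs, hgs, hA⟩ | ⟨hfu, hgu, -, -⟩
  · by_contra hcon
    obtain ⟨q, x, c, s, hq, hx, hc, hxc, hdiv, -, hmin⟩ := ht1 t hcon
    have hx0 : x ≠ 0 := by
      rintro rfl
      apply hc
      have : c = 0 := hinj (by rw [← hxc]; simp)
      rw [this]; exact zero_mem _
    have hht : q.height = 1 := by
      apply le_antisymm
      · exact Ideal.height_le_one_of_isPrincipal_of_mem_minimalPrimes _ _ hmin
      · rw [ENat.one_le_iff_ne_zero]
        intro h0
        have := Ideal.height_eq_zero_iff.mp h0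
        rw [IsDomain.minimalPrimes_eq_singleton_bot] at this
        rw [Set.mem_singleton_iff.mp this] at hx
        exact hx0 hx
    have hoh := (order_height_eq q hq).trans hht
    have key : c ^ p * (f ^ i * g ^ j) = s ^ p * m * x ^ p := by
      apply hinj
      simp only [map_mul, map_pow] at hm ⊢
      rw [← hxc, hm]; ring
    -- local uniformizer
    have hloc : ∀ f : S, PaperSquarefree f → f ∈ q → ∃ d d' : S, d ∉ q ∧ d' ∉ q ∧ d * x = d' * f := by
      intro f hfs hf
      have h1 := hfs q hq hoh hf
      haveI := hq
      have h2 : algebraMap S (Localization.AtPrime q) x ∈ Ideal.span {algebraMap S (Localization.AtPrime q) f} := by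
        rw [← h1]; exact Ideal.mem_map_of_mem _ hx
      obtain ⟨w, hw⟩ := Ideal.mem_span_singleton'.mp h2
      obtain ⟨⟨n, d⟩, hnd⟩ := IsLocalization.surj q.primeCompl w
      have h3 : d * x = n * f := by
        apply IsLocalization.injective (Localization.AtPrime q) q.primeCompl_le_nonZeroDivisors
        rw [map_mul, map_mul, ← hnd, ← hw]; ring
      obtain ⟨f', hf'⟩ := hdiv f hf
      refine ⟨d, n, d.2, ?_, h3⟩
      intro hn
      have h4 : d * c * x = n * f' * x := by
        calc d * c * x = c * (d * x) := by ring
          _ = n * (c * f) := by rw [h3]; ring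
          _ = _ := by rw [hf']; ring
      have h5 := mul_right_cancel₀ hx0 h4
      have : (d : S) * c ∈ q := by rw [h5]; exact Ideal.mul_mem_right _ _ hn
      exact (hq.mem_or_mem this).elim d.2 hc
    have hcase : ∀ (f g : S) (i j : ℕ), i < p → f ∈ q → g ∉ q → PaperSquarefree f →
        c ^ p * (f ^ i * g ^ j) = s ^ p * m * x ^ p → False := by
      intro f g i j hi hf hg hfs key
      obtain ⟨d, d', hd, hd', hdd⟩ := hloc f hfs hf
      have h1 : d ^ i * (c ^ p * g ^ j) * x ^ i = d' ^ i * (s ^ p * m) * x ^ (p - i) * x ^ i := by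
        calc _ = (d * x) ^ i * (c ^ p * g ^ j) := by ring
          _ = d' ^ i * (c ^ p * (f ^ i * g ^ j)) := by rw [hdd]; ring
          _ = d' ^ i * (s ^ p * m * x ^ (p - i + i)) := by rw [key, Nat.sub_add_cancel hi.le]
          _ = _ := by rw [pow_add]; ring
      have h2 := mul_right_cancel₀ (pow_ne_zero _ hx0) h1
      have h3 : d ^ i * (c ^ p * g ^ j) ∈ q := by
        rw [h2]; exact Ideal.mul_mem_left _ _ (Ideal.pow_mem_of_mem _ hx _ (by omega))
      rcases hq.mem_or_mem h3 with h | h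
      · exact hd (hq.mem_of_pow_mem _ h)
      · rcases hq.mem_or_mem h with h | h
        · exact hc (hq.mem_of_pow_mem _ h)
        · exact hg (hq.mem_of_pow_mem _ h)
    have hA' := hA q ⟨hq, hoh⟩
    by_cases hfq : f ∈ q
    · exact hcase f g i j hi hfq (fun h => hA' ⟨hfq, h⟩) hfs key
    · by_cases hgq : g ∈ q
      · exact hcase g f j i hj hgq hfq hgs (by rw [← key]; ring)
      · have : c ^ p * (f ^ i * g ^ j) ∈ q := by
          rw [key]; exact Ideal.mul_mem_left _ _ (Ideal.pow_mem_of_mem _ hx _ hp)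
        rcases hq.mem_or_mem this with h | h
        · exact hc (hq.mem_of_pow_mem _ h)
        · rcases hq.mem_or_mem h with h | h
          · exact hfq (hq.mem_of_pow_mem _ h)
          · exact hgq (hq.mem_of_pow_mem _ h)
  · have hu : IsUnit (f ^ i * g ^ j) := (hfu.pow _).mul (hgu.pow _)
    obtain ⟨u, hu⟩ := hu.exists_right_inv
    have : t ^ p = algebraMap S L (m * u) := by
      rw [map_mul, hm, mul_assoc, ← map_mul, hu]; simp
    have hint : IsIntegral S (t ^ p) := this ▸ isIntegral_algebraMap
    exact IsIntegrallyClosed.isIntegral_iff.mp (hint.of_pow hp)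
end

section
set_option linter.all false
open RingTheory.Sequence

theorem grade_height {S : Type*} [CommRing S] [IsNoetherianRing S] {Q : Ideal S}
    (hQ : ContainsRegSeq3 S Q) (q : Ideal S) (hq : q.IsPrime) (hle : Q ≤ q) : 3 ≤ q.height := by
  obtain ⟨rs, hlen, hm, hr⟩ := hQ
  have h1 := IsWeaklyRegular.isRegular_of_isLocalization_of_mem (Localization.AtPrime q) q 
     hr.toIsWeaklyRegular (fun r hrr => hle (hm r hrr))
  have h2 := ringKrullDim_add_length_eq_ringKrullDim_of_isRegular _ h1
  rw [IsLocalization.AtPrime.ringKrullDim_eq_height q (Localization.AtPrime q)] at h2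
  haveI : Nontrivial (Localization.AtPrime q ⧸ Ideal.ofList (List.map (algebraMap S (Localization.AtPrime q)) rs)) := by
    rw [Ideal.Quotient.nontrivial_iff]
    intro h
    apply h1.top_ne_smul
    rw [h]; simp
  have h3 := ringKrullDim_nonneg_of_nontrivial (R := Localization.AtPrime q ⧸ Ideal.ofList (List.map (algebraMap S (Localization.AtPrime q)) rs))
  have h4 : (3 : WithBot ℕ∞) ≤ (q.height : WithBot ℕ∞) := by
    rw [← h2]
    calc (3 : WithBot ℕ∞) = 0 + ((3 : ℕ) : WithBot ℕ∞) := by norm_num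
      _ ≤ _ := by
        rw [List.length_map, hlen]
        gcongr
  exact WithBot.coe_le_coe.mp h4

theorem grade_two {S : Type*} [CommRing S] [IsNoetherianRing S] {Q : Ideal S}
    (hQ : ContainsRegSeq3 S Q) (u v : S) (q : Ideal S) (hq : q ∈ (Ideal.span {u, v}).minimalPrimes)
    (hle : Q ≤ q) : False := by
  classical
  have h1 := grade_height hQ q hq.1.1 hle
  have h2 := Ideal.height_le_card_of_mem_minimalPrimes_span_finset (s := {u, v}) (by simpa using hq)
  have h3 : (({u, v} : Finset S).card : ℕ∞) ≤ 2 := by exact_mod_cast Finset.card_le_two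
  have := (h1.trans h2).trans h3
  exact absurd this (by decide)
variable {S : Type*} [CommRing S] [IsDomain S] [IsNoetherianRing S] [IsLocalRing S]
  {p : ℕ} {f g h₁ h₂ a b : S}

theorem h_not_dvd (hp0 : p ≠ 0) (hpS : Prime ((p : ℕ) : S))
    (hpm : (p : S) ∈ IsLocalRing.maximalIdeal S) (hf : f = h₁ ^ p + a * (p : S))
    (hu : (¬ IsUnit f ∧ ¬ IsUnit g) ∨ (IsUnit f ∧ IsUnit g))
    (hgrade : ContainsRegSeq3 S (Ideal.span {((p : ℕ) : S), f, g})) : ¬ (p : S) ∣ h₁ := by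
  intro hd
  have hpf : (p : S) ∣ f := by
    rw [hf]; exact dvd_add (dvd_pow hd hp0) (dvd_mul_left _ _)
  rcases hu with ⟨hf', hg'⟩ | ⟨hf', -⟩
  · have hle : Ideal.span {(p : S), g} ≤ IsLocalRing.maximalIdeal S := by
      rw [Ideal.span_le]
      rintro x (rfl | rfl)
      · exact hpm
      · simpa using hg'
    obtain ⟨q, hq, -⟩ := Ideal.exists_minimalPrimes_le hle
    refine grade_two hgrade _ _ q hq ?_
    have h1 := hq.1.2
    rw [Ideal.span_le] at h1 ⊢
    have hpq : (p : S) ∈ q := h1 (by simp)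
    rintro x (rfl | rfl | rfl)
    · exact hpq
    · exact Ideal.mem_of_dvd _ hpf hpq
    · exact h1 (by simp)
  · exact hpS.not_unit (isUnit_of_dvd_unit hpf hf')

theorem natCast_isUnit (hp : p.Prime) (hpm : (p : S) ∈ IsLocalRing.maximalIdeal S)
    {i : ℕ} (hi : 0 < i) (hip : i < p) : IsUnit (i : S) := by
  have hc : Nat.Coprime i p := Nat.Coprime.symm ((Nat.Prime.coprime_iff_not_dvd hp).mpr (Nat.not_dvd_of_pos_of_lt hi hip))
  have h1 : IsCoprime (i : S) (p : S) := by
    have := Nat.isCoprime_iff_coprime.mpr hc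
    simpa using this.map (Int.castRingHom S)
  obtain ⟨u, v, huv⟩ := h1
  by_contra hcon
  have him : (i : S) ∈ IsLocalRing.maximalIdeal S := by simpa using hcon
  have : (1 : S) ∈ IsLocalRing.maximalIdeal S := by
    rw [← huv]; exact add_mem (Ideal.mul_mem_left _ _ him) (Ideal.mul_mem_left _ _ hpm)
  exact (Ideal.ne_top_iff_one _).mp (Ideal.IsPrime.ne_top inferInstance) this

theorem exists_e (hp : p.Prime) (hpS : Prime ((p : ℕ) : S))
    (hSmodp : IsIntegrallyClosed (S ⧸ Ideal.span {((p : ℕ) : S)}))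
    (hpm : (p : S) ∈ IsLocalRing.maximalIdeal S)
    (hf : f = h₁ ^ p + a * (p : S)) (hg : g = h₂ ^ p + b * (p : S))
    (hu : (¬ IsUnit f ∧ ¬ IsUnit g) ∨ (IsUnit f ∧ IsUnit g))
    (hgrade : ContainsRegSeq3 S (Ideal.span {((p : ℕ) : S), f, g}))
    (hh₂ : ¬ (p : S) ∣ h₂) {i₀ : ℕ} (hi0 : 0 < i₀) (hi : i₀ < p)
    (hcong : (p : S) ∣ h₂ ^ p * a - i₀ * h₁ ^ p * b) :
    ∃ e : S, (p : S) ∣ b - h₂ ^ p * e ∧ (p : S) ∣ a - i₀ * h₁ ^ p * e := by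
  set I := Ideal.span {(p : S)} with hI
  haveI hIp : I.IsPrime := (Ideal.span_singleton_prime hpS.ne_zero).mpr hpS
  set B := S ⧸ I
  haveI : IsDomain B := Ideal.Quotient.isDomain I
  set F := FractionRing B
  let π : S →+* B := Ideal.Quotient.mk I
  have hπ : ∀ x, π x = 0 ↔ (p : S) ∣ x := fun x => by
    rw [Ideal.Quotient.eq_zero_iff_mem, Ideal.mem_span_singleton]
  have hinj := IsFractionRing.injective B F
  have hh : algebraMap B F (π h₂) ≠ 0 := by
    intro h; exact hh₂ ((hπ _).mp (hinj (by rw [h, map_zero])))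
  have hc : π h₂ ^ p * π a = π i₀ * π h₁ ^ p * π b := by
    rw [← sub_eq_zero]; simpa using (hπ _).mpr hcong
  set t : F := algebraMap B F (π b) / algebraMap B F (π h₂) ^ p with ht
  have htm : algebraMap B F (π h₂) ^ p * t = algebraMap B F (π b) := mul_div_cancel₀ _ (pow_ne_zero _ hh)
  have hkey : ∃ z : B, algebraMap B F z = t := by
    by_contra hcon
    obtain ⟨q, x, c, s, hq, hx, hcq, -, -, hden, hmin⟩ := ht1 t hcon
    have h2 : π h₂ ^ p ∈ q := hden _ ⟨π b, by rw [map_pow, htm]⟩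
    have hiu := (natCast_isUnit hp hpm hi0 hi)
    have h1 : π h₁ ^ p ∈ q := by
      have : π i₀ * π h₁ ^ p ∈ q := by
        refine hden _ ⟨π a, ?_⟩
        have := congrArg (algebraMap B F) hc
        simp only [map_mul, map_pow] at this ⊢
        apply mul_left_cancel₀ (pow_ne_zero p hh)
        rw [this, ← htm]; ring
      exact (Ideal.unit_mul_mem_iff_mem _ (hiu.map π)).mp this
    obtain ⟨x', rfl⟩ := Ideal.Quotient.mk_surjective x
    have hpq : (p : S) ∈ q.comap π := by
      rw [Ideal.mem_comap, (hπ _).mpr dvd_rfl]; exact zero_mem _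
    have hfq : f ∈ q.comap π := by
      rw [hf]
      exact add_mem (by rw [Ideal.mem_comap, map_pow]; exact h1) (Ideal.mul_mem_left _ _ hpq)
    have hgq : g ∈ q.comap π := by
      rw [hg]
      exact add_mem (by rw [Ideal.mem_comap, map_pow]; exact h2) (Ideal.mul_mem_left _ _ hpq)
    rcases hu with _ | ⟨hfu, -⟩
    · have h3 := Ideal.minimalPrimes_comap_of_surjective (f := π) Ideal.Quotient.mk_surjective hmin
      refine grade_two hgrade (p : S) x' (q.comap π) ?_ ?_
      · convert h3 using 2
        have : Ideal.span {Ideal.Quotient.mk I x'} = Ideal.map π (Ideal.span {x'}) := by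
          rw [Ideal.map_span, Set.image_singleton]
        rw [this, Ideal.comap_map_of_surjective _ Ideal.Quotient.mk_surjective, ← RingHom.ker_eq_comap_bot, Ideal.mk_ker, hI,
          Ideal.span_insert, sup_comm]
      · rw [Ideal.span_le]
        rintro y (rfl | rfl | rfl)
        · exact hpq
        · exact hfq
        · exact hgq
    · exact (Ideal.IsPrime.comap π (K := q)).ne_top (Ideal.eq_top_of_isUnit_mem _ hfq hfu)
  obtain ⟨z, hz⟩ := hkey
  obtain ⟨e, rfl⟩ := Ideal.Quotient.mk_surjective z
  have hb : π b = π h₂ ^ p * π e := by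
    apply hinj
    rw [map_mul, map_pow]
    have : algebraMap B F (π e) = t := hz
    rw [this, htm]
  refine ⟨e, (hπ _).mp (by rw [map_sub, hb, map_mul, map_pow, sub_self]), (hπ _).mp ?_⟩
  have hne : π h₂ ^ p ≠ 0 := pow_ne_zero _ (fun h => hh₂ ((hπ _).mp h))
  apply mul_left_cancel₀ hne
  rw [hb] at hc
  simp only [map_sub, map_mul, map_pow, mul_zero]
  linear_combination hc
end

section
set_option linter.all false
open Polynomial

theorem span1 {R B : Type*} [CommRing R] [Nontrivial R] [CommRing B] [Algebra R B] {p : ℕ} (hp : 0 < p)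
    {ξ : B} (w F : R) (h : (ξ + algebraMap R B w) ^ p = algebraMap R B F)
    {z : B} (hz : z ∈ Algebra.adjoin R {ξ}) :
    ∃ c : ℕ → R, z = ∑ j ∈ Finset.range p, algebraMap R B (c j) * ξ ^ j := by
  rw [Algebra.adjoin_singleton_eq_range_aeval] at hz
  obtain ⟨P, rfl⟩ := hz
  set q : R[X] := (X + C w) ^ p - C F with hq
  have hm1 : ((X + C w) ^ p : R[X]).Monic := (monic_X_add_C w).pow p
  have hd1 : ((X + C w) ^ p : R[X]).natDegree = p := by
    rw [(monic_X_add_C w).natDegree_pow, natDegree_X_add_C, mul_one]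
  have hdeg : (C F : R[X]).degree < ((X + C w) ^ p : R[X]).degree := by
    rw [degree_eq_natDegree hm1.ne_zero, hd1]
    exact lt_of_le_of_lt degree_C_le (by exact_mod_cast hp)
  have hm : q.Monic := hm1.sub_of_left hdeg
  have hqd : q.natDegree = p := by
    rw [hq, natDegree_sub_eq_left_of_natDegree_lt, hd1]
    rw [hd1]; simpa using hp
  have hroot : aeval ξ q = 0 := by
    rw [hq]; simp [h]
  have h1 : aeval ξ (P %ₘ q) = aeval ξ P := aeval_modByMonic_eq_self_of_root hroot
  refine ⟨fun j => (P %ₘ q).coeff j, ?_⟩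
  have hlt : (P %ₘ q).natDegree < p := by
    rw [← hqd]
    exact natDegree_modByMonic_lt _ hm (fun h => by rw [h] at hqd; simp at hqd; omega)
  show aeval ξ P = _
  rw [← h1, aeval_eq_sum_range' hlt]
  simp [Algebra.smul_def]

theorem span2 {R B : Type*} [CommRing R] [Nontrivial R] [CommRing B] [Nontrivial B] [Algebra R B] {p : ℕ} (hp : 0 < p)
    {ξ η : B} (v G : R) (w F : B) (hη : (η + algebraMap R B v) ^ p = algebraMap R B G)
    (hw : w ∈ Algebra.adjoin R {η}) (hF : F ∈ Algebra.adjoin R {η})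
    (hξ : (ξ + w) ^ p = F) {z : B} (hz : z ∈ Algebra.adjoin R {ξ, η}) :
    ∃ c : ℕ → ℕ → R, z = ∑ j ∈ Finset.range p, ∑ k ∈ Finset.range p,
      algebraMap R B (c j k) * (ξ ^ j * η ^ k) := by
  have hz' : z ∈ Algebra.adjoin (Algebra.adjoin R {η}) {ξ} := by
    induction hz using Algebra.adjoin_induction with
    | mem x hx =>
      rcases hx with h | h
      · rw [h]; exact Algebra.subset_adjoin (Set.mem_singleton _)
      · have : x ∈ Algebra.adjoin R {η} := by rw [h]; exact Algebra.subset_adjoin (Set.mem_singleton _)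
        exact (Algebra.adjoin (Algebra.adjoin R {η}) {ξ}).algebraMap_mem ⟨x, this⟩
    | algebraMap r =>
      exact (Algebra.adjoin (Algebra.adjoin R {η}) {ξ}).algebraMap_mem ⟨algebraMap R B r, Subalgebra.algebraMap_mem _ _⟩
    | add x y _ _ hx hy => exact add_mem hx hy
    | mul x y _ _ hx hy => exact mul_mem hx hy
  obtain ⟨c, hc⟩ := span1 (R := Algebra.adjoin R {η}) hp ⟨w, hw⟩ ⟨F, hF⟩ hξ hz'
  have : ∀ j, ∃ d : ℕ → R, (c j : B) = ∑ k ∈ Finset.range p, algebraMap R B (d k) * η ^ k :=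
    fun j => span1 hp v G hη (c j).2
  choose d hd using this
  refine ⟨d, ?_⟩
  rw [hc]
  refine Finset.sum_congr rfl fun j _ => ?_
  have : algebraMap (Algebra.adjoin R {η}) B (c j) = (c j : B) := rfl
  rw [this, hd, Finset.sum_mul]
  exact Finset.sum_congr rfl fun k _ => by ring

theorem sum_fin2 {B : Type*} [AddCommMonoid B] (p : ℕ) (F : ℕ → ℕ → B) :
    ∑ j ∈ Finset.range p, ∑ k ∈ Finset.range p, F j k = ∑ x : Fin p × Fin p, F x.1 x.2 := by
  rw [Fintype.sum_prod_type, Finset.sum_range]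
  exact Finset.sum_congr rfl fun i _ => by rw [Finset.sum_range]

/-- p^2 spanning elements are linearly independent -/
theorem lin_indep {L K : Type*} [Field L] [Field K] [Algebra L K] {p : ℕ} 
    (hdeg : Module.finrank L K = p ^ 2) (F : ℕ → ℕ → K)
    (hspan : ∀ z : K, ∃ c : ℕ → ℕ → L, z = ∑ j ∈ Finset.range p, ∑ k ∈ Finset.range p,
      algebraMap L K (c j k) * F j k) :
    LinearIndependent L (fun x : Fin p × Fin p => F x.1 x.2) := by
  apply linearIndependent_of_top_le_span_of_card_eq_finrank
  · intro z _
    obtain ⟨c, hc⟩ := hspan z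
    rw [hc, sum_fin2 p (fun j k => algebraMap L K (c j k) * F j k)]
    refine Submodule.sum_mem _ fun x _ => ?_
    rw [← Algebra.smul_def]
    exact Submodule.smul_mem _ _ (Submodule.subset_span ⟨x, rfl⟩)
  · simp [hdeg, pow_two]

theorem coeff_unique {L K : Type*} [Field L] [Field K] [Algebra L K] {p : ℕ} {F : ℕ → ℕ → K}
    (h : LinearIndependent L (fun x : Fin p × Fin p => F x.1 x.2)) (c d : ℕ → ℕ → L)
    (he : ∑ j ∈ Finset.range p, ∑ k ∈ Finset.range p, algebraMap L K (c j k) * F j k =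
      ∑ j ∈ Finset.range p, ∑ k ∈ Finset.range p, algebraMap L K (d j k) * F j k)
    {j k : ℕ} (hj : j < p) (hk : k < p) : c j k = d j k := by
  rw [sum_fin2 p (fun j k => algebraMap L K (c j k) * F j k),
    sum_fin2 p (fun j k => algebraMap L K (d j k) * F j k)] at he
  have := Fintype.linearIndependent_iff.mp h (fun x => c x.1 x.2 - d x.1 x.2) (by
    simp only [Algebra.smul_def, map_sub, sub_mul, Finset.sum_sub_distrib]
    rw [he, sub_self]) (⟨j, hj⟩, ⟨k, hk⟩)
  exact sub_eq_zero.mp this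

theorem exists_embed {L K E : Type*} [Field L] [Field K] [Algebra L K] [Field E] [Algebra L E]
    {p : ℕ} (hp : 0 < p) (hdeg : Module.finrank L K = p ^ 2) {ω μ : K} {f g : L}
    (hω : ω ^ p = algebraMap L K f) (hμ : μ ^ p = algebraMap L K g)
    (hKgen : Algebra.adjoin L ({ω, μ} : Set K) = ⊤) {ω' μ' : E}
    (hω' : ω' ^ p = algebraMap L E f) (hμ' : μ' ^ p = algebraMap L E g) :
    ∃ φ : K →ₐ[L] E, φ ω = ω' ∧ φ μ = μ' := by
  have hspan : ∀ z : K, ∃ c : ℕ → ℕ → L, z = ∑ j ∈ Finset.range p, ∑ k ∈ Finset.range p,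
      algebraMap L K (c j k) * (ω ^ j * μ ^ k) := fun z =>
    span2 hp 0 g 0 (algebraMap L K f) (by simpa using hμ) (zero_mem _) (Subalgebra.algebraMap_mem _ _)
      (by simpa using hω) (by rw [hKgen]; trivial)
  have hli := lin_indep hdeg (fun j k => ω ^ j * μ ^ k) hspan
  have : Nonempty (Fin p × Fin p) := ⟨(⟨0, hp⟩, ⟨0, hp⟩)⟩
  let b := basisOfLinearIndependentOfCardEqFinrank hli (by simp [hdeg, pow_two])
  have hb : ∀ x, b x = ω ^ (x.1 : ℕ) * μ ^ (x.2 : ℕ) := fun x => by simp [b]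
  let φ : K →ₗ[L] E := b.constr L (fun x => ω' ^ (x.1 : ℕ) * μ' ^ (x.2 : ℕ))
  have hφ0 : ∀ n m, n < p → m < p → φ (ω ^ n * μ ^ m) = ω' ^ n * μ' ^ m := by
    intro n m hn hm
    have := b.constr_basis L (fun x => ω' ^ (x.1 : ℕ) * μ' ^ (x.2 : ℕ)) (⟨n, hn⟩, ⟨m, hm⟩)
    rw [hb] at this
    exact this
  have hφ : ∀ n m, φ (ω ^ n * μ ^ m) = ω' ^ n * μ' ^ m := by
    intro n m
    rw [← Nat.div_add_mod n p, ← Nat.div_add_mod m p, pow_add, pow_mul, hω, pow_add, pow_mul, hμ,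
      pow_add, pow_mul, hω', pow_add, pow_mul, hμ', ← map_pow, ← map_pow, ← map_pow, ← map_pow]
    have : algebraMap L K (f ^ (n / p)) * ω ^ (n % p) * (algebraMap L K (g ^ (m / p)) * μ ^ (m % p))
      = (f ^ (n / p) * g ^ (m / p)) • (ω ^ (n % p) * μ ^ (m % p)) := by
      rw [Algebra.smul_def, map_mul]; ring
    rw [this, map_smul, hφ0 _ _ (Nat.mod_lt _ hp) (Nat.mod_lt _ hp), Algebra.smul_def, map_mul]
    ring
  have hmul : ∀ z w, φ (z * w) = φ z * φ w := by
    have : (LinearMap.mul L K).compr₂ φ = (LinearMap.mul L E).compl₁₂ φ φ := by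
      refine b.ext fun x => b.ext fun y => ?_
      simp only [LinearMap.compr₂_apply, LinearMap.compl₁₂_apply, LinearMap.mul_apply', hb]
      rw [show ω ^ (x.1 : ℕ) * μ ^ (x.2 : ℕ) * (ω ^ (y.1 : ℕ) * μ ^ (y.2 : ℕ)) =
        ω ^ ((x.1 : ℕ) + y.1) * μ ^ ((x.2 : ℕ) + y.2) by ring, hφ, hφ, hφ]
      ring
    intro z w
    exact LinearMap.congr_fun₂ this z w
  refine ⟨AlgHom.ofLinearMap φ (by simpa using hφ 0 0) hmul, ?_, ?_⟩
  · simpa using hφ 1 0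
  · simpa using hφ 0 1
end

section
set_option linter.all false

theorem exists_zeta (E : Type*) [Field E] [IsAlgClosed E] [CharZero E] {p : ℕ} (hp : p.Prime) :
    ∃ ζ : E, IsPrimitiveRoot ζ p := by
  haveI : NeZero (p : E) := ⟨by exact_mod_cast hp.ne_zero⟩
  exact HasEnoughRootsOfUnity.exists_primitiveRoot E p

theorem zeta_orth {E : Type*} [Field E] {p : ℕ} {ζ : E} (hζ : IsPrimitiveRoot ζ p)
    {i j : ℕ} (hi : i < p) (hj : j < p) :
    ∑ s ∈ Finset.range p, ζ ^ (s * (p - i)) * ζ ^ (s * j) = if i = j then (p : E) else 0 := by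
  have h1 : ∀ s, ζ ^ (s * (p - i)) * ζ ^ (s * j) = (ζ ^ (p - i + j)) ^ s := by
    intro s; rw [← pow_add, ← pow_mul]; congr 1; ring
  simp only [h1]
  split_ifs with h
  · subst h
    rw [Nat.sub_add_cancel hi.le, hζ.pow_eq_one]; simp
  · have hne : ζ ^ (p - i + j) ≠ 1 := by
      intro h1
      have hd := (hζ.pow_eq_one_iff_dvd _).mp h1
      obtain ⟨k, hk⟩ := hd
      have : k = 1 := by
        have h2 : p * k < p * 2 := by omega
        have h3 : 0 < p * k := by omega
        have := Nat.lt_of_mul_lt_mul_left h2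
        have := Nat.pos_of_mul_pos_left h3
        omega
      subst this; omega
    have := geom_sum_eq hne p
    rw [this, ← pow_mul, mul_comm (p - i + j) p, pow_mul, hζ.pow_eq_one, one_pow, sub_self, zero_div]

theorem psq {S : Type*} [CommRing S] [IsDomain S] [IsNoetherianRing S] [IsIntegrallyClosed S]
    {L : Type*} [Field L] [CharZero L] [Algebra S L] [IsFractionRing S L]
    {K : Type*} [Field K] [Algebra L K] [Algebra S K] [IsScalarTower S L K]
    (E : Type*) [Field E] [IsAlgClosed E] [Algebra S E] [Algebra L E] [Algebra K E]
    [IsScalarTower S L E] [IsScalarTower L K E]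
    {p : ℕ} (hp : p.Prime) {f g : S}
    (hfg : (¬IsUnit f ∧ ¬IsUnit g ∧ PaperSquarefree f ∧ PaperSquarefree g ∧ SatisfiesA1 f g) ∨
      (IsUnit f ∧ IsUnit g ∧ (∀ x : S, x ^ p ≠ f) ∧ (∀ x : S, x ^ p ≠ g)))
    {ω μ : K} (hω : ω ^ p = algebraMap S K f) (hμ : μ ^ p = algebraMap S K g)
    (hKgen : Algebra.adjoin L ({ω, μ} : Set K) = ⊤)
    (hdeg : Module.finrank L K = p ^ 2) {r : K} (hr : IsIntegral S r) :
    (p : K) ^ 2 * r ∈ Algebra.adjoin S {ω, μ} := by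
  haveI : CharZero K := charZero_of_injective_algebraMap (algebraMap L K).injective
  haveI : CharZero E := charZero_of_injective_algebraMap (algebraMap K E).injective
  have hp0 := hp.pos
  obtain ⟨ζ, hζ⟩ := exists_zeta E hp
  have hω0 : ω ^ p = algebraMap L K (algebraMap S L f) := by rw [hω, IsScalarTower.algebraMap_apply S L K]
  have hμ0 : μ ^ p = algebraMap L K (algebraMap S L g) := by rw [hμ, IsScalarTower.algebraMap_apply S L K]
  have hspan : ∃ c : ℕ → ℕ → L, r = ∑ j ∈ Finset.range p, ∑ k ∈ Finset.range p,
      algebraMap L K (c j k) * (ω ^ j * μ ^ k) := 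
    span2 hp0 0 (algebraMap S L g) 0 (algebraMap L K (algebraMap S L f)) (by simpa using hμ0) (zero_mem _) (Subalgebra.algebraMap_mem _ _)
      (by simpa using hω0) (by rw [hKgen]; trivial)
  obtain ⟨c, hc⟩ := hspan
  set ω' : E := algebraMap K E ω with hω'
  set μ' : E := algebraMap K E μ with hμ'
  have hω1 : ω' ^ p = algebraMap L E (algebraMap S L f) := by
    rw [hω', ← map_pow, hω0, ← IsScalarTower.algebraMap_apply]
  have hμ1 : μ' ^ p = algebraMap L E (algebraMap S L g) := by
    rw [hμ', ← map_pow, hμ0, ← IsScalarTower.algebraMap_apply]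
  have hemb : ∀ s t : ℕ, ∃ φ : K →ₐ[L] E, φ ω = ζ ^ s * ω' ∧ φ μ = ζ ^ t * μ' := by
    intro s t
    apply exists_embed hp0 hdeg hω0 hμ0 hKgen
    · rw [mul_pow, hω1, ← pow_mul, mul_comm s p, pow_mul, hζ.pow_eq_one]; simp
    · rw [mul_pow, hμ1, ← pow_mul, mul_comm t p, pow_mul, hζ.pow_eq_one]; simp
  choose φ hφω hφμ using hemb
  have hφr : ∀ s t, IsIntegral S (φ s t r) := fun s t => by
    have := hr.map ((φ s t).restrictScalars S)
    exact this
  have hζint : ∀ n, IsIntegral S (ζ ^ n) := fun n => by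
    apply IsIntegral.pow
    refine IsIntegral.of_pow hp0 ?_
    rw [hζ.pow_eq_one]; exact isIntegral_one
  have key : ∀ i j, i < p → j < p →
      ∑ s ∈ Finset.range p, ∑ t ∈ Finset.range p, ζ ^ (s * (p - i)) * ζ ^ (t * (p - j)) * φ s t r
       = (p : E) ^ 2 * (algebraMap L E (c i j) * (ω' ^ i * μ' ^ j)) := by
    intro i j hi hj
    have h1 : ∀ s t, φ s t r = ∑ a ∈ Finset.range p, ∑ b ∈ Finset.range p,
        algebraMap L E (c a b) * (ω' ^ a * μ' ^ b) * (ζ ^ (s * a) * ζ ^ (t * b)) := by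
      intro s t
      rw [hc]
      simp only [map_sum, map_mul, map_pow, hφω, hφμ, AlgHom.commutes]
      refine Finset.sum_congr rfl fun a _ => Finset.sum_congr rfl fun b _ => ?_
      rw [mul_pow, mul_pow, ← pow_mul, ← pow_mul]; ring
    calc _ = ∑ a ∈ Finset.range p, ∑ b ∈ Finset.range p,
        algebraMap L E (c a b) * (ω' ^ a * μ' ^ b) * ((∑ s ∈ Finset.range p, ζ ^ (s * (p - i)) * ζ ^ (s * a)) * (∑ t ∈ Finset.range p, ζ ^ (t * (p - j)) * ζ ^ (t * b))) := by
          simp only [h1, Finset.mul_sum, Finset.sum_mul]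
          have h2 : ∀ F : ℕ → ℕ → ℕ → ℕ → E, ∑ s ∈ Finset.range p, ∑ t ∈ Finset.range p, ∑ a ∈ Finset.range p, ∑ b ∈ Finset.range p, F s t a b = ∑ a ∈ Finset.range p, ∑ b ∈ Finset.range p, ∑ t ∈ Finset.range p, ∑ s ∈ Finset.range p, F s t a b := by
            intro F
            calc _ = ∑ s ∈ Finset.range p, ∑ a ∈ Finset.range p, ∑ b ∈ Finset.range p, ∑ t ∈ Finset.range p, F s t a b := by
                    refine Finset.sum_congr rfl fun s _ => ?_
                    rw [Finset.sum_comm]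
                    refine Finset.sum_congr rfl fun a _ => ?_
                    rw [Finset.sum_comm]
              _ = _ := by
                    rw [Finset.sum_comm]
                    refine Finset.sum_congr rfl fun a _ => ?_
                    rw [Finset.sum_comm]
                    refine Finset.sum_congr rfl fun b _ => ?_
                    rw [Finset.sum_comm]
          rw [h2]
          refine Finset.sum_congr rfl fun a _ => Finset.sum_congr rfl fun b _ => 
            Finset.sum_congr rfl fun t _ => Finset.sum_congr rfl fun s _ => ?_
          ring
      _ = _ := by
          rw [Finset.sum_eq_single_of_mem i (Finset.mem_range.mpr hi), Finset.sum_eq_single_of_mem j (Finset.mem_range.mpr hj),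
            zeta_orth hζ hi hi, zeta_orth hζ hj hj]
          · simp; ring
          · intro b hb hbj
            rw [zeta_orth hζ hj (Finset.mem_range.mp hb), if_neg (Ne.symm hbj)]; simp
          · intro a ha hai
            apply Finset.sum_eq_zero
            intro b hb
            rw [zeta_orth hζ hi (Finset.mem_range.mp ha), if_neg (Ne.symm hai)]; simp
  have hd : ∀ i j, ∃ z : S, i < p → j < p → algebraMap S L z = (p : L) ^ 2 * c i j := by
    intro i j
    by_cases hij : i < p ∧ j < p
    swap
    · exact ⟨0, fun h1 h2 => absurd ⟨h1, h2⟩ hij⟩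
    obtain ⟨hi, hj⟩ := hij
    have hint : IsIntegral S ((p : E) ^ 2 * (algebraMap L E (c i j) * (ω' ^ i * μ' ^ j))) := by
      rw [← key i j hi hj]
      exact IsIntegral.sum _ fun s _ => IsIntegral.sum _ fun t _ => ((hζint _).mul (hζint _)).mul (hφr s t)
    have h2 := hint.pow p
    have h3 : ((p : E) ^ 2 * (algebraMap L E (c i j) * (ω' ^ i * μ' ^ j))) ^ p = algebraMap L E (((p : L) ^ 2 * c i j) ^ p * algebraMap S L (f ^ i * g ^ j)) := by
      have e1 : (ω' ^ i) ^ p = algebraMap L E (algebraMap S L f) ^ i := by rw [← hω1, ← pow_mul, ← pow_mul, mul_comm]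
      have e2 : (μ' ^ j) ^ p = algebraMap L E (algebraMap S L g) ^ j := by rw [← hμ1, ← pow_mul, ← pow_mul, mul_comm]
      simp only [mul_pow, e1, e2, map_mul, map_pow, map_natCast]; ring
    rw [h3] at h2
    have h4 := (isIntegral_algebraMap_iff (algebraMap L E).injective).mp h2
    obtain ⟨m, hm⟩ := IsIntegrallyClosed.isIntegral_iff.mp h4
    obtain ⟨z, hz⟩ := denom_lemma hp0 hfg ((p : L) ^ 2 * c i j) i j hi hj ⟨m, hm⟩
    exact ⟨z, fun _ _ => hz⟩
  choose d hd using hd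
  have : (p : K) ^ 2 * r = ∑ j ∈ Finset.range p, ∑ k ∈ Finset.range p, algebraMap S K (d j k) * (ω ^ j * μ ^ k) := by
    rw [hc, Finset.mul_sum]
    refine Finset.sum_congr rfl fun j hj => ?_
    rw [Finset.mul_sum]
    refine Finset.sum_congr rfl fun k hk => ?_
    rw [IsScalarTower.algebraMap_apply S L K, hd j k (Finset.mem_range.mp hj) (Finset.mem_range.mp hk)]
    simp; ring
  rw [this]
  refine sum_mem fun j _ => sum_mem fun k _ => mul_mem (Subalgebra.algebraMap_mem _ _) 
    (mul_mem (pow_mem (Algebra.subset_adjoin (by simp)) _) (pow_mem (Algebra.subset_adjoin (by simp)) _))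
end

section
set_option linter.all false

/-- valuation extending the `p`-adic valuation -/
structure GoodVal (S : Type*) [CommRing S] {E : Type*} [Field E] [Algebra S E] (p : ℕ)
    {Γ : Type*} [LinearOrderedCommGroupWithZero Γ] (v : Valuation E Γ) : Prop where
  le_one : ∀ s : S, v (algebraMap S E s) ≤ 1
  lt_one_iff : ∀ s : S, v (algebraMap S E s) < 1 ↔ (p : S) ∣ s

theorem exists_goodVal (S : Type*) [CommRing S] [IsDomain S] (E : Type*) [Field E] [Algebra S E]
    (hinj : Function.Injective (algebraMap S E)) (p : ℕ) (hpS : Prime (p : S)) :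
    ∃ V : ValuationSubring E, GoodVal S p V.valuation := by
  set I := Ideal.span {(p : S)} with hI
  haveI hIp : I.IsPrime := (Ideal.span_singleton_prime hpS.ne_zero).mpr hpS
  have hu : ∀ y : I.primeCompl, IsUnit (algebraMap S E y) := by
    intro y
    rw [isUnit_iff_ne_zero]
    intro h
    have : (y : S) = 0 := hinj (by rw [h, map_zero])
    exact y.2 (by rw [this]; exact zero_mem _)
  let θ : Localization.AtPrime I →+* E := IsLocalization.lift (M := I.primeCompl) hu
  have hθ : ∀ s, θ (algebraMap S _ s) = algebraMap S E s := fun s => IsLocalization.lift_eq hu s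
  have hpE : (p : E) = algebraMap S E p := by simp
  let pA : θ.range := ⟨p, ⟨p, by simp⟩⟩
  have hne : Ideal.span {pA} ≠ ⊤ := by
    intro h
    obtain ⟨⟨a, l, rfl⟩, ha⟩ := Ideal.mem_span_singleton'.mp ((Ideal.eq_top_iff_one _).mp h)
    have ha' : θ l * (p : E) = 1 := congrArg Subtype.val ha
    obtain ⟨⟨s, t⟩, hst⟩ := IsLocalization.surj I.primeCompl l
    have h2 : algebraMap S E (s * p) = algebraMap S E t := by
      rw [map_mul, ← hpE, ← hθ s, ← hθ t, ← hst, map_mul]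
      linear_combination θ (algebraMap S _ (t : S)) * ha'
    have := hinj h2
    exact t.2 (by rw [← this]; exact Ideal.mem_span_singleton.mpr (dvd_mul_left _ _))
  obtain ⟨V, hV, hVI⟩ := Ideal.image_subset_nonunits_valuationSubring _ hne
  have hle : ∀ s : S, V.valuation (algebraMap S E s) ≤ 1 := fun s => by
    rw [ValuationSubring.valuation_le_one_iff]
    exact hV ⟨_, hθ s⟩
  refine ⟨V, hle, fun s => ?_⟩
  constructor
  · intro hs
    by_contra hd
    have hs' : s ∈ I.primeCompl := fun h => hd (Ideal.mem_span_singleton.mp h)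
    have h1 : (algebraMap S E s)⁻¹ ∈ V := by
      apply hV
      refine ⟨IsLocalization.mk' _ 1 ⟨s, hs'⟩, ?_⟩
      rw [IsLocalization.lift_mk']
      simp [Units.val_inv_eq_inv_val, IsUnit.coe_liftRight]
    have h2 := (V.valuation_le_one_iff _).mpr h1
    rw [map_inv₀] at h2
    have h0 : V.valuation (algebraMap S E s) ≠ 0 := by
      rw [Valuation.ne_zero_iff]; exact (hu ⟨s, hs'⟩).ne_zero
    exact absurd (one_lt_inv₀ (zero_lt_iff.mpr h0) |>.mpr hs) (not_lt.mpr h2)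
  · rintro ⟨c, rfl⟩
    have : V.valuation (p : E) < 1 := by
      have : (p : E) ∈ V.nonunits := hVI ⟨pA, Ideal.mem_span_singleton_self _, rfl⟩
      exact (V.mem_nonunits_iff).mp this
    rw [map_mul, map_mul, ← hpE]
    exact mul_lt_one_of_lt_of_le this (hle c)

variable {S : Type*} [CommRing S] [IsDomain S] [IsNoetherianRing S]
    {L : Type*} [Field L] [CharZero L] [Algebra S L] [IsFractionRing S L]
    {E : Type*} [Field E] [Algebra S E] [Algebra L E] [IsScalarTower S L E]
    {p : ℕ} {Γ : Type*} [LinearOrderedCommGroupWithZero Γ] {v : Valuation E Γ}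

theorem GoodVal.eq_one (hv : GoodVal S p v) {s : S} (hs : ¬ (p : S) ∣ s) : v (algebraMap S E s) = 1 :=
  le_antisymm (hv.le_one s) (not_lt.mp (fun h => hs ((hv.lt_one_iff s).mp h)))

theorem GoodVal.p_lt (hv : GoodVal S p v) : v (p : E) < 1 := by
  have := (hv.lt_one_iff (p : S)).mpr dvd_rfl
  simpa using this

theorem GoodVal.le_p (hv : GoodVal S p v) {s : S} (hs : (p : S) ∣ s) : v (algebraMap S E s) ≤ v (p : E) := by
  obtain ⟨c, rfl⟩ := hs
  rw [map_mul, map_mul, map_natCast]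
  exact mul_le_of_le_one_right' (hv.le_one c)

theorem GoodVal.le_pn (hv : GoodVal S p v) {s : S} {n : ℕ} (hs : (p : S) ^ n ∣ s) : v (algebraMap S E s) ≤ v (p : E) ^ n := by
  obtain ⟨c, rfl⟩ := hs
  rw [map_mul, map_mul, map_pow, map_pow, map_natCast]
  exact mul_le_of_le_one_right' (hv.le_one c)

theorem GoodVal.integral_le (hv : GoodVal S p v) {x : E} (hx : IsIntegral S x) : v x ≤ 1 := by
  have hle : ∀ s : S, algebraMap S E s ∈ v.integer := fun s => hv.le_one s
  have h2 : IsIntegral v.integer x := by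
    obtain ⟨P, hP, h0⟩ := hx
    refine ⟨P.map ((algebraMap S E).codRestrict v.integer hle), hP.map _, ?_⟩
    rw [Polynomial.eval₂_map]
    exact h0
  obtain ⟨y, hy⟩ := IsIntegrallyClosed.isIntegral_iff.mp h2
  rw [← hy]; exact y.2

theorem fac (hpS : Prime (p : S)) {s : S} (hs : s ≠ 0) : ∃ (m : ℕ) (s' : S), s = p ^ m * s' ∧ ¬ (p : S) ∣ s' := by
  have hfin : FiniteMultiplicity (p : S) s := FiniteMultiplicity.of_not_isUnit hpS.not_unit hs
  obtain ⟨c, hc, hd⟩ := hfin.exists_eq_pow_mul_and_not_dvd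
  exact ⟨_, c, hc, hd⟩

theorem facL (hpS : Prime (p : S)) {c : L} (hc : c ≠ 0) : ∃ (m n : ℕ) (s t : S),
    ¬ (p : S) ∣ s ∧ ¬ (p : S) ∣ t ∧ c * (p ^ n * algebraMap S L t) = p ^ m * algebraMap S L s := by
  obtain ⟨s, t, ht, rfl⟩ := IsFractionRing.div_surjective (A := S) c
  have ht0 : t ≠ 0 := nonZeroDivisors.ne_zero ht
  have hs0 : s ≠ 0 := by rintro rfl; simp at hc
  obtain ⟨m, s', hs, hs'⟩ := fac hpS hs0
  obtain ⟨n, t', htt, ht'⟩ := fac hpS ht0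
  refine ⟨m, n, s', t', hs', ht', ?_⟩
  have h1 : (p : L) ^ n * algebraMap S L t' = algebraMap S L t := by rw [htt]; simp
  have h2 : (p : L) ^ m * algebraMap S L s' = algebraMap S L s := by rw [hs]; simp
  rw [h1, h2]
  have : algebraMap S L t ≠ 0 := fun h => ht0 (IsFractionRing.injective S L (by rw [h, map_zero]))
  field_simp

theorem GoodVal.vfac (hv : GoodVal S p v) (hpS : Prime (p : S)) {c : L} (hc : c ≠ 0) : ∃ m n : ℕ, 
    v (algebraMap L E c) * v (p : E) ^ n = v (p : E) ^ m ∧ 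
    ∃ (s t : S), ¬ (p : S) ∣ s ∧ ¬ (p : S) ∣ t ∧ c * (p ^ n * algebraMap S L t) = p ^ m * algebraMap S L s := by
  obtain ⟨m, n, s, t, hs, ht, h⟩ := facL hpS hc
  refine ⟨m, n, ?_, s, t, hs, ht, h⟩
  have := congrArg (fun x => v (algebraMap L E x)) h
  simp only [map_mul, map_pow, map_natCast, ← IsScalarTower.algebraMap_apply S L E, hv.eq_one hs, hv.eq_one ht, mul_one] at this
  exact this

theorem GoodVal.p_ne (hv : GoodVal S p v) (hp : p ≠ 0) [CharZero E] : v (p : E) ≠ 0 := by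
  rw [Valuation.ne_zero_iff]; exact_mod_cast hp

theorem GoodVal.dichotomy (hv : GoodVal S p v) [CharZero E] (hpS : Prime (p : S)) (hp : p ≠ 0) (c : L) (n : ℕ) :
    (∃ t s : S, ¬ (p : S) ∣ t ∧ algebraMap S L t * c = p ^ n * algebraMap S L s) ∨
    v (p : E) ^ n ≤ v (algebraMap L E c) * v (p : E) := by
  by_cases hc : c = 0
  · left
    exact ⟨1, 0, fun h => hpS.not_unit (isUnit_of_dvd_one h), by simp [hc]⟩
  obtain ⟨m, k, hmk, s, t, hs, ht, h⟩ := hv.vfac hpS hc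
  have hp0 := hv.p_ne hp
  have hpL : (p : L) ≠ 0 := by exact_mod_cast hp
  by_cases hle : n + k ≤ m
  · left
    refine ⟨t, p ^ (m - (n + k)) * s, ht, ?_⟩
    apply mul_left_cancel₀ (pow_ne_zero k hpL)
    rw [map_mul, map_pow, map_natCast]
    calc _ = c * (p ^ k * algebraMap S L t) := by ring
      _ = p ^ (n + k + (m - (n + k))) * algebraMap S L s := by rw [h, Nat.add_sub_cancel' hle]
      _ = _ := by rw [pow_add, pow_add]; ring
  · right
    have h1 : v (p : E) ^ (n + k) ≤ v (p : E) ^ (m + 1) := pow_le_pow_right_of_le_one' hv.p_lt.le (by omega)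
    rw [pow_succ, ← hmk, pow_add] at h1
    have h2 : v (p : E) ^ n * v (p : E) ^ k ≤ v (algebraMap L E c) * v (p : E) * v (p : E) ^ k := by
      rw [mul_right_comm]; exact h1
    exact le_of_mul_le_mul_right h2 (zero_lt_iff.mpr (pow_ne_zero _ hp0))
end

section
set_option linter.all false

/-- span of the `p × p` family -/
noncomputable def Mspan (S : Type*) [CommRing S] {K : Type*} [Field K] [Algebra S K] (p : ℕ) (F : ℕ → ℕ → K) : Submodule S K :=
  Submodule.span S (Set.range (fun x : Fin p × Fin p => F x.1 x.2))

theorem mem_Mspan {S : Type*} [CommRing S] {K : Type*} [Field K] [Algebra S K] {p : ℕ} {F : ℕ → ℕ → K}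
    {j k : ℕ} (hj : j < p) (hk : k < p) : F j k ∈ Mspan S p F :=
  Submodule.subset_span ⟨(⟨j, hj⟩, ⟨k, hk⟩), rfl⟩

theorem assembly {S : Type*} [CommRing S] [IsDomain S] [IsNoetherianRing S] [IsLocalRing S] [IsIntegrallyClosed S]
    {L : Type*} [Field L] [CharZero L] [Algebra S L] [IsFractionRing S L]
    {K : Type*} [Field K] [Algebra L K] [Algebra S K] [IsScalarTower S L K]
    {E : Type*} [Field E] [IsAlgClosed E] [Algebra S E] [Algebra L E] [Algebra K E]
    [IsScalarTower S L E] [IsScalarTower L K E]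
    {p : ℕ} (hp : p.Prime) (hpS : Prime (p : S))
    (hreg : ∃ s : Finset S, Ideal.span (s : Set S) = IsLocalRing.maximalIdeal S ∧
      (s.card : WithBot ℕ∞) = ringKrullDim S) {f g : S}
    (hfg : (¬IsUnit f ∧ ¬IsUnit g ∧ PaperSquarefree f ∧ PaperSquarefree g ∧ SatisfiesA1 f g) ∨
      (IsUnit f ∧ IsUnit g ∧ (∀ x : S, x ^ p ≠ f) ∧ (∀ x : S, x ^ p ≠ g)))
    {ω μ : K} (hω : ω ^ p = algebraMap S K f) (hμ : μ ^ p = algebraMap S K g)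
    (hKgen : Algebra.adjoin L ({ω, μ} : Set K) = ⊤)
    (hdeg : Module.finrank L K = p ^ 2)
    {Γ : Type*} [LinearOrderedCommGroupWithZero Γ] {v : Valuation E Γ} (hv : GoodVal S p v)
    (F : ℕ → ℕ → K)
    (hFA : ∀ j k, j < p → k < p → F j k ∈ Algebra.adjoin S ({ω, μ} : Set K))
    (hAM : ∀ z ∈ Algebra.adjoin S ({ω, μ} : Set K), (p : K) ^ 2 * z ∈ Mspan S p F)
    (Φ : Set (K →ₐ[L] E)) (β : Γ)
    (hβ : ∀ φ ∈ Φ, ∀ j k, j < p → k < p → v (φ (F j k)) ≤ β)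
    (hloc : ∀ z : K, (∀ φ ∈ Φ, v (φ z) ≤ β) → ∃ t : S, ¬ (p : S) ∣ t ∧ algebraMap S K t * z ∈ Mspan S p F) :
    ∃ M : Submodule S K, M ≠ ⊥ ∧ M.FG ∧
      (∀ r ∈ integralClosure S K, ∀ m ∈ M, r * m ∈ M) ∧
      (modDepth S M : WithBot ℕ∞) = ringKrullDim S := by
  haveI : CharZero K := charZero_of_injective_algebraMap (algebraMap L K).injective
  have hpK : (p : K) ≠ 0 := by exact_mod_cast hp.ne_zero
  have hpL : (p : L) ≠ 0 := by exact_mod_cast hp.ne_zero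
  have hp0 := hp.pos
  haveI hne : Nonempty (Fin p × Fin p) := ⟨(⟨0, hp0⟩, ⟨0, hp0⟩)⟩
  have hω' : ω ^ p = algebraMap L K (algebraMap S L f) := by rw [hω, IsScalarTower.algebraMap_apply S L K]
  have hμ' : μ ^ p = algebraMap L K (algebraMap S L g) := by rw [hμ, IsScalarTower.algebraMap_apply S L K]
  set b : Fin p × Fin p → K := fun x => F x.1 x.2 with hb
  have hMle : ∀ z ∈ Mspan S p F, z ∈ Submodule.span L (Set.range b) := by
    intro z hz
    exact Submodule.span_le_restrictScalars S L _ hz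
  have hAle : ∀ z ∈ Algebra.adjoin S ({ω, μ} : Set K), z ∈ Submodule.span L (Set.range b) := by
    intro z hz
    have h1 := Submodule.smul_mem _ ((p : L) ^ 2)⁻¹ (hMle _ (hAM z hz))
    rw [Algebra.smul_def] at h1
    convert h1 using 1
    rw [map_inv₀, map_pow, map_natCast]
    field_simp
  have hωA : ω ∈ Algebra.adjoin S ({ω, μ} : Set K) := Algebra.subset_adjoin (by simp)
  have hμA : μ ∈ Algebra.adjoin S ({ω, μ} : Set K) := Algebra.subset_adjoin (by simp)
  have htop : ⊤ ≤ Submodule.span L (Set.range b) := by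
    intro z _
    obtain ⟨c, hc⟩ := span2 hp0 0 (algebraMap S L g) 0 (algebraMap L K (algebraMap S L f)) (by simpa using hμ') (zero_mem _) (Subalgebra.algebraMap_mem _ _)
      (by simpa using hω') (z := z) (by rw [hKgen]; trivial)
    rw [hc]
    refine Submodule.sum_mem _ fun j _ => Submodule.sum_mem _ fun k _ => ?_
    rw [← Algebra.smul_def]
    exact Submodule.smul_mem _ _ (hAle _ (mul_mem (pow_mem hωA _) (pow_mem hμA _)))
  have hliL : LinearIndependent L b :=
    linearIndependent_of_top_le_span_of_card_eq_finrank htop (by simp [hdeg, pow_two])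
  have hli : LinearIndependent S b := hliL.restrict_scalars (by
    intro s t hst
    apply IsFractionRing.injective S L
    simpa [Algebra.smul_def] using hst)
  refine ⟨Mspan S p F, ?_, Submodule.fg_span (Set.finite_range _), ?_, ?_⟩
  · intro h0
    have h1 : F 0 0 ∈ Mspan S p F := mem_Mspan hp0 hp0
    rw [h0, Submodule.mem_bot] at h1
    exact hli.ne_zero (⟨0, hp0⟩, ⟨0, hp0⟩) h1
  · intro r hr m hm
    have hMA : ∀ z ∈ Mspan S p F, z ∈ Algebra.adjoin S ({ω, μ} : Set K) := by
      have : Mspan S p F ≤ Subalgebra.toSubmodule (Algebra.adjoin S ({ω, μ} : Set K)) := by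
        refine Submodule.span_le.mpr ?_
        rintro _ ⟨x, rfl⟩
        exact hFA _ _ x.1.2 x.2.2
      exact this
    have h1 : (p : K) ^ 4 * (r * m) ∈ Mspan S p F := by
      have := hAM _ (mul_mem (psq E hp hfg hω hμ hKgen hdeg hr) (hMA m hm))
      convert this using 1
      ring
    have hMβ : ∀ φ ∈ Φ, ∀ z ∈ Mspan S p F, v (φ z) ≤ β := by
      intro φ hφ z hz
      have hz0 : (0 : Γ) ≤ β := zero_le
      induction hz using Submodule.span_induction with
      | mem x hx => obtain ⟨x, rfl⟩ := hx; exact hβ φ hφ _ _ x.1.2 x.2.2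
      | zero => simp
      | add x y _ _ hx hy => rw [map_add]; exact v.map_add_le hx hy
      | smul s x _ hx =>
        rw [Algebra.smul_def, map_mul, map_mul, IsScalarTower.algebraMap_apply S L K, AlgHom.commutes, ← IsScalarTower.algebraMap_apply S L E]
        exact le_trans (mul_le_of_le_one_left' (hv.le_one s)) hx
    obtain ⟨t, ht, h2⟩ := hloc (r * m) (by
      intro φ hφ
      rw [map_mul, map_mul]
      have : IsIntegral S (φ r) := IsIntegral.map (φ.restrictScalars S) hr
      exact le_trans (mul_le_of_le_one_left' (hv.integral_le this)) (hMβ φ hφ m hm))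
    obtain ⟨c, hc⟩ := (Submodule.mem_span_range_iff_exists_fun S).mp h1
    obtain ⟨d, hd⟩ := (Submodule.mem_span_range_iff_exists_fun S).mp h2
    have hcd : ∀ x, t * c x = p ^ 4 * d x := by
      intro x
      have := Fintype.linearIndependent_iff.mp hli (fun x => t * c x - p ^ 4 * d x) (by
        have h3 : ∑ x, c x • b x = (p : K) ^ 4 * (r * m) := hc
        have h4 : ∑ x, d x • b x = algebraMap S K t * (r * m) := hd
        simp only [sub_smul, mul_smul, Finset.sum_sub_distrib, ← Finset.smul_sum, h3, h4]
        simp only [Algebra.smul_def, map_pow, map_natCast]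
        ring) x
      exact sub_eq_zero.mp this
    have hdiv : ∀ x, ∃ u, c x = p ^ 4 * u := by
      intro x
      exact hpS.pow_dvd_of_dvd_mul_left 4 ht ⟨d x, hcd x⟩
    choose u hu using hdiv
    refine (Submodule.mem_span_range_iff_exists_fun S).mpr ⟨u, ?_⟩
    apply mul_left_cancel₀ (pow_ne_zero 4 hpK)
    rw [← hc, Finset.mul_sum]
    refine Finset.sum_congr rfl fun x _ => ?_
    rw [hu x, Algebra.smul_def, Algebra.smul_def, map_mul, map_pow, map_natCast]
    ring
  · exact depth_free hreg (Module.Basis.span hli).equivFun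

theorem local_crit {S : Type*} [CommRing S] [IsDomain S] [IsNoetherianRing S]
    {L : Type*} [Field L] [CharZero L] [Algebra S L] [IsFractionRing S L]
    {K : Type*} [Field K] [Algebra L K] [Algebra S K] [IsScalarTower S L K]
    {E : Type*} [Field E] [Algebra S E] [Algebra L E] [IsScalarTower S L E]
    {p : ℕ} (hp : p.Prime) (hpS : Prime (p : S))
    {Γ : Type*} [LinearOrderedCommGroupWithZero Γ] {v : Valuation E Γ} (hv : GoodVal S p v)
    (M : Submodule S K) (Φ : Set (K →ₐ[L] E)) (β : Γ)
    {ξ η : K} (hspan : ∀ z : K, ∃ c : ℕ → ℕ → L, z = ∑ j ∈ Finset.range p, ∑ k ∈ Finset.range p,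
      algebraMap L K (c j k) * (ξ ^ j * η ^ k))
    (G : ℕ → ℕ → Γ) (n : ℕ → ℕ → ℕ)
    (hInd : ∀ c : ℕ → ℕ → L, ∀ j₀ k₀, j₀ < p → k₀ < p → c j₀ k₀ ≠ 0 →
      (∀ j k, j < p → k < p → v (algebraMap L E (c j k)) * G j k ≤ v (algebraMap L E (c j₀ k₀)) * G j₀ k₀) →
      ∃ φ ∈ Φ, v (algebraMap L E (c j₀ k₀)) * G j₀ k₀ ≤ v (∑ j ∈ Finset.range p, ∑ k ∈ Finset.range p,
        algebraMap L E (c j k) * (φ ξ ^ j * φ η ^ k)))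
    (hD3 : ∀ j k, j < p → k < p → β * v (p : E) < v (p : E) ^ n j k * G j k)
    (hD4 : ∀ j k, j < p → k < p → (p : K) ^ n j k * (ξ ^ j * η ^ k) ∈ M)
    (z : K) (hz : ∀ φ ∈ Φ, v (φ z) ≤ β) : ∃ t : S, ¬ (p : S) ∣ t ∧ algebraMap S K t * z ∈ M := by
  haveI : CharZero E := charZero_of_injective_algebraMap (algebraMap L E).injective
  obtain ⟨c, hc⟩ := hspan z
  have hbd : ∀ j k, j < p → k < p → v (algebraMap L E (c j k)) * G j k ≤ β := by
    obtain ⟨⟨j₀, k₀⟩, hm, hmax⟩ := Finset.exists_max_image (Finset.range p ×ˢ Finset.range p)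
      (fun x => v (algebraMap L E (c x.1 x.2)) * G x.1 x.2) ⟨(0, 0), by simp [hp.pos]⟩
    simp only [Finset.mem_product, Finset.mem_range] at hm hmax
    have hmax' : ∀ j k, j < p → k < p → v (algebraMap L E (c j k)) * G j k ≤ v (algebraMap L E (c j₀ k₀)) * G j₀ k₀ :=
      fun j k hj hk => hmax (j, k) ⟨hj, hk⟩
    have key : v (algebraMap L E (c j₀ k₀)) * G j₀ k₀ ≤ β := by
      by_cases h0 : c j₀ k₀ = 0
      · rw [h0]; simp
      · obtain ⟨φ, hφ, h⟩ := hInd c j₀ k₀ hm.1 hm.2 h0 hmax'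
        refine h.trans (le_trans (le_of_eq ?_) (hz φ hφ))
        rw [hc]
        simp only [map_sum, map_mul, map_pow, AlgHom.commutes]
    exact fun j k hj hk => (hmax' j k hj hk).trans key
  have hts : ∀ j k, ∃ t : S, ¬ (p : S) ∣ t ∧ (j < p → k < p → algebraMap S K t * (algebraMap L K (c j k) * (ξ ^ j * η ^ k)) ∈ M) := by
    intro j k
    by_cases hjk : j < p ∧ k < p
    · obtain ⟨hj, hk⟩ := hjk
      rcases hv.dichotomy hpS hp.ne_zero (c j k) (n j k) with ⟨t, s, ht, h⟩ | h
      · refine ⟨t, ht, fun _ _ => ?_⟩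
        have h2 := M.smul_mem s (hD4 j k hj hk)
        convert h2 using 1
        have h3 := congrArg (algebraMap L K) h
        simp only [map_mul, map_pow, map_natCast, ← IsScalarTower.algebraMap_apply S L K] at h3
        rw [Algebra.smul_def]
        linear_combination (ξ ^ j * η ^ k) * h3
      · exfalso
        have h1 := hD3 j k hj hk
        have h2 : v (p : E) ^ n j k * G j k ≤ β * v (p : E) := by
          calc _ ≤ v (algebraMap L E (c j k)) * v (p : E) * G j k := mul_le_mul_left h _
            _ = v (algebraMap L E (c j k)) * G j k * v (p : E) := by rw [mul_right_comm]
            _ ≤ _ := mul_le_mul_left (hbd j k hj hk) _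
        exact absurd h1 (not_lt.mpr h2)
    · exact ⟨1, fun h => hpS.not_unit (isUnit_of_dvd_one h), fun h1 h2 => absurd ⟨h1, h2⟩ hjk⟩
  choose t ht htM using hts
  refine ⟨∏ x ∈ Finset.range p ×ˢ Finset.range p, t x.1 x.2, ?_, ?_⟩
  · rw [hpS.dvd_finset_prod_iff]
    rintro ⟨x, _, hx⟩
    exact ht _ _ hx
  · rw [hc, ← Finset.sum_product', Finset.mul_sum]
    refine Submodule.sum_mem _ fun x hx => ?_
    have hx' := Finset.mem_product.mp hx
    rw [← Finset.mul_prod_erase _ _ hx, mul_comm (t x.1 x.2), map_mul, mul_assoc, ← Algebra.smul_def]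
    exact M.smul_mem _ (htM _ _ (Finset.mem_range.mp hx'.1) (Finset.mem_range.mp hx'.2))
end

section
set_option linter.all false

theorem rel_x {B : Type*} [Field B] [CharZero B] {p : ℕ} (hp : p.Prime) {S : Type*} [CommRing S] [Algebra S B]
    {f h a : S} (hf : f = h ^ p + a * (p : S)) {w x : B} (hw : w ^ p = algebraMap S B f) (hx : x = w - algebraMap S B h) :
    ∃ m : ℕ → S, m 1 = - h ^ (p - 1) ∧ x ^ p = p * (algebraMap S B a + ∑ k ∈ Finset.Ioo 0 p, algebraMap S B (m k) * x ^ k) := by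
  refine ⟨fun k => - (h ^ (p - k) * ((p.choose k / p : ℕ) : S)), ?_, ?_⟩
  · simp [Nat.div_self hp.pos]
  · have h1 := add_pow_prime_eq hp x (algebraMap S B h)
    have h2 : x + algebraMap S B h = w := by rw [hx]; ring
    rw [h2, hw, hf, map_add, map_mul, map_pow, map_natCast] at h1
    have h3 : ∑ k ∈ Finset.Ioo 0 p, algebraMap S B (- (h ^ (p - k) * ((p.choose k / p : ℕ) : S))) * x ^ k
        = - (x * algebraMap S B h * ∑ k ∈ Finset.Ioo 0 p, x ^ (k - 1) * algebraMap S B h ^ (p - k - 1) * ((p.choose k / p : ℕ) : B)) := by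
      rw [Finset.mul_sum, ← Finset.sum_neg_distrib]
      refine Finset.sum_congr rfl fun k hk => ?_
      obtain ⟨hk0, hk1⟩ := Finset.mem_Ioo.mp hk
      obtain ⟨k, rfl⟩ : ∃ k', k = k' + 1 := ⟨k - 1, by omega⟩
      obtain ⟨r, hr⟩ : ∃ r, p - (k + 1) = r + 1 := ⟨p - (k + 1) - 1, by omega⟩
      rw [hr]
      simp only [map_neg, map_mul, map_pow, map_natCast, Nat.add_sub_cancel]
      ring
    rw [h3]
    linear_combination -h1

variable {S : Type*} [CommRing S] {K : Type*} [Field K] [Algebra S K] {p : ℕ}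

theorem homog (M : Submodule S K) {x y l z₀ : K} (u w : S) (hl : l = algebraMap S K u * x + algebraMap S K w * y) (N : ℕ)
    (h : ∀ i j, i + j = N → z₀ * (x ^ i * y ^ j) ∈ M) {j k : ℕ} (hjk : j + k = N) : z₀ * (l ^ j * y ^ k) ∈ M := by
  have key : ∀ j i k, i + j + k = N → z₀ * (x ^ i * l ^ j * y ^ k) ∈ M := by
    intro j
    induction j with
    | zero => intro i k hk; simpa using h i k hk
    | succ j ih =>
      intro i k hk
      have h1 := M.smul_mem u (ih (i + 1) k (by omega))
      have h2 := M.smul_mem w (ih i (k + 1) (by omega))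
      convert M.add_mem h1 h2 using 1
      rw [Algebra.smul_def, Algebra.smul_def, pow_succ l, hl]
      ring
  simpa using key j 0 k (by omega)

theorem p_mem (M : Submodule S K) (c : S) {z : K} (hz : z ∈ M) : algebraMap S K c * z ∈ M := by
  rw [← Algebra.smul_def]; exact M.smul_mem _ hz

theorem pn_mem (M : Submodule S K) {z : K} (hz : z ∈ M) : (p : K) * z ∈ M := by
  have := p_mem M (p : S) hz
  simpa using this

/-- family for cases I, II -/
noncomputable def F1 (p : ℕ) (x y : K) (j k : ℕ) : K := (p : K) ^ (if j + k < p - 1 then 1 else 0) * (x ^ j * y ^ k)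

theorem F1_pA {x y : K} {A : Subalgebra S K} 
    (hA : ∀ z ∈ A, ∃ c : ℕ → ℕ → S, z = ∑ j ∈ Finset.range p, ∑ k ∈ Finset.range p, algebraMap S K (c j k) * (x ^ j * y ^ k))
    {z : K} (hz : z ∈ A) : (p : K) * z ∈ Mspan S p (F1 p x y) := by
  obtain ⟨c, rfl⟩ := hA z hz
  rw [Finset.mul_sum]
  refine Submodule.sum_mem _ fun j hj => ?_
  rw [Finset.mul_sum]
  refine Submodule.sum_mem _ fun k hk => ?_
  rw [mul_left_comm]
  apply p_mem
  have h := mem_Mspan (S := S) (F := F1 p x y) (Finset.mem_range.mp hj) (Finset.mem_range.mp hk)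
  unfold F1 at h ⊢
  split_ifs at h
  · simpa using h
  · apply pn_mem; simpa using h

theorem F1_P {x y : K} {A : Subalgebra S K} (hxA : x ∈ A) (hyA : y ∈ A)
    (hA : ∀ z ∈ A, ∃ c : ℕ → ℕ → S, z = ∑ j ∈ Finset.range p, ∑ k ∈ Finset.range p, algebraMap S K (c j k) * (x ^ j * y ^ k))
    {x' y' : K} (hx' : x' ∈ A) (hy' : y' ∈ A) (hx : x ^ p = p * x') (hy : y ^ p = p * y') {i j : ℕ} (hij : p - 1 ≤ i + j) :
    x ^ i * y ^ j ∈ Mspan S p (F1 p x y) := by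
  by_cases hi : p ≤ i
  · obtain ⟨i, rfl⟩ := Nat.exists_eq_add_of_le hi
    have := F1_pA hA (mul_mem hx' (mul_mem (pow_mem hxA i) (pow_mem hyA j)))
    convert this using 1
    rw [pow_add, hx]; ring
  by_cases hj : p ≤ j
  · obtain ⟨j, rfl⟩ := Nat.exists_eq_add_of_le hj
    have := F1_pA hA (mul_mem hy' (mul_mem (pow_mem hxA i) (pow_mem hyA j)))
    convert this using 1
    rw [pow_add, hy]; ring
  have h := mem_Mspan (S := S) (F := F1 p x y) (not_le.mp hi) (not_le.mp hj)
  unfold F1 at h ⊢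
  rw [if_neg (by omega)] at h
  simpa using h

/-- family for cases III, IV -/
noncomputable def F3 (p : ℕ) (c : ℕ → S) (x y : K) (j k : ℕ) : K :=
  if j + k = p then x ^ j * y ^ k - p * algebraMap S K (c j) else
  (p : K) ^ (if j + k = 0 then 2 else if j + k < p then 1 else 0) * (x ^ j * y ^ k)

theorem F3_eq {c : ℕ → S} {x y : K} {j k : ℕ} (h : j + k = p) : F3 p c x y j k = x ^ j * y ^ k - p * algebraMap S K (c j) := if_pos h
theorem F3_0 {c : ℕ → S} {x y : K} (hp : 0 < p) : F3 p c x y 0 0 = (p : K) ^ 2 := by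
  unfold F3; rw [if_neg (by omega), if_pos (by omega)]; simp
theorem F3_lt {c : ℕ → S} {x y : K} {j k : ℕ} (h : j + k < p) (h0 : 0 < j + k) : F3 p c x y j k = p * (x ^ j * y ^ k) := by
  unfold F3; rw [if_neg (by omega), if_neg (by omega), if_pos h]; simp
theorem F3_gt {c : ℕ → S} {x y : K} {j k : ℕ} (h : p < j + k) : F3 p c x y j k = (x ^ j * y ^ k) := by
  unfold F3; rw [if_neg (by omega), if_neg (by omega), if_neg (by omega)]; simp

theorem F3_p {c : ℕ → S} {x y : K} (hp : 0 < p) : (p : K) ^ 2 ∈ Mspan S p (F3 p c x y) := by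
  have h := mem_Mspan (S := S) (F := F3 p c x y) hp hp
  rwa [F3_0 hp] at h

theorem F3_pij {c : ℕ → S} {x y : K} {i j : ℕ} (hi : i < p) (hj : j < p) (hij : 0 < i + j) : p * (x ^ i * y ^ j) ∈ Mspan S p (F3 p c x y) := by
  have h := mem_Mspan (S := S) (F := F3 p c x y) hi hj
  rcases lt_trichotomy (i + j) p with h1 | h1 | h1
  · rwa [F3_lt h1 hij] at h
  · rw [F3_eq h1] at h
    have h2 := p_mem (Mspan S p (F3 p c x y)) (c i) (F3_p (x := x) (y := y) (c := c) (hi.trans_le' (Nat.zero_le _)))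
    convert add_mem (pn_mem (p := p) _ h) h2 using 1
    ring
  · rw [F3_gt h1] at h
    exact pn_mem _ h

theorem F3_pA (hp : 0 < p) {c : ℕ → S} {x y : K} {A : Subalgebra S K} 
    (hA : ∀ z ∈ A, ∃ c : ℕ → ℕ → S, z = ∑ j ∈ Finset.range p, ∑ k ∈ Finset.range p, algebraMap S K (c j k) * (x ^ j * y ^ k))
    {z : K} (hz : z ∈ A) : (p : K) ^ 2 * z ∈ Mspan S p (F3 p c x y) := by
  obtain ⟨d, rfl⟩ := hA z hz
  rw [Finset.mul_sum]
  refine Submodule.sum_mem _ fun j hj => ?_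
  rw [Finset.mul_sum]
  refine Submodule.sum_mem _ fun k hk => ?_
  rw [mul_left_comm]
  apply p_mem
  by_cases h0 : 0 < j + k
  · have := F3_pij (c := c) (x := x) (y := y) (Finset.mem_range.mp hj) (Finset.mem_range.mp hk) h0
    rw [pow_two, mul_assoc]
    exact pn_mem _ this
  · obtain ⟨rfl, rfl⟩ : j = 0 ∧ k = 0 := by omega
    simpa using F3_p hp

theorem F3_pP (hp : 0 < p) {c : ℕ → S} {x y : K} {A : Subalgebra S K} (hxA : x ∈ A) (hyA : y ∈ A)
    (hA : ∀ z ∈ A, ∃ c : ℕ → ℕ → S, z = ∑ j ∈ Finset.range p, ∑ k ∈ Finset.range p, algebraMap S K (c j k) * (x ^ j * y ^ k))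
    {x' y' : K} (hx' : x' ∈ A) (hy' : y' ∈ A) (hx : x ^ p = p * x') (hy : y ^ p = p * y') {i j : ℕ} (hij : 0 < i + j) :
    p * (x ^ i * y ^ j) ∈ Mspan S p (F3 p c x y) := by
  by_cases hi : p ≤ i
  · obtain ⟨i, rfl⟩ := Nat.exists_eq_add_of_le hi
    have := F3_pA hp (c := c) hA (mul_mem hx' (mul_mem (pow_mem hxA i) (pow_mem hyA j)))
    convert this using 1
    rw [pow_add, hx]; ring
  by_cases hj : p ≤ j
  · obtain ⟨j, rfl⟩ := Nat.exists_eq_add_of_le hj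
    have := F3_pA hp (c := c) hA (mul_mem hy' (mul_mem (pow_mem hxA i) (pow_mem hyA j)))
    convert this using 1
    rw [pow_add, hy]; ring
  exact F3_pij (not_le.mp hi) (not_le.mp hj) hij

theorem A_of_rel {A : Subalgebra S K} {x : K} (hxA : x ∈ A) (a : S) (m : ℕ → S) : 
    algebraMap S K a + ∑ k ∈ Finset.Ioo 0 p, algebraMap S K (m k) * x ^ k ∈ A :=
  add_mem (A.algebraMap_mem _) (sum_mem fun k _ => mul_mem (A.algebraMap_mem _) (pow_mem hxA _))

theorem F3_P1 (hp : 0 < p) {c : ℕ → S} {x y : K} {A : Subalgebra S K} (hxA : x ∈ A) (hyA : y ∈ A)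
    (hA : ∀ z ∈ A, ∃ c : ℕ → ℕ → S, z = ∑ j ∈ Finset.range p, ∑ k ∈ Finset.range p, algebraMap S K (c j k) * (x ^ j * y ^ k))
    {a b : S} {m m' : ℕ → S} (hx : x ^ p = p * (algebraMap S K a + ∑ k ∈ Finset.Ioo 0 p, algebraMap S K (m k) * x ^ k))
    (hy : y ^ p = p * (algebraMap S K b + ∑ k ∈ Finset.Ioo 0 p, algebraMap S K (m' k) * y ^ k)) {i j : ℕ} (hij : p < i + j) :
    x ^ i * y ^ j ∈ Mspan S p (F3 p c x y) := by
  have hP : ∀ i j, 0 < i + j → p * (x ^ i * y ^ j) ∈ Mspan S p (F3 p c x y) := fun i j h =>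
    F3_pP hp hxA hyA hA (A_of_rel hxA a m) (A_of_rel hyA b m') hx hy h
  by_cases hi : p ≤ i
  · obtain ⟨i, rfl⟩ := Nat.exists_eq_add_of_le hi
    have h1 : x ^ (p + i) * y ^ j = algebraMap S K a * (p * (x ^ i * y ^ j)) + 
        ∑ k ∈ Finset.Ioo 0 p, algebraMap S K (m k) * (p * (x ^ (k + i) * y ^ j)) := by
      rw [pow_add, hx, mul_add, add_mul, add_mul, Finset.mul_sum, Finset.sum_mul, Finset.sum_mul]
      congr 1
      · ring
      · exact Finset.sum_congr rfl fun k _ => by ring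
    rw [h1]
    refine add_mem (p_mem _ _ (hP _ _ (by omega))) (sum_mem fun k hk => p_mem _ _ (hP _ _ ?_))
    have := (Finset.mem_Ioo.mp hk).1
    omega
  by_cases hj : p ≤ j
  · obtain ⟨j, rfl⟩ := Nat.exists_eq_add_of_le hj
    have h1 : x ^ i * y ^ (p + j) = algebraMap S K b * (p * (x ^ i * y ^ j)) + 
        ∑ k ∈ Finset.Ioo 0 p, algebraMap S K (m' k) * (p * (x ^ i * y ^ (k + j))) := by
      rw [pow_add, hy, mul_add, add_mul, mul_add, Finset.mul_sum, Finset.sum_mul, Finset.mul_sum]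
      congr 1
      · ring
      · exact Finset.sum_congr rfl fun k _ => by ring
    rw [h1]
    refine add_mem (p_mem _ _ (hP _ _ (by omega))) (sum_mem fun k hk => p_mem _ _ (hP _ _ ?_))
    have := (Finset.mem_Ioo.mp hk).1
    omega
  have h := mem_Mspan (S := S) (F := F3 p c x y) (not_le.mp hi) (not_le.mp hj)
  rwa [F3_gt hij] at h

theorem F3_Pp (hp : 0 < p) {c : ℕ → S} {x y : K} {A : Subalgebra S K} (hxA : x ∈ A) (hyA : y ∈ A)
    (hA : ∀ z ∈ A, ∃ c : ℕ → ℕ → S, z = ∑ j ∈ Finset.range p, ∑ k ∈ Finset.range p, algebraMap S K (c j k) * (x ^ j * y ^ k))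
    {a b : S} {m m' : ℕ → S} (hx : x ^ p = p * (algebraMap S K a + ∑ k ∈ Finset.Ioo 0 p, algebraMap S K (m k) * x ^ k))
    (hy : y ^ p = p * (algebraMap S K b + ∑ k ∈ Finset.Ioo 0 p, algebraMap S K (m' k) * y ^ k)) 
    (hc0 : (p : S) ∣ b - c 0) (hcp : (p : S) ∣ a - c p) {i j : ℕ} (hij : i + j = p) :
    x ^ i * y ^ j - p * algebraMap S K (c i) ∈ Mspan S p (F3 p c x y) := by
  have hP : ∀ i j, 0 < i + j → p * (x ^ i * y ^ j) ∈ Mspan S p (F3 p c x y) := fun i j h =>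
    F3_pP hp hxA hyA hA (A_of_rel hxA a m) (A_of_rel hyA b m') hx hy h
  by_cases hi : i = 0
  · obtain ⟨u, hu⟩ := hc0
    subst hi
    obtain rfl : j = p := by omega
    have h3 : algebraMap S K b = algebraMap S K (c 0) + j * algebraMap S K u := by
      rw [← sub_eq_iff_eq_add', ← map_sub, hu]; simp
    have h1 : x ^ 0 * y ^ j - j * algebraMap S K (c 0) = algebraMap S K u * j ^ 2 + 
        ∑ k ∈ Finset.Ioo 0 j, algebraMap S K (m' k) * (j * (x ^ 0 * y ^ k)) := by
      have h4 : ∑ k ∈ Finset.Ioo 0 j, algebraMap S K (m' k) * (j * (x ^ 0 * y ^ k)) = j * ∑ k ∈ Finset.Ioo 0 j, algebraMap S K (m' k) * y ^ k := by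
        rw [Finset.mul_sum]; exact Finset.sum_congr rfl fun k _ => by ring
      rw [hy, h4, h3]
      ring
    rw [h1]
    refine add_mem (p_mem _ _ (F3_p hp)) (sum_mem fun k hk => p_mem _ _ (hP _ _ ?_))
    have := (Finset.mem_Ioo.mp hk).1
    omega
  by_cases hj : j = 0
  · obtain ⟨u, hu⟩ := hcp
    subst hj
    obtain rfl : i = p := by omega
    have h3 : algebraMap S K a = algebraMap S K (c i) + i * algebraMap S K u := by
      rw [← sub_eq_iff_eq_add', ← map_sub, hu]; simp
    have h1 : x ^ i * y ^ 0 - i * algebraMap S K (c i) = algebraMap S K u * i ^ 2 + 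
        ∑ k ∈ Finset.Ioo 0 i, algebraMap S K (m k) * (i * (x ^ k * y ^ 0)) := by
      have h4 : ∑ k ∈ Finset.Ioo 0 i, algebraMap S K (m k) * (i * (x ^ k * y ^ 0)) = i * ∑ k ∈ Finset.Ioo 0 i, algebraMap S K (m k) * x ^ k := by
        rw [Finset.mul_sum]; exact Finset.sum_congr rfl fun k _ => by ring
      rw [hx, h4, h3]
      ring
    rw [h1]
    refine add_mem (p_mem _ _ (F3_p hp)) (sum_mem fun k hk => p_mem _ _ (hP _ _ ?_))
    have := (Finset.mem_Ioo.mp hk).1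
    omega
  have h := mem_Mspan (S := S) (F := F3 p c x y) (show i < p by omega) (show j < p by omega)
  rwa [F3_eq hij] at h

theorem F3_l (hp : 0 < p) {c : ℕ → S} {x y : K} {A : Subalgebra S K} (hxA : x ∈ A) (hyA : y ∈ A)
    (hA : ∀ z ∈ A, ∃ c : ℕ → ℕ → S, z = ∑ j ∈ Finset.range p, ∑ k ∈ Finset.range p, algebraMap S K (c j k) * (x ^ j * y ^ k))
    {a b : S} {m m' : ℕ → S} (hx : x ^ p = p * (algebraMap S K a + ∑ k ∈ Finset.Ioo 0 p, algebraMap S K (m k) * x ^ k))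
    (hy : y ^ p = p * (algebraMap S K b + ∑ k ∈ Finset.Ioo 0 p, algebraMap S K (m' k) * y ^ k)) 
    (hc0 : (p : S) ∣ b - c 0) (hcp : (p : S) ∣ a - c p) {l : K} (u w : S) (hl : l = algebraMap S K u * x + algebraMap S K w * y)
    (hc : ∀ i < p, (p : S) ∣ u * c (i + 1) + w * c i) {j k : ℕ} (hj : j < p) (hk : k < p) :
    (p : K) ^ (if j + k = 0 then 2 else if j + k < p then 1 else 0) * (l ^ j * y ^ k) ∈ Mspan S p (F3 p c x y) := by
  have hP : ∀ i j, 0 < i + j → p * (x ^ i * y ^ j) ∈ Mspan S p (F3 p c x y) := fun i j h =>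
    F3_pP hp hxA hyA hA (A_of_rel hxA a m) (A_of_rel hyA b m') hx hy h
  split_ifs with h0 h1
  · obtain ⟨rfl, rfl⟩ : j = 0 ∧ k = 0 := by omega
    simpa using F3_p hp
  · rw [pow_one]
    exact homog _ u w hl (j + k) (fun i j' h => hP _ _ (by omega)) rfl
  · rw [pow_zero]
    by_cases h2 : j + k = p
    · rw [one_mul]
      obtain ⟨j, rfl⟩ : ∃ j', j = j' + 1 := ⟨j - 1, by omega⟩
      rw [pow_succ', mul_assoc]
      refine homog _ u w hl (j + k) (fun i j' h => ?_) rfl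
      have e1 := F3_Pp hp (c := c) hxA hyA hA hx hy hc0 hcp (i := i + 1) (j := j') (by omega)
      have e2 := F3_Pp hp (c := c) hxA hyA hA hx hy hc0 hcp (i := i) (j := j' + 1) (by omega)
      obtain ⟨d, hd⟩ := hc i (by omega)
      have hd' := congrArg (algebraMap S K) hd
      simp only [map_add, map_mul, map_natCast] at hd'
      have e3 := p_mem (Mspan S p (F3 p c x y)) d (F3_p hp)
      convert add_mem (add_mem (p_mem _ u e1) (p_mem _ w e2)) e3 using 1
      rw [hl]
      linear_combination p * hd'
    · refine homog _ u w hl (j + k) (fun i j' h => ?_) rfl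
      rw [one_mul]
      exact F3_P1 hp hxA hyA hA hx hy (by omega)
end

section
set_option linter.all false
open Polynomial

theorem res_zero {E Γ : Type*} [Field E] [LinearOrderedCommGroupWithZero Γ] (v : Valuation E Γ) (x : v.valuationSubring) :
    IsLocalRing.residue v.valuationSubring x = 0 ↔ v x < 1 := by
  rw [IsLocalRing.residue_eq_zero_iff, IsLocalRing.mem_maximalIdeal, mem_nonunits_iff]
  constructor
  · intro h
    refine lt_of_le_of_ne x.2 fun h1 => h ?_
    have h0 : (x : E) ≠ 0 := by rintro h0; rw [h0] at h1; simp at h1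
    refine IsUnit.of_mul_eq_one ⟨(x : E)⁻¹, ?_⟩ ?_
    · rw [Valuation.mem_valuationSubring_iff, map_inv₀, h1, inv_one]
    · ext; simp [h0]
  · intro h hu
    obtain ⟨y, hy⟩ := hu.exists_right_inv
    have h1 : v ((x : E) * y) = 1 := by
      have := congrArg Subtype.val hy
      simp only [MulMemClass.coe_mul, OneMemClass.coe_one] at this
      rw [this, map_one]
    rw [map_mul] at h1
    have : v (x : E) * v (y : E) < 1 := mul_lt_one_of_lt_of_le h y.2
    exact absurd h1 this.ne

/-- one variable interpolation -/
theorem poly_val {E Γ : Type*} [Field E] [LinearOrderedCommGroupWithZero Γ] (v : Valuation E Γ) {p : ℕ}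
    (c : ℕ → E) (hc : ∀ j < p, v (c j) ≤ 1) (z : ℕ → E) (hz : ∀ s < p, v (z s) ≤ 1)
    (hzz : ∀ s < p, ∀ s' < p, s ≠ s' → v (z s - z s') = 1)
    (h : ∀ s < p, v (∑ j ∈ Finset.range p, c j * z s ^ j) < 1) : ∀ j < p, v (c j) < 1 := by
  set O := v.valuationSubring
  set r := IsLocalRing.residue O
  let c' : Fin p → O := fun j => ⟨c j, hc j j.2⟩
  let z' : Fin p → O := fun j => ⟨z j, hz j j.2⟩
  let P : (IsLocalRing.ResidueField O)[X] := ∑ j : Fin p, C (r (c' j)) * X ^ (j : ℕ)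
  have hinj : Function.Injective (fun s => r (z' s)) := by
    intro s s' hs
    by_contra hne
    have h1 : r (z' s - z' s') = 0 := by rw [map_sub, sub_eq_zero]; exact hs
    have h2 := (res_zero v _).mp h1
    have h3 := hzz s s.2 s' s'.2 (fun h => hne (Fin.ext h))
    exact absurd h3 h2.ne
  have hP : P = 0 := by
    by_cases hp : p = 0
    · subst hp; simp [P]
    apply eq_zero_of_natDegree_lt_card_of_eval_eq_zero P hinj
    · intro s
      have h1 : P.eval (r (z' s)) = r (∑ j : Fin p, c' j * z' s ^ (j : ℕ)) := by
        simp [P, eval_finset_sum]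
      rw [h1, res_zero]
      have := h s s.2
      rw [Finset.sum_range] at this
      convert this using 2
      simp [c', z']
    · rw [Fintype.card_fin]
      refine lt_of_le_of_lt (natDegree_sum_le_of_forall_le _ _ (n := p - 1) fun j _ => ?_) (by omega)
      exact (natDegree_C_mul_X_pow_le _ _).trans (by omega)
  intro j hj
  have h1 : P.coeff j = r (c' ⟨j, hj⟩) := by
    simp only [P, finset_sum_coeff, coeff_C_mul, coeff_X_pow]
    rw [Finset.sum_eq_single ⟨j, hj⟩]
    · simp
    · intro b _ hb
      rw [if_neg (fun h => hb (Fin.ext h.symm)), mul_zero]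
    · simp
  rw [hP, coeff_zero] at h1
  exact (res_zero v _).mp h1.symm

/-- irreducibility -/
theorem irr_core {S : Type*} [CommRing S] [IsDomain S] [IsNoetherianRing S]
    {E : Type*} [Field E] [Algebra S E]
    {p : ℕ} (hp : p.Prime) (hpS : Prime (p : S))
    {Γ : Type*} [LinearOrderedCommGroupWithZero Γ] {v : Valuation E Γ} (hv : GoodVal S p v)
    {a b : S} (hb : ¬ (p : S) ∣ b) (hno : ∀ c d : S, ¬ (p : S) ∣ d → ¬ (p : S) ∣ d ^ p * a - c ^ p * b)
    (s : ℕ → S) {t : E} (ht1 : v t ≤ 1) (ht : v (algebraMap S E b * t ^ p - algebraMap S E a) < 1)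
    (h : v (∑ j ∈ Finset.range p, algebraMap S E (s j) * t ^ j) < 1) : ∀ j < p, (p : S) ∣ s j := by
  set O := v.valuationSubring
  set r := IsLocalRing.residue O
  set I := Ideal.span {(p : S)} with hI
  haveI hIp : I.IsPrime := (Ideal.span_singleton_prime hpS.ne_zero).mpr hpS
  let i0 : S →+* O := (algebraMap S E).codRestrict O (fun s => hv.le_one s)
  have hi0 : ∀ s, r (i0 s) = 0 ↔ (p : S) ∣ s := fun s => by
    rw [res_zero]; exact hv.lt_one_iff s
  let i1 : S ⧸ I →+* IsLocalRing.ResidueField O := Ideal.Quotient.lift I (r.comp i0) (by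
    intro a ha
    exact (hi0 a).mpr (Ideal.mem_span_singleton.mp ha))
  have hi1 : Function.Injective i1 := by
    rw [injective_iff_map_eq_zero]
    intro a ha
    obtain ⟨a, rfl⟩ := Ideal.Quotient.mk_surjective a
    rw [Ideal.Quotient.eq_zero_iff_mem, Ideal.mem_span_singleton]
    exact (hi0 a).mp (by simpa [i1] using ha)
  let κ := FractionRing (S ⧸ I)
  let i2 : κ →+* IsLocalRing.ResidueField O := IsFractionRing.lift hi1
  have hi2 : ∀ s : S, i2 (algebraMap (S ⧸ I) κ (Ideal.Quotient.mk I s)) = r (i0 s) := by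
    intro s
    have : i2 (algebraMap (S ⧸ I) κ (Ideal.Quotient.mk I s)) = i1 (Ideal.Quotient.mk I s) := IsFractionRing.lift_algebraMap hi1 _
    rw [this]
    simp [i1]
  let q : S → κ := fun s => algebraMap (S ⧸ I) κ (Ideal.Quotient.mk I s)
  have hq0 : ∀ s, q s = 0 ↔ (p : S) ∣ s := by
    intro s
    rw [← hi0, ← hi2]
    exact (map_eq_zero i2).symm
  let t' : O := ⟨t, ht1⟩
  have hbq : q b ≠ 0 := fun h => hb ((hq0 b).mp h)
  have htq : i2 (q b) * r t' ^ p = i2 (q a) := by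
    have h1 : r (i0 b * t' ^ p - i0 a) = 0 := by
      rw [res_zero]; exact ht
    rw [map_sub, sub_eq_zero, map_mul, map_pow] at h1
    rw [hi2, hi2, h1]
  have hirr : Irreducible (X ^ p - C (q a / q b)) := by
    apply X_pow_sub_C_irreducible_of_prime hp
    intro u hu
    obtain ⟨c, d, hd, rfl⟩ := IsFractionRing.div_surjective (A := S ⧸ I) u
    obtain ⟨c, rfl⟩ := Ideal.Quotient.mk_surjective c
    obtain ⟨d, rfl⟩ := Ideal.Quotient.mk_surjective d
    have hd0 : q d ≠ 0 := by
      intro h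
      have := (map_eq_zero_iff _ (IsFractionRing.injective (S ⧸ I) κ)).mp h
      exact nonZeroDivisors.ne_zero hd this
    have hu' : (q c / q d) ^ p = q a / q b := hu
    refine hno c d (fun h => hd0 ((hq0 d).mpr h)) ((hq0 _).mp ?_)
    have : q (d ^ p * a - c ^ p * b) = q d ^ p * q a - q c ^ p * q b := by simp [q]
    rw [this]
    rw [div_pow, div_eq_div_iff (pow_ne_zero _ hd0) hbq] at hu'
    linear_combination -hu'
  let P : κ[X] := ∑ j : Fin p, C (q (s j)) * X ^ (j : ℕ)
  have hPev : P.eval₂ i2 (r t') = 0 := by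
    have h1 : P.eval₂ i2 (r t') = r (∑ j : Fin p, i0 (s j) * t' ^ (j : ℕ)) := by
      simp only [P, eval₂_finset_sum, map_sum, map_mul, map_pow, eval₂_mul, eval₂_C, eval₂_X_pow]
      exact Finset.sum_congr rfl fun j _ => by rw [← hi2]
    rw [h1, res_zero]
    rw [Finset.sum_range] at h
    convert h using 2
    simp [t', i0]
    rfl
  have hqev : (X ^ p - C (q a / q b)).eval₂ i2 (r t') = 0 := by
    have hb' : i2 (q b) ≠ 0 := by rwa [Ne, map_eq_zero]
    simp only [eval₂_sub, eval₂_C, eval₂_X_pow, map_div₀]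
    field_simp
    linear_combination htq
  letI := i2.toAlgebra
  have hmin : X ^ p - C (q a / q b) = minpoly κ (r t') :=
    minpoly.eq_of_irreducible_of_monic hirr hqev (monic_X_pow_sub_C _ hp.ne_zero)
  have hdvd : X ^ p - C (q a / q b) ∣ P := by rw [hmin]; exact minpoly.dvd _ _ hPev
  have hP : P = 0 := by
    apply eq_zero_of_dvd_of_natDegree_lt hdvd
    rw [natDegree_X_pow_sub_C]
    have := hp.pos
    refine lt_of_le_of_lt (natDegree_sum_le_of_forall_le _ _ (n := p - 1) fun j _ => ?_) (by omega)
    exact (natDegree_C_mul_X_pow_le _ _).trans (by omega)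
  intro j hj
  have h1 : P.coeff j = q (s j) := by
    simp only [P, finset_sum_coeff, coeff_C_mul, coeff_X_pow]
    rw [Finset.sum_eq_single ⟨j, hj⟩]
    · simp
    · intro b _ hb
      rw [if_neg (fun h => hb (Fin.ext h.symm)), mul_zero]
    · simp
  rw [hP, coeff_zero] at h1
  exact (hq0 _).mp h1.symm
end

section
set_option linter.all false

section
variable {S : Type*} [CommRing S] [IsDomain S] [IsNoetherianRing S]
    {L : Type*} [Field L] [CharZero L] [Algebra S L] [IsFractionRing S L]
    {E : Type*} [Field E] [CharZero E] [Algebra S E] [Algebra L E] [IsScalarTower S L E]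
    {p : ℕ} {Γ : Type*} [LinearOrderedCommGroupWithZero Γ] {v : Valuation E Γ}

theorem lt_one_of_pow {x : Γ} {n : ℕ} (hn : n ≠ 0) (h : x ^ n < 1) : x < 1 := by
  by_contra h1
  exact absurd h (not_lt.mpr (one_le_pow₀ (not_lt.mp h1)))

theorem le_one_of_pow {x : Γ} {n : ℕ} (hn : n ≠ 0) (h : x ^ n ≤ 1) : x ≤ 1 := by
  by_contra h1
  exact absurd h (not_le.mpr (one_lt_pow₀ (not_le.mp h1) hn))

theorem mul_lt_d {a b d : Γ} (ha : a ≤ d) (hb : b < 1) (hd : 0 < d) : a * b < d :=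
  (mul_le_mul_left ha b).trans_lt (by
    have := mul_lt_mul_of_pos_left hb hd
    rwa [mul_one] at this)

theorem mul_lt1 {a b : Γ} (ha : a ≤ 1) (hb : b < 1) : a * b < 1 := mul_lt_d ha hb zero_lt_one

theorem vrel (hv : GoodVal S p v) (hp : p.Prime) {f h a : S} (hf : f = h ^ p + a * (p : S)) {w x : E}
    (hw : w ^ p = algebraMap S E f) (hx : x = w - algebraMap S E h) :
    v x < 1 ∧ v x ^ p ≤ v (p : E) ∧ (¬ (p : S) ∣ a → v x ^ p = v (p : E)) ∧
    ∃ q, v q ≤ 1 ∧ x ^ p = p * (algebraMap S E a - algebraMap S E h ^ (p - 1) * x + x ^ 2 * q) := by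
  obtain ⟨m, hm1, hm⟩ := rel_x (B := E) hp hf hw hx
  have hw1 : v w ≤ 1 := le_one_of_pow hp.ne_zero (by rw [← map_pow, hw]; exact hv.le_one _)
  have hx1 : v x ≤ 1 := by rw [hx]; exact v.map_sub_le hw1 (hv.le_one _)
  have hins : Finset.Ioo 0 p = insert 1 (Finset.Ioo 1 p) := by
    ext k; simp only [Finset.mem_Ioo, Finset.mem_insert]; have := hp.two_le; omega
  have hsum : ∑ k ∈ Finset.Ioo 0 p, algebraMap S E (m k) * x ^ k =
      - (algebraMap S E h ^ (p - 1) * x) + x ^ 2 * ∑ k ∈ Finset.Ioo 1 p, algebraMap S E (m k) * x ^ (k - 2) := by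
    rw [hins, Finset.sum_insert (by simp), hm1, Finset.mul_sum]
    congr 1
    · simp
    · refine Finset.sum_congr rfl fun k hk => ?_
      obtain ⟨k, rfl⟩ : ∃ k', k = k' + 2 := ⟨k - 2, by have := (Finset.mem_Ioo.mp hk).1; omega⟩
      rw [Nat.add_sub_cancel]; ring
  set q := ∑ k ∈ Finset.Ioo 1 p, algebraMap S E (m k) * x ^ (k - 2) with hq
  have hq1 : v q ≤ 1 := by
    refine v.map_sum_le fun k _ => ?_
    rw [map_mul, map_pow]
    exact mul_le_one' (hv.le_one _) (pow_le_one' hx1 _)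
  have hrel : x ^ p = p * (algebraMap S E a - algebraMap S E h ^ (p - 1) * x + x ^ 2 * q) := by
    rw [hm, hsum]; ring
  have hin : v (- (algebraMap S E h ^ (p - 1) * x) + x ^ 2 * q) ≤ v x := by
    refine v.map_add_le ?_ ?_
    · rw [Valuation.map_neg, map_mul, map_pow]
      exact mul_le_of_le_one_left' (pow_le_one' (hv.le_one _) _)
    · rw [map_mul, map_pow, pow_two, mul_assoc]
      exact mul_le_of_le_one_right' (mul_le_one' hx1 hq1)
  have hform : v x ^ p = v (p : E) * v (algebraMap S E a + (- (algebraMap S E h ^ (p - 1) * x) + x ^ 2 * q)) := by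
    rw [← map_pow, hrel, map_mul]; congr 2; ring
  have hle : v x ^ p ≤ v (p : E) := by
    rw [hform]
    exact mul_le_of_le_one_right' (v.map_add_le (hv.le_one _) (hin.trans hx1))
  have hlt : v x < 1 := lt_one_of_pow hp.ne_zero (hle.trans_lt hv.p_lt)
  refine ⟨hlt, hle, fun ha => ?_, q, hq1, hrel⟩
  rw [hform, v.map_add_eq_of_lt_left, hv.eq_one ha, mul_one]
  rw [hv.eq_one ha]
  exact hin.trans_lt hlt

theorem exp_mod (hv : GoodVal S p v) (hpS : Prime (p : S)) {θ : Γ} (hθ0 : 0 < θ) (hθ1 : θ < 1) {N : ℕ}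
    (hN : v (p : E) = θ ^ N) {c c' : L} (hc : c ≠ 0) (hc' : c' ≠ 0) {e e' : ℕ}
    (h : v (algebraMap L E c) * θ ^ e = v (algebraMap L E c') * θ ^ e') : e ≡ e' [MOD N] := by
  obtain ⟨m, n, h1, -⟩ := hv.vfac hpS hc
  obtain ⟨m', n', h2, -⟩ := hv.vfac hpS hc'
  rw [hN, ← pow_mul, ← pow_mul] at h1 h2
  have h3 : θ ^ (N * m + e + N * n') = θ ^ (N * m' + e' + N * n) := by
    simp only [pow_add]
    rw [← h1, ← h2]
    calc _ = (v (algebraMap L E c) * θ ^ e) * (θ ^ (N * n) * θ ^ (N * n')) := by ac_rfl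
      _ = _ := by rw [h]; ac_rfl
  have h4 := (pow_right_strictAnti₀ hθ0 hθ1).injective h3
  have h5 : (N * m + e + N * n') ≡ (N * m' + e' + N * n) [MOD N] := by rw [h4]
  unfold Nat.ModEq at h5 ⊢
  simpa [Nat.add_mod] using h5

theorem dom_ind (hv : GoodVal S p v) (hpS : Prime (p : S)) {θ : Γ} (hθ0 : 0 < θ) (hθ1 : θ < 1) {N : ℕ}
    (hN : v (p : E) = θ ^ N) {X Y : E} (e : ℕ → ℕ → ℕ) (he : ∀ j k, j < p → k < p → v (X ^ j * Y ^ k) = θ ^ e j k)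
    (hinj : ∀ j k j' k', j < p → k < p → j' < p → k' < p → e j k ≡ e j' k' [MOD N] → j = j' ∧ k = k')
    (c : ℕ → ℕ → L) (j₀ k₀ : ℕ) (hj₀ : j₀ < p) (hk₀ : k₀ < p) (hc : c j₀ k₀ ≠ 0)
    (hmax : ∀ j k, j < p → k < p → v (algebraMap L E (c j k)) * θ ^ e j k ≤ v (algebraMap L E (c j₀ k₀)) * θ ^ e j₀ k₀) :
    v (algebraMap L E (c j₀ k₀)) * θ ^ e j₀ k₀ ≤ v (∑ j ∈ Finset.range p, ∑ k ∈ Finset.range p,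
        algebraMap L E (c j k) * (X ^ j * Y ^ k)) := by
  classical
  rw [← Finset.sum_product' (f := fun j k => algebraMap L E (c j k) * (X ^ j * Y ^ k))]
  have hc' : v (algebraMap L E (c j₀ k₀)) ≠ 0 := by
    rw [Valuation.ne_zero_iff]; simpa using hc
  rw [v.map_sum_eq_of_lt (j := (j₀, k₀))]
  · rw [map_mul, he _ _ hj₀ hk₀]
  · simp [hj₀, hk₀]
  · rintro ⟨j, k⟩ hjk
    simp only [Finset.mem_sdiff, Finset.mem_product, Finset.mem_range, Finset.mem_singleton, Prod.mk.injEq] at hjk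
    obtain ⟨⟨hj, hk⟩, hne⟩ := hjk
    simp only [map_mul _ (algebraMap L E _), he _ _ hj hk, he _ _ hj₀ hk₀]
    refine lt_of_le_of_ne (hmax j k hj hk) fun heq => hne ?_
    have hcjk : c j k ≠ 0 := by
      intro h0
      rw [h0] at heq
      simp only [map_zero, zero_mul] at heq
      exact mul_ne_zero hc' (pow_ne_zero _ hθ0.ne') heq.symm
    exact hinj _ _ _ _ hj hk hj₀ hk₀ (exp_mod hv hpS hθ0 hθ1 hN hcjk hc heq)

theorem irr_coreL (hv : GoodVal S p v) (hp : p.Prime) (hpS : Prime (p : S))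
    {a b : S} (hb : ¬ (p : S) ∣ b) (hno : ∀ c d : S, ¬ (p : S) ∣ d → ¬ (p : S) ∣ d ^ p * a - c ^ p * b)
    (B : ℕ → L) (hB : ∀ j < p, v (algebraMap L E (B j)) ≤ 1) (j₀ : ℕ) (hj₀ : j₀ < p) (hB0 : v (algebraMap L E (B j₀)) = 1)
    {t : E} (ht1 : v t ≤ 1) (ht : v (algebraMap S E b * t ^ p - algebraMap S E a) < 1)
    (h : v (∑ j ∈ Finset.range p, algebraMap L E (B j) * t ^ j) < 1) : False := by
  have h1 : ∀ j, ∃ u s : S, ¬ (p : S) ∣ u ∧ (j < p → algebraMap S L u * B j = algebraMap S L s) := by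
    intro j
    by_cases hj : j < p
    · rcases hv.dichotomy hpS hp.ne_zero (B j) 0 with ⟨u, s, hu, h⟩ | h
      · exact ⟨u, s, hu, fun _ => by simpa using h⟩
      · rw [pow_zero] at h
        exact absurd h (not_le.mpr (mul_lt1 (hB j hj) hv.p_lt))
    · exact ⟨1, 0, fun h => hpS.not_unit (isUnit_of_dvd_one h), fun h => absurd h hj⟩
  choose u s hu hus using h1
  set τ := ∏ j ∈ Finset.range p, u j with hτ
  have hτp : ¬ (p : S) ∣ τ := by
    rw [hτ, hpS.dvd_finset_prod_iff]
    rintro ⟨x, _, hx⟩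
    exact hu _ hx
  have hτB : ∀ j < p, algebraMap S L τ * B j = algebraMap S L (s j * ∏ i ∈ (Finset.range p).erase j, u i) := by
    intro j hj
    rw [hτ, ← Finset.mul_prod_erase _ _ (Finset.mem_range.mpr hj), map_mul, map_mul, ← hus j hj]
    ring
  have hτE : ∀ j < p, algebraMap S E τ * algebraMap L E (B j) = algebraMap S E (s j * ∏ i ∈ (Finset.range p).erase j, u i) := by
    intro j hj
    have := congrArg (algebraMap L E) (hτB j hj)
    rwa [map_mul, ← IsScalarTower.algebraMap_apply, ← IsScalarTower.algebraMap_apply] at this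
  have h2 : v (∑ j ∈ Finset.range p, algebraMap S E (s j * ∏ i ∈ (Finset.range p).erase j, u i) * t ^ j) < 1 := by
    have : ∑ j ∈ Finset.range p, algebraMap S E (s j * ∏ i ∈ (Finset.range p).erase j, u i) * t ^ j =
        algebraMap S E τ * ∑ j ∈ Finset.range p, algebraMap L E (B j) * t ^ j := by
      rw [Finset.mul_sum]
      refine Finset.sum_congr rfl fun j hj => ?_
      rw [← hτE j (Finset.mem_range.mp hj)]; ring
    rw [this, map_mul]
    exact mul_lt1 (hv.le_one _) h
  have h3 := irr_core hp hpS hv hb hno _ ht1 ht h2 j₀ hj₀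
  have h4 := (hv.lt_one_iff _).mpr h3
  rw [← hτE j₀ hj₀, map_mul, hB0, hv.eq_one hτp, mul_one] at h4
  exact lt_irrefl _ h4

theorem ind_I (hv : GoodVal S p v) (hp : p.Prime) (hpS : Prime (p : S))
    {a b : S} (hb : ¬ (p : S) ∣ b) (hno : ∀ c d : S, ¬ (p : S) ∣ d → ¬ (p : S) ∣ d ^ p * a - c ^ p * b)
    {X Y : E} {g : Γ} (hX : v X = g) (hY : v Y = g) (hg0 : 0 < g) (hg1 : g < 1) (hg : v (p : E) = g ^ p)
    {εx εy : E} (hεx : v εx < 1) (hεy : v εy < 1) (hXp : X ^ p = p * (algebraMap S E a + εx)) 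
    (hYp : Y ^ p = p * (algebraMap S E b + εy))
    (c : ℕ → ℕ → L) (j₀ k₀ : ℕ) (hj₀ : j₀ < p) (hk₀ : k₀ < p) (hc : c j₀ k₀ ≠ 0)
    (hmax : ∀ j k, j < p → k < p → v (algebraMap L E (c j k)) * g ^ (j + k) ≤ v (algebraMap L E (c j₀ k₀)) * g ^ (j₀ + k₀)) :
    v (algebraMap L E (c j₀ k₀)) * g ^ (j₀ + k₀) ≤ v (∑ j ∈ Finset.range p, ∑ k ∈ Finset.range p,
        algebraMap L E (c j k) * (X ^ j * Y ^ k)) := by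
  classical
  by_contra hcon
  rw [not_le] at hcon
  have hpE : (p : E) ≠ 0 := by exact_mod_cast hp.ne_zero
  have hpL : (p : L) ≠ 0 := by exact_mod_cast hp.ne_zero
  have hY0 : Y ≠ 0 := by rintro rfl; rw [map_zero] at hY; exact hg0.ne hY
  have hc' : v (algebraMap L E (c j₀ k₀)) ≠ 0 := by rw [Valuation.ne_zero_iff]; simpa using hc
  set m := v (algebraMap L E (c j₀ k₀)) * g ^ (j₀ + k₀) with hm
  have hm0 : m ≠ 0 := mul_ne_zero hc' (pow_ne_zero _ hg0.ne')
  set s := (j₀ + k₀) % p with hs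
  have hsp : s < p := Nat.mod_lt _ hp.pos
  let n : ℕ → ℕ := fun j => if j ≤ s then 0 else 1
  let κ : ℕ → ℕ := fun j => if j ≤ s then s - j else s + p - j
  have hκ : ∀ j < p, κ j < p ∧ j + κ j = s + p * n j := by
    intro j hj; simp only [κ, n]; split_ifs <;> omega
  have hκ' : ∀ j k, j < p → k < p → j + k ≡ j₀ + k₀ [MOD p] → k = κ j := by
    intro j k hj hk h
    have h1 : (j + k) % p = s := h
    simp only [κ]
    rcases lt_or_ge (j + k) p with h2 | h2
    · rw [Nat.mod_eq_of_lt h2] at h1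
      split_ifs <;> omega
    · rw [Nat.mod_eq_sub_mod h2, Nat.mod_eq_of_lt (by omega)] at h1
      split_ifs <;> omega
  have hk₀' : k₀ = κ j₀ := hκ' _ _ hj₀ hk₀ rfl
  have hXY : ∀ j k, v (X ^ j * Y ^ k) = g ^ (j + k) := fun j k => by
    rw [map_mul, map_pow, map_pow, hX, hY, pow_add]
  -- step 1
  have step1 : v (∑ j ∈ Finset.range p, algebraMap L E (c j (κ j)) * (X ^ j * Y ^ κ j)) < m := by
    have e1 : ∑ j ∈ Finset.range p, algebraMap L E (c j (κ j)) * (X ^ j * Y ^ κ j) =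
        ∑ j ∈ Finset.range p, ∑ k ∈ Finset.range p, algebraMap L E (c j k) * (X ^ j * Y ^ k) - 
        ∑ j ∈ Finset.range p, ∑ k ∈ (Finset.range p).erase (κ j), algebraMap L E (c j k) * (X ^ j * Y ^ k) := by
      rw [← Finset.sum_sub_distrib]
      refine Finset.sum_congr rfl fun j hj => ?_
      rw [← Finset.add_sum_erase (Finset.range p) _ (Finset.mem_range.mpr (hκ j (Finset.mem_range.mp hj)).1)]
      ring
    rw [e1]
    refine v.map_sub_lt hcon (v.map_sum_lt hm0 fun j hj => v.map_sum_lt hm0 fun k hk => ?_)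
    have hj := Finset.mem_range.mp hj
    obtain ⟨hkne, hk⟩ := Finset.mem_erase.mp hk
    have hk := Finset.mem_range.mp hk
    rw [map_mul, hXY]
    refine lt_of_le_of_ne (hmax j k hj hk) fun heq => hkne (hκ' j k hj hk ?_)
    have hcjk : c j k ≠ 0 := by
      intro h0
      rw [h0] at heq
      simp only [map_zero, zero_mul] at heq
      exact hm0 heq.symm
    exact exp_mod hv hpS hg0 hg1 hg hcjk hc heq
  -- step 2
  set t := X / Y with ht
  have ht1 : v t = 1 := by rw [ht, map_div₀, hX, hY, div_self hg0.ne']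
  let D : ℕ → L := fun j => c j (κ j) * p ^ n j
  have hDv : ∀ j < p, v (algebraMap L E (D j)) * g ^ s = v (algebraMap L E (c j (κ j))) * g ^ (j + κ j) := by
    intro j hj
    simp only [D, map_mul, map_pow, map_natCast, hg]
    rw [(hκ j hj).2, pow_add, pow_mul]; ac_rfl
  have hD0 : v (algebraMap L E (D j₀)) * g ^ s = m := by rw [hDv _ hj₀, ← hk₀']
  have hDle : ∀ j < p, v (algebraMap L E (D j)) ≤ v (algebraMap L E (D j₀)) := by
    intro j hj
    apply le_of_mul_le_mul_right _ (pow_pos hg0 s)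
    rw [hDv j hj, hD0]
    exact hmax j _ hj (hκ j hj).1
  set d := v (algebraMap L E (D j₀)) with hd
  have hd0 : d ≠ 0 := by intro h; rw [h, zero_mul] at hD0; exact hm0 hD0.symm
  let δ : ℕ → E := fun j => (algebraMap S E b + εy) ^ n j - algebraMap S E b ^ n j
  have hδ : ∀ j, v (δ j) < 1 := by
    intro j; simp only [δ, n]; split_ifs
    · simp
    · simpa using hεy
  have e2 : ∑ j ∈ Finset.range p, algebraMap L E (c j (κ j)) * (X ^ j * Y ^ κ j) =
      Y ^ s * ∑ j ∈ Finset.range p, algebraMap L E (D j) * (algebraMap S E b ^ n j + δ j) * t ^ j := by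
    rw [Finset.mul_sum]
    refine Finset.sum_congr rfl fun j hj => ?_
    have hj := Finset.mem_range.mp hj
    have hX' : X = t * Y := by rw [ht]; field_simp
    have : X ^ j * Y ^ κ j = t ^ j * (Y ^ s * (p * (algebraMap S E b + εy)) ^ n j) := by
      rw [← hYp, ← pow_mul, ← pow_add, ← (hκ j hj).2, pow_add, hX', mul_pow]; ring
    rw [this]
    simp only [D, δ, map_mul, map_pow, map_natCast, mul_pow]
    ring
  have step2 : v (∑ j ∈ Finset.range p, algebraMap L E (D j) * (algebraMap S E b ^ n j + δ j) * t ^ j) < d := by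
    rw [e2, map_mul, map_pow, hY, ← hD0, mul_comm] at step1
    exact lt_of_mul_lt_mul_right step1 zero_le
  have step3 : v (∑ j ∈ Finset.range p, algebraMap L E (D j * algebraMap S L b ^ n j) * t ^ j) < d := by
    have e3 : ∑ j ∈ Finset.range p, algebraMap L E (D j * algebraMap S L b ^ n j) * t ^ j =
      ∑ j ∈ Finset.range p, algebraMap L E (D j) * (algebraMap S E b ^ n j + δ j) * t ^ j -
      ∑ j ∈ Finset.range p, algebraMap L E (D j) * δ j * t ^ j := by
      rw [← Finset.sum_sub_distrib]
      refine Finset.sum_congr rfl fun j hj => ?_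
      rw [map_mul (algebraMap L E) (D j), map_pow, ← IsScalarTower.algebraMap_apply]; ring
    rw [e3]
    refine v.map_sub_lt step2 (v.map_sum_lt hd0 fun j hj => ?_)
    rw [map_mul, map_mul, map_pow, ht1, one_pow, mul_one]
    exact mul_lt_d (hDle j (Finset.mem_range.mp hj)) (hδ j) (zero_lt_iff.mpr hd0)
  have hDne : D j₀ ≠ 0 := by intro h; rw [hd, h, map_zero, map_zero] at hd0; exact hd0 rfl
  have hbp : ∀ j, v (algebraMap L E (algebraMap S L b ^ n j)) = 1 := by
    intro j; rw [map_pow, ← IsScalarTower.algebraMap_apply, map_pow, hv.eq_one hb, one_pow]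
  refine irr_coreL hv hp hpS hb hno (fun j => D j * algebraMap S L b ^ n j / D j₀) ?_ j₀ hj₀ ?_ ht1.le ?_ ?_
  · intro j hj
    rw [map_div₀, map_div₀, map_mul, map_mul, hbp, mul_one]
    exact div_le_one_of_le₀ (hDle j hj) zero_le
  · rw [map_div₀, map_div₀, map_mul, map_mul, hbp, mul_one]
    exact div_self hd0
  · have e4 : algebraMap S E b * t ^ p - algebraMap S E a = p / Y ^ p * (algebraMap S E b * εx - algebraMap S E a * εy) := by
      rw [ht, div_pow, hXp, hYp]
      have : algebraMap S E b + εy ≠ 0 := by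
        intro h0; rw [h0, mul_zero] at hYp; exact pow_ne_zero _ hY0 hYp
      field_simp
      ring
    rw [e4, map_mul, map_div₀, map_pow, hY, hg, div_self (pow_ne_zero _ hg0.ne'), one_mul]
    apply v.map_sub_lt
    · rw [map_mul]; exact mul_lt1 (hv.le_one _) hεx
    · rw [map_mul]; exact mul_lt1 (hv.le_one _) hεy
  · have e5 : ∑ j ∈ Finset.range p, algebraMap L E (D j * algebraMap S L b ^ n j / D j₀) * t ^ j =
        (∑ j ∈ Finset.range p, algebraMap L E (D j * algebraMap S L b ^ n j) * t ^ j) / algebraMap L E (D j₀) := by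
      rw [Finset.sum_div]
      refine Finset.sum_congr rfl fun j hj => ?_
      rw [map_div₀]; ring
    rw [e5, map_div₀]
    exact (div_lt_one₀ (zero_lt_iff.mpr hd0)).mpr step3
end
end

section
set_option linter.all false

/-- the conclusion -/
def HasMCM (S : Type*) [CommRing S] [IsLocalRing S] (K : Type*) [Field K] [Algebra S K] : Prop :=
    ∃ M : Submodule S K, M ≠ ⊥ ∧ M.FG ∧
      (∀ r ∈ integralClosure S K, ∀ m ∈ M, r * m ∈ M) ∧
      (modDepth S M : WithBot ℕ∞) = ringKrullDim S

/-- bundled hypotheses -/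
structure Ctx {S : Type*} [CommRing S] [IsDomain S] [IsNoetherianRing S] [IsLocalRing S] [IsIntegrallyClosed S]
    (L : Type*) [Field L] [CharZero L] [Algebra S L] [IsFractionRing S L]
    {K : Type*} [Field K] [Algebra L K] [Algebra S K] [IsScalarTower S L K]
    {E : Type*} [Field E] [IsAlgClosed E] [Algebra S E] [Algebra L E] [Algebra K E]
    [IsScalarTower S L E] [IsScalarTower L K E]
    {Γ : Type*} [LinearOrderedCommGroupWithZero Γ] (v : Valuation E Γ)
    (p : ℕ) (f g h₁ h₂ a b : S) (ω μ : K) : Prop where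
  hp : p.Prime
  hp3 : 3 ≤ p
  hpS : Prime (p : S)
  hreg : ∃ s : Finset S, Ideal.span (s : Set S) = IsLocalRing.maximalIdeal S ∧
      (s.card : WithBot ℕ∞) = ringKrullDim S
  hf : f = h₁ ^ p + a * (p : S)
  hg : g = h₂ ^ p + b * (p : S)
  hfg : (¬IsUnit f ∧ ¬IsUnit g ∧ PaperSquarefree f ∧ PaperSquarefree g ∧ SatisfiesA1 f g) ∨
      (IsUnit f ∧ IsUnit g ∧ (∀ x : S, x ^ p ≠ f) ∧ (∀ x : S, x ^ p ≠ g))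
  hω : ω ^ p = algebraMap S K f
  hμ : μ ^ p = algebraMap S K g
  hKgen : Algebra.adjoin L ({ω, μ} : Set K) = ⊤
  hdeg : Module.finrank L K = p ^ 2
  hv : GoodVal S p v
  h1p : ¬ (p : S) ∣ h₁
  h2p : ¬ (p : S) ∣ h₂

variable {S : Type*} [CommRing S] [IsDomain S] [IsNoetherianRing S] [IsLocalRing S] [IsIntegrallyClosed S]
    {L : Type*} [Field L] [CharZero L] [Algebra S L] [IsFractionRing S L]
    {K : Type*} [Field K] [Algebra L K] [Algebra S K] [IsScalarTower S L K]
    {E : Type*} [Field E] [IsAlgClosed E] [Algebra S E] [Algebra L E] [Algebra K E]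
    [IsScalarTower S L E] [IsScalarTower L K E]
    {Γ : Type*} [LinearOrderedCommGroupWithZero Γ] {v : Valuation E Γ}
    {p : ℕ} {f g h₁ h₂ a b : S} {ω μ : K}

theorem Ctx.symm (C : Ctx L v p f g h₁ h₂ a b ω μ) : Ctx L v p g f h₂ h₁ b a μ ω where
  hp := C.hp
  hp3 := C.hp3
  hpS := C.hpS
  hreg := C.hreg
  hf := C.hg
  hg := C.hf
  hfg := by
    rcases C.hfg with ⟨h1, h2, h3, h4, h5⟩ | ⟨h1, h2, h3, h4⟩
    · exact Or.inl ⟨h2, h1, h4, h3, fun P hP h => h5 P hP h.symm⟩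
    · exact Or.inr ⟨h2, h1, h4, h3⟩
  hω := C.hμ
  hμ := C.hω
  hKgen := by rw [Set.pair_comm]; exact C.hKgen
  hdeg := C.hdeg
  hv := C.hv
  h1p := C.h2p
  h2p := C.h1p

theorem Ctx.xA (C : Ctx L v p f g h₁ h₂ a b ω μ) : ω - algebraMap S K h₁ ∈ Algebra.adjoin S ({ω, μ} : Set K) :=
  sub_mem (Algebra.subset_adjoin (by simp)) (Subalgebra.algebraMap_mem _ _)
theorem Ctx.yA (C : Ctx L v p f g h₁ h₂ a b ω μ) : μ - algebraMap S K h₂ ∈ Algebra.adjoin S ({ω, μ} : Set K) :=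
  sub_mem (Algebra.subset_adjoin (by simp)) (Subalgebra.algebraMap_mem _ _)

theorem Ctx.span (C : Ctx L v p f g h₁ h₂ a b ω μ) : ∀ z ∈ Algebra.adjoin S ({ω, μ} : Set K), ∃ c : ℕ → ℕ → S, 
    z = ∑ j ∈ Finset.range p, ∑ k ∈ Finset.range p, algebraMap S K (c j k) * ((ω - algebraMap S K h₁) ^ j * (μ - algebraMap S K h₂) ^ k) := by
  intro z hz
  refine span2 C.hp.pos h₂ g (algebraMap S K h₁) (algebraMap S K f) ?_ (Subalgebra.algebraMap_mem _ _) (Subalgebra.algebraMap_mem _ _) ?_ ?_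
  · rw [sub_add_cancel, C.hμ]
  · rw [sub_add_cancel, C.hω]
  · refine Algebra.adjoin_le ?_ hz
    rintro w (h | h)
    · have : w = (ω - algebraMap S K h₁) + algebraMap S K h₁ := by rw [h]; ring
      rw [this]
      exact add_mem (Algebra.subset_adjoin (by simp)) (Subalgebra.algebraMap_mem _ _)
    · have : w = (μ - algebraMap S K h₂) + algebraMap S K h₂ := by rw [Set.mem_singleton_iff.mp h]; ring
      rw [this]
      exact add_mem (Algebra.subset_adjoin (by simp)) (Subalgebra.algebraMap_mem _ _)

theorem Ctx.spanL (C : Ctx L v p f g h₁ h₂ a b ω μ) {u w : S} (hu : u ≠ 0) {l : K}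
    (hl : l = algebraMap S K u * (ω - algebraMap S K h₁) + algebraMap S K w * (μ - algebraMap S K h₂)) (z : K) : 
    ∃ c : ℕ → ℕ → L, 
    z = ∑ j ∈ Finset.range p, ∑ k ∈ Finset.range p, algebraMap L K (c j k) * (l ^ j * (μ - algebraMap S K h₂) ^ k) := by
  have hT := IsScalarTower.algebraMap_apply S L K
  have hyA : (μ - algebraMap S K h₂) ∈ Algebra.adjoin L {(μ - algebraMap S K h₂)} := Algebra.subset_adjoin rfl
  have hSA : ∀ (s : S) (T : Set K), algebraMap S K s ∈ Algebra.adjoin L T := fun s T => by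
    rw [hT]; exact Subalgebra.algebraMap_mem _ _
  refine span2 C.hp.pos (algebraMap S L h₂) (algebraMap S L g) (algebraMap S K u * algebraMap S K h₁ - algebraMap S K w * (μ - algebraMap S K h₂)) 
    (algebraMap S K (u ^ p * f)) ?_ (sub_mem (mul_mem (hSA _ _) (hSA _ _)) (mul_mem (hSA _ _) hyA)) (hSA _ _) ?_ ?_
  · rw [← hT, sub_add_cancel, C.hμ, hT]
  · rw [hl, map_mul, map_pow, ← C.hω]; ring
  · have : z ∈ Algebra.adjoin L ({ω, μ} : Set K) := by rw [C.hKgen]; trivial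
    refine Algebra.adjoin_le ?_ this
    have hlA : l ∈ Algebra.adjoin L {l, (μ - algebraMap S K h₂)} := Algebra.subset_adjoin (by simp)
    have hyA : (μ - algebraMap S K h₂) ∈ Algebra.adjoin L {l, (μ - algebraMap S K h₂)} := Algebra.subset_adjoin (by simp)
    rintro t (h | h)
    · have huK : algebraMap S L u ≠ 0 := fun h => hu (IsFractionRing.injective S L (by rw [h, map_zero]))
      have huK' : algebraMap S K u ≠ 0 := by rw [hT]; simpa using huK
      have : t = algebraMap L K (algebraMap S L u)⁻¹ * (l + (algebraMap S K u * algebraMap S K h₁ - algebraMap S K w * (μ - algebraMap S K h₂))) := by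
        rw [h, map_inv₀, ← hT, hl]; field_simp; ring
      rw [this]
      exact mul_mem (Subalgebra.algebraMap_mem _ _) (add_mem hlA (sub_mem (mul_mem (hSA _ _) (hSA _ _)) (mul_mem (hSA _ _) hyA)))
    · have : t = (μ - algebraMap S K h₂) + algebraMap S K h₂ := by rw [Set.mem_singleton_iff.mp h]; ring
      rw [this]
      exact add_mem hyA (hSA _ _)

theorem Ctx.charE (C : Ctx L v p f g h₁ h₂ a b ω μ) : CharZero E := charZero_of_injective_algebraMap (algebraMap L E).injective

theorem hom_S (φ : K →ₐ[L] E) (s : S) : φ (algebraMap S K s) = algebraMap S E s := by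
  rw [IsScalarTower.algebraMap_apply S L K, AlgHom.commutes, ← IsScalarTower.algebraMap_apply]

theorem F1_A {A : Subalgebra S K} {x y : K} (hx : x ∈ A) (hy : y ∈ A) (j k : ℕ) : F1 p x y j k ∈ A := by
  unfold F1
  exact mul_mem (pow_mem (natCast_mem _ _) _) (mul_mem (pow_mem hx _) (pow_mem hy _))

theorem F3_A {A : Subalgebra S K} {x y : K} (hx : x ∈ A) (hy : y ∈ A) (c : ℕ → S) (j k : ℕ) : F3 p c x y j k ∈ A := by
  unfold F3
  have h1 := mul_mem (pow_mem hx j) (pow_mem hy k)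
  split_ifs
  · exact sub_mem h1 (mul_mem (natCast_mem _ _) (A.algebraMap_mem _))
  all_goals exact mul_mem (pow_mem (natCast_mem _ _) _) h1

/-- Common part of cases I and II -/
theorem case12 (C : Ctx L v p f g h₁ h₂ a b ω μ) (φ : K →ₐ[L] E) {u w : S} (hu : u ≠ 0) {l : K}
    (hl : l = algebraMap S K u * (ω - algebraMap S K h₁) + algebraMap S K w * (μ - algebraMap S K h₂))
    {γ : Γ} (hγ1 : γ < 1) (hγx : v (φ (ω - algebraMap S K h₁)) = γ) (hγy : v (φ (μ - algebraMap S K h₂)) = γ)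
    (hγp : v (p : E) = γ ^ p) (G : ℕ → ℕ → Γ)
    (hInd : ∀ c : ℕ → ℕ → L, ∀ j₀ k₀, j₀ < p → k₀ < p → c j₀ k₀ ≠ 0 →
      (∀ j k, j < p → k < p → v (algebraMap L E (c j k)) * G j k ≤ v (algebraMap L E (c j₀ k₀)) * G j₀ k₀) →
      v (algebraMap L E (c j₀ k₀)) * G j₀ k₀ ≤ v (∑ j ∈ Finset.range p, ∑ k ∈ Finset.range p,
        algebraMap L E (c j k) * (φ l ^ j * φ (μ - algebraMap S K h₂) ^ k)))
    (hD3 : ∀ j k, j < p → k < p → γ ^ (p - 1 + p) < v (p : E) ^ (if j + k < p - 1 then 1 else 0) * G j k) : HasMCM S K := by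
  haveI := C.charE
  haveI : CharZero K := charZero_of_injective_algebraMap (algebraMap L K).injective
  set x := ω - algebraMap S K h₁ with hx
  set y := μ - algebraMap S K h₂ with hy
  obtain ⟨m, -, hm⟩ := rel_x (B := K) C.hp C.hf C.hω hx
  obtain ⟨m', -, hm'⟩ := rel_x (B := K) C.hp C.hg C.hμ hy
  have hγ0 : 0 < γ := by
    rw [zero_lt_iff]; rintro rfl
    rw [zero_pow C.hp.ne_zero, Valuation.zero_iff] at hγp
    exact C.hp.ne_zero (by exact_mod_cast hγp)
  refine assembly C.hp C.hpS C.hreg C.hfg C.hω C.hμ C.hKgen C.hdeg C.hv (F1 p x y) (fun j k _ _ => F1_A C.xA C.yA j k) ?_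
    {φ} (γ ^ (p - 1)) ?_ ?_
  · intro z hz
    rw [pow_two, mul_assoc]
    exact pn_mem _ (F1_pA C.span hz)
  · intro φ' hφ j k hj hk
    rw [Set.mem_singleton_iff.mp hφ]
    unfold F1
    simp only [map_mul, map_pow, map_natCast, hγx, hγy, hγp, ← pow_add, ← pow_mul]
    apply pow_le_pow_right_of_le_one' hγ1.le
    split_ifs <;> omega
  · intro z hz
    refine local_crit C.hp C.hpS C.hv _ {φ} (γ ^ (p - 1)) (C.spanL hu hl) G (fun j k => if j + k < p - 1 then 1 else 0) 
      ?_ ?_ ?_ z hz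
    · intro c j₀ k₀ hj hk hc hmax
      exact ⟨φ, rfl, hInd c j₀ k₀ hj hk hc hmax⟩
    · intro j k hj hk
      rw [hγp, ← pow_add, ← hγp]
      exact hD3 j k hj hk
    · intro j k hj hk
      split_ifs with h
      · rw [pow_one]
        refine F1_pA C.span (mul_mem (pow_mem ?_ _) (pow_mem C.yA _))
        rw [hl]
        exact add_mem (mul_mem (Subalgebra.algebraMap_mem _ _) C.xA) (mul_mem (Subalgebra.algebraMap_mem _ _) C.yA)
      · rw [pow_zero]
        refine homog _ u w hl (j + k) (fun i i' h => ?_) rfl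
        rw [one_mul]
        exact F1_P C.xA C.yA C.span (A_of_rel C.xA a m) (A_of_rel C.yA b m') hm hm' (by omega)

theorem Ctx.vx (C : Ctx L v p f g h₁ h₂ a b ω μ) (φ : K →ₐ[L] E) {X : E} (hX : X = φ (ω - algebraMap S K h₁)) :
    v X < 1 ∧ v X ^ p ≤ v (p : E) ∧ (¬ (p : S) ∣ a → v X ^ p = v (p : E)) ∧
    ∃ q, v q ≤ 1 ∧ X ^ p = p * (algebraMap S E a - algebraMap S E h₁ ^ (p - 1) * X + X ^ 2 * q) := by
  haveI := C.charE
  refine vrel C.hv C.hp C.hf (w := φ ω) (x := X) ?_ ?_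
  · rw [← map_pow, C.hω, hom_S]
  · rw [hX, map_sub, hom_S]

theorem small_err (hv : GoodVal S p v) {h : S} {n : ℕ} {X q : E} (hX : v X < 1) (hq : v q ≤ 1) :
    v (- (algebraMap S E h ^ n * X) + X ^ 2 * q) < 1 := by
  refine v.map_add_lt ?_ ?_
  · rw [Valuation.map_neg, map_mul, map_pow]
    exact mul_lt1 (pow_le_one' (hv.le_one _) _) hX
  · rw [map_mul, map_pow, mul_comm]
    exact mul_lt1 hq (pow_lt_one' hX (by norm_num))

theorem caseI (C : Ctx L v p f g h₁ h₂ a b ω μ) (ha : ¬ (p : S) ∣ a) (hb : ¬ (p : S) ∣ b) 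
    (hno : ∀ c d : S, ¬ (p : S) ∣ d → ¬ (p : S) ∣ d ^ p * a - c ^ p * b) : HasMCM S K := by
  haveI := C.charE
  let φ : K →ₐ[L] E := IsScalarTower.toAlgHom L K E
  obtain ⟨hX1, -, hXp, q, hq, hXr⟩ := C.vx φ rfl
  obtain ⟨hY1, -, hYp, q', hq', hYr⟩ := C.symm.vx φ rfl
  set X := φ (ω - algebraMap S K h₁)
  set Y := φ (μ - algebraMap S K h₂)
  have hXY : v X = v Y := by
    apply (pow_left_inj₀ zero_le zero_le C.hp.ne_zero).mp
    rw [hXp ha, hYp hb]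
  have hY0 : 0 < v Y := by
    rw [zero_lt_iff]; intro h
    have := hYp hb
    rw [h, zero_pow C.hp.ne_zero] at this
    exact C.hv.p_ne C.hp.ne_zero this.symm
  refine case12 C φ (u := 1) (w := 0) one_ne_zero (l := ω - algebraMap S K h₁) (by simp) hY1 hXY rfl (hYp hb).symm
    (fun j k => v Y ^ (j + k)) ?_ ?_
  · intro c j₀ k₀ hj hk hc hmax
    refine ind_I C.hv C.hp C.hpS hb hno hXY rfl hY0 hY1 (hYp hb).symm (small_err C.hv (h := h₁) (n := p - 1) hX1 hq) (small_err C.hv (h := h₂) (n := p - 1) hY1 hq') ?_ ?_ c j₀ k₀ hj hk hc hmax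
    · rw [hXr]; ring
    · rw [hYr]; ring
  · intro j k hj hk
    rw [← hYp hb, ← pow_mul, ← pow_add]
    apply (pow_lt_pow_iff_right_of_lt_one₀ hY0 hY1).mpr
    split_ifs <;> omega

theorem val_l (C : Ctx L v p f g h₁ h₂ a b ω μ) (ha : ¬ (p : S) ∣ a) (hb : ¬ (p : S) ∣ b) {c d : S} 
    (hc : ¬ (p : S) ∣ c) (hd : ¬ (p : S) ∣ d) (hcd : (p : S) ∣ d ^ p * a - c ^ p * b) 
    (hne : ¬ (p : S) ∣ (d * h₁) ^ (p - 1) - (c * h₂) ^ (p - 1)) (φ : K →ₐ[L] E) {X Y : E}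
    (hX : X = φ (ω - algebraMap S K h₁)) (hY : Y = φ (μ - algebraMap S K h₂)) :
    v (algebraMap S E d * X - algebraMap S E c * Y) ^ p = v Y ^ (p + 1) := by
  haveI := C.charE
  have hp2 := C.hp3
  obtain ⟨hX1, -, hXp, q, hq, hXr⟩ := C.vx φ hX
  obtain ⟨hY1, -, hYp, q', hq', hYr⟩ := C.symm.vx φ hY
  have hXY : v X = v Y := by
    apply (pow_left_inj₀ zero_le zero_le C.hp.ne_zero).mp
    rw [hXp ha, hYp hb]
  have hY0 : 0 < v Y := by
    rw [zero_lt_iff]; intro h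
    have := hYp hb
    rw [h, zero_pow C.hp.ne_zero] at this
    exact C.hv.p_ne C.hp.ne_zero this.symm
  have hvp := hYp hb
  set A := algebraMap S E
  have hodd : (-1 : E) ^ p = -1 := (C.hp.odd_of_ne_two (by omega)).neg_one_pow
  have hle := C.hv.le_one
  set l := A d * X - A c * Y with hl
  -- expansion
  obtain ⟨r, hr, hexp⟩ : ∃ r, v r ≤ v Y ^ 2 ∧ l ^ p = p * (- (A d ^ p * A h₁ ^ (p - 1) * X - A c ^ p * A h₂ ^ (p - 1) * Y) + r) := by
    have h1 := add_pow_prime_eq C.hp (A d * X) (- (A c * Y))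
    set σ := ∑ k ∈ Finset.Ioo 0 p, (A d * X) ^ (k - 1) * (-(A c * Y)) ^ (p - k - 1) * ((p.choose k / p : ℕ) : E) with hσ
    have hσ1 : v σ ≤ 1 := by
      refine v.map_sum_le fun k _ => ?_
      have e : ((p.choose k / p : ℕ) : E) = A ((p.choose k / p : ℕ) : S) := by simp [A]
      rw [map_mul, map_mul, map_pow, map_pow, Valuation.map_neg, map_mul, map_mul, e]
      exact mul_le_one' (mul_le_one' (pow_le_one' (mul_le_one' (hle _) hX1.le) _) (pow_le_one' (mul_le_one' (hle _) hY1.le) _)) (hle _)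
    refine ⟨A (d ^ p * a - c ^ p * b) + A d ^ p * (X ^ 2 * q) - A c ^ p * (Y ^ 2 * q') - A d * X * (A c * Y) * σ, ?_, ?_⟩
    · refine v.map_sub_le (v.map_sub_le (v.map_add_le ?_ ?_) ?_) ?_
      · refine (C.hv.le_p hcd).trans ?_
        rw [← hvp]
        exact pow_le_pow_right_of_le_one' hY1.le (by omega)
      · rw [map_mul, map_mul, map_pow, map_pow, hXY]
        exact (mul_le_of_le_one_left' (pow_le_one' (hle _) _)).trans (mul_le_of_le_one_right' hq)
      · rw [map_mul, map_mul, map_pow, map_pow]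
        exact (mul_le_of_le_one_left' (pow_le_one' (hle _) _)).trans (mul_le_of_le_one_right' hq')
      · simp only [map_mul, hXY]
        refine (mul_le_of_le_one_right' hσ1).trans ?_
        rw [pow_two]
        exact mul_le_mul' (mul_le_of_le_one_left' (hle _)) (mul_le_of_le_one_left' (hle _))
    · have h2 : A d * X + - (A c * Y) = l := by rw [hl]; ring
      have h3 : (- (A c * Y)) ^ p = - (A c ^ p * Y ^ p) := by rw [neg_pow, hodd, mul_pow]; ring
      rw [h2, h3, mul_pow, hXr, hYr] at h1
      rw [h1]
      simp only [A, map_sub, map_mul, map_pow]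
      ring
  have hY2 : v Y ^ 2 < v Y := by
    have := (pow_lt_pow_iff_right_of_lt_one₀ hY0 hY1).mpr (show 1 < 2 by norm_num)
    rwa [pow_one] at this
  have hp1 : v Y ^ (p + 1) = v (p : E) * v Y := by rw [pow_succ, hvp]
  have hlY : v l < v Y := by
    have h1 : v l ^ p ≤ v Y ^ (p + 1) := by
      rw [← map_pow, hexp, map_mul, hp1]
      refine mul_le_mul_right (v.map_add_le ?_ (hr.trans hY2.le)) _
      rw [Valuation.map_neg]
      refine v.map_sub_le ?_ ?_
      · simp only [map_mul, map_pow, hXY]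
        exact mul_le_of_le_one_left' (mul_le_one' (pow_le_one' (hle _) _) (pow_le_one' (hle _) _))
      · simp only [map_mul, map_pow]
        exact mul_le_of_le_one_left' (mul_le_one' (pow_le_one' (hle _) _) (pow_le_one' (hle _) _))
    have h2 : v l ^ p < v Y ^ p := h1.trans_lt ((pow_lt_pow_iff_right_of_lt_one₀ hY0 hY1).mpr (by omega))
    exact lt_of_pow_lt_pow_left₀ p zero_le h2
  have hmain : v (A d ^ p * A h₁ ^ (p - 1) * X - A c ^ p * A h₂ ^ (p - 1) * Y) = v Y := by
    have e1 : A d * (A d ^ p * A h₁ ^ (p - 1) * X - A c ^ p * A h₂ ^ (p - 1) * Y) = 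
        A d ^ p * A h₁ ^ (p - 1) * l + A (d * c * ((d * h₁) ^ (p - 1) - (c * h₂) ^ (p - 1))) * Y := by
      obtain ⟨n, hn⟩ : ∃ n, p = n + 1 := ⟨p - 1, by omega⟩
      rw [hl, hn]
      simp only [A, map_sub, map_mul, map_pow, Nat.add_sub_cancel]
      ring
    have h2 : v (A (d * c * ((d * h₁) ^ (p - 1) - (c * h₂) ^ (p - 1)))) = 1 := by
      apply C.hv.eq_one
      intro h
      rcases C.hpS.dvd_or_dvd h with h | h
      · rcases C.hpS.dvd_or_dvd h with h | h
        · exact hd h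
        · exact hc h
      · exact hne h
    have h3 := congrArg v e1
    rw [map_mul, C.hv.eq_one hd, one_mul, v.map_add_eq_of_lt_right, map_mul, h2, one_mul] at h3
    · exact h3
    · rw [map_mul v (A _) Y, h2, one_mul]
      refine lt_of_le_of_lt ?_ hlY
      simp only [map_mul, map_pow]
      exact mul_le_of_le_one_left' (mul_le_one' (pow_le_one' (hle _) _) (pow_le_one' (hle _) _))
  rw [← map_pow, hexp, map_mul, v.map_add_eq_of_lt_left, Valuation.map_neg, hmain, hp1]
  rw [Valuation.map_neg, hmain]
  exact hr.trans_lt hY2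

theorem caseII (C : Ctx L v p f g h₁ h₂ a b ω μ) (ha : ¬ (p : S) ∣ a) (hb : ¬ (p : S) ∣ b) {c d : S} 
    (hc : ¬ (p : S) ∣ c) (hd : ¬ (p : S) ∣ d) (hcd : (p : S) ∣ d ^ p * a - c ^ p * b) 
    (hne : ¬ (p : S) ∣ (d * h₁) ^ (p - 1) - (c * h₂) ^ (p - 1)) : HasMCM S K := by
  haveI := C.charE
  have hp0 := C.hp.ne_zero
  have hp3 := C.hp3
  let φ : K →ₐ[L] E := IsScalarTower.toAlgHom L K E
  have hlv := val_l C ha hb hc hd hcd hne φ rfl rfl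
  obtain ⟨hX1, -, hXp, q, hq, hXr⟩ := C.vx φ rfl
  obtain ⟨hY1, -, hYp, q', hq', hYr⟩ := C.symm.vx φ rfl
  set X := φ (ω - algebraMap S K h₁) with hX
  set Y := φ (μ - algebraMap S K h₂) with hY
  have hXY : v X = v Y := by
    apply (pow_left_inj₀ zero_le zero_le C.hp.ne_zero).mp
    rw [hXp ha, hYp hb]
  obtain ⟨ρ, hρ⟩ := IsAlgClosed.exists_pow_nat_eq (p : E) (n := p ^ 2) (pow_pos C.hp.pos 2)
  set θ := v ρ with hθ
  have hθp : v (p : E) = θ ^ (p ^ 2) := by rw [← hρ, map_pow]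
  have hθ0 : 0 < θ := by
    rw [zero_lt_iff]; intro h
    rw [h, zero_pow (pow_ne_zero _ hp0)] at hθp
    exact C.hv.p_ne hp0 hθp
  have hθ1 : θ < 1 := lt_one_of_pow (n := p ^ 2) (pow_ne_zero _ hp0) (by rw [← hθp]; exact C.hv.p_lt)
  have hYθ : v Y = θ ^ p := by
    apply (pow_left_inj₀ zero_le zero_le hp0).mp
    rw [hYp hb, hθp, ← pow_mul, pow_two]
  have hlθ : v (algebraMap S E d * X - algebraMap S E c * Y) = θ ^ (p + 1) := by
    apply (pow_left_inj₀ zero_le zero_le hp0).mp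
    rw [hlv, hYθ, ← pow_mul, ← pow_mul, mul_comm]
  have hd0 : d ≠ 0 := by rintro rfl; exact hd (dvd_zero _)
  set l : K := algebraMap S K d * (ω - algebraMap S K h₁) + algebraMap S K (-c) * (μ - algebraMap S K h₂) with hl
  have hφl : φ l = algebraMap S E d * X - algebraMap S E c * Y := by
    rw [hl, map_add, map_mul, map_mul, hom_S, hom_S, ← hX, ← hY, map_neg]; ring
  refine case12 C φ hd0 (l := l) hl hY1 hXY rfl (hYp hb).symm
    (fun j k => θ ^ ((p + 1) * j + p * k)) ?_ ?_
  · intro c j₀ k₀ hj hk hc hmax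
    refine dom_ind C.hv C.hpS hθ0 hθ1 hθp (fun j k => (p + 1) * j + p * k) ?_ ?_ c j₀ k₀ hj hk hc hmax
    · intro j k hj hk
      rw [map_mul, map_pow, map_pow, hφl, hlθ, ← hY, hYθ, ← pow_mul, ← pow_mul, ← pow_add]
    · intro j k j' k' hj hk hj' hk' h
      have h1 : j ≡ j' [MOD p] := by
        have hh : (p+1)*j + p*k ≡ (p+1)*j' + p*k' [MOD p*p] := by rw [← pow_two]; exact h
        have := Nat.ModEq.of_mul_right p hh
        unfold Nat.ModEq at this ⊢
        simpa [Nat.add_mod, add_mul] using this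
      have h2 : j = j' := by
        unfold Nat.ModEq at h1; rwa [Nat.mod_eq_of_lt hj, Nat.mod_eq_of_lt hj'] at h1
      subst h2
      refine ⟨rfl, ?_⟩
      have h3 : p * k ≡ p * k' [MOD p * p] := by
        rw [pow_two] at h
        exact Nat.ModEq.add_left_cancel' _ h
      have h4 := Nat.ModEq.mul_left_cancel' hp0 h3
      unfold Nat.ModEq at h4; rwa [Nat.mod_eq_of_lt hk, Nat.mod_eq_of_lt hk'] at h4
  · intro j k hj hk
    rw [hYθ, hθp, ← pow_mul, ← pow_mul, ← pow_add]
    apply (pow_lt_pow_iff_right_of_lt_one₀ hθ0 hθ1).mpr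
    obtain ⟨n, rfl⟩ : ∃ n, p = n + 1 := ⟨p - 1, by omega⟩
    rw [Nat.add_sub_cancel]
    split_ifs with h
    · nlinarith
    · nlinarith
end

section
set_option linter.all false

theorem zeta_one {E Γ : Type*} [Field E] [LinearOrderedCommGroupWithZero Γ] (v : Valuation E Γ) {p : ℕ} (hp : p ≠ 0) {ε : E}
    (h : ε ^ p = 1) : v ε = 1 := by
  have h1 : v ε ^ p = 1 := by rw [← map_pow, h, map_one]
  exact (pow_left_inj₀ zero_le zero_le hp).mp (by rw [h1, one_pow])

theorem zgeom_le {E Γ : Type*} [Field E] [LinearOrderedCommGroupWithZero Γ] (v : Valuation E Γ) {ε : E} (h : v ε = 1) (n : ℕ) :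
    v (ε ^ n - 1) ≤ v (ε - 1) := by
  rw [← geom_sum_mul, map_mul]
  refine mul_le_of_le_one_left' (v.map_sum_le fun i _ => ?_)
  rw [map_pow, h, one_pow]

theorem zeta_sub1 {E Γ : Type*} [Field E] [LinearOrderedCommGroupWithZero Γ] (v : Valuation E Γ) {p : ℕ} (hp : p.Prime) {ζ : E}
    (hζ : IsPrimitiveRoot ζ p) {s : ℕ} (h0 : 0 < s) (hs : s < p) : v (ζ ^ s - 1) = v (ζ - 1) := by
  have h1 := zeta_one v hp.ne_zero hζ.pow_eq_one
  refine le_antisymm (zgeom_le v h1 s) ?_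
  have hco : Nat.Coprime s p := (hp.coprime_iff_not_dvd.mpr (Nat.not_dvd_of_pos_of_lt h0 hs)).symm
  obtain ⟨t, -, ht⟩ := Nat.exists_mul_mod_eq_one_of_coprime hco hp.one_lt
  have h2 : (ζ ^ s) ^ t = ζ := by
    rw [← pow_mul, ← Nat.div_add_mod (s * t) p, ht, pow_add, pow_mul, hζ.pow_eq_one, one_pow, one_mul, pow_one]
  conv_lhs => rw [← h2]
  exact zgeom_le v (by rw [map_pow, h1, one_pow]) t

theorem zeta_sub {E Γ : Type*} [Field E] [LinearOrderedCommGroupWithZero Γ] (v : Valuation E Γ) {p : ℕ} (hp : p.Prime) {ζ : E}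
    (hζ : IsPrimitiveRoot ζ p) {s t : ℕ} (hs : s < p) (ht : t < p) (hst : s ≠ t) : v (ζ ^ s - ζ ^ t) = v (ζ - 1) := by
  wlog h : t < s generalizing s t
  · rw [Valuation.map_sub_swap]; exact this ht hs hst.symm (by omega)
  have h1 := zeta_one v hp.ne_zero hζ.pow_eq_one
  obtain ⟨d, rfl⟩ := Nat.exists_eq_add_of_lt h
  have : ζ ^ (t + d + 1) - ζ ^ t = ζ ^ t * (ζ ^ (d + 1) - 1) := by ring
  rw [this, map_mul, map_pow, h1, one_pow, one_mul]
  exact zeta_sub1 v hp hζ (by omega) (by omega)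

theorem zeta_p {E Γ : Type*} [Field E] [LinearOrderedCommGroupWithZero Γ] (v : Valuation E Γ) {p : ℕ} (hp : p.Prime) {ζ : E}
    (hζ : IsPrimitiveRoot ζ p) : v (ζ - 1) ^ (p - 1) = v (p : E) := by
  obtain ⟨n, rfl⟩ : ∃ n, p = n + 1 := ⟨p - 1, by have := hp.pos; omega⟩
  have h := hζ.prod_one_sub_pow_eq_order
  have h2 : ((n + 1 : ℕ) : E) = ∏ k ∈ Finset.range n, (1 - ζ ^ (k + 1)) := by rw [h]; push_cast; ring
  rw [h2, map_prod, Nat.add_sub_cancel, Finset.prod_congr rfl (g := fun _ => v (ζ - 1)), Finset.prod_const, Finset.card_range]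
  intro k hk
  rw [Valuation.map_sub_swap]
  exact zeta_sub1 v hp hζ (by omega) (by have := Finset.mem_range.mp hk; omega)

theorem root_choice {E Γ : Type*} [Field E] [LinearOrderedCommGroupWithZero Γ] (v : Valuation E Γ) {p : ℕ} (hp : p.Prime) {ζ : E}
    (hζ : IsPrimitiveRoot ζ p) {w h : E} (H : v (w ^ p - h ^ p) < v (ζ - 1) ^ p) : ∃ ε, ε ^ p = 1 ∧ v (ε * w - h) < v (ζ - 1) := by
  by_contra hcon
  push Not at hcon
  rw [Valuation.map_sub_swap, hζ.pow_sub_pow_eq_prod_sub_mul _ _ hp.pos, map_prod] at H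
  refine absurd H (not_lt.mpr ?_)
  have : v (ζ - 1) ^ p = ∏ _x ∈ Polynomial.nthRootsFinset p (1 : E), v (ζ - 1) := by
    rw [Finset.prod_const, hζ.card_nthRootsFinset]
  rw [this]
  refine Finset.prod_le_prod' fun ε hε => ?_
  rw [Valuation.map_sub_swap v h]
  exact hcon ε ((Polynomial.mem_nthRootsFinset hp.pos _).mp hε)

section
variable {S : Type*} [CommRing S] [IsDomain S] [IsNoetherianRing S] [IsLocalRing S] [IsIntegrallyClosed S]
    {L : Type*} [Field L] [CharZero L] [Algebra S L] [IsFractionRing S L]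
    {K : Type*} [Field K] [Algebra L K] [Algebra S K] [IsScalarTower S L K]
    {E : Type*} [Field E] [IsAlgClosed E] [Algebra S E] [Algebra L E] [Algebra K E]
    [IsScalarTower S L E] [IsScalarTower L K E]
    {Γ : Type*} [LinearOrderedCommGroupWithZero Γ] {v : Valuation E Γ}
    {p : ℕ} {f g h₁ h₂ a b : S} {ω μ : K}

theorem Ctx.pi (C : Ctx L v p f g h₁ h₂ a b ω μ) {ζ : E} (hζ : IsPrimitiveRoot ζ p) :
    0 < v (ζ - 1) ∧ v (ζ - 1) < 1 := by
  haveI := C.charE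
  have h := zeta_p v C.hp hζ
  have hp1 : p - 1 ≠ 0 := by have := C.hp3; omega
  constructor
  · rw [zero_lt_iff]; intro h0
    rw [h0, zero_pow hp1] at h
    exact C.hv.p_ne C.hp.ne_zero h.symm
  · exact lt_one_of_pow hp1 (h ▸ C.hv.p_lt)

theorem Ctx.embed (C : Ctx L v p f g h₁ h₂ a b ω μ) {w m : E} (hw : w ^ p = algebraMap S E f) (hm : m ^ p = algebraMap S E g) :
    ∃ φ : K →ₐ[L] E, φ ω = w ∧ φ μ = m := by
  refine exists_embed C.hp.pos C.hdeg (f := algebraMap S L f) (g := algebraMap S L g) ?_ ?_ C.hKgen ?_ ?_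
  · rw [C.hω, IsScalarTower.algebraMap_apply S L K]
  · rw [C.hμ, IsScalarTower.algebraMap_apply S L K]
  · rw [hw, IsScalarTower.algebraMap_apply S L E]
  · rw [hm, IsScalarTower.algebraMap_apply S L E]

theorem Ctx.w0 (C : Ctx L v p f g h₁ h₂ a b ω μ) (ha : (p : S) ∣ a) {ζ : E} (hζ : IsPrimitiveRoot ζ p) :
    ∃ w : E, w ^ p = algebraMap S E f ∧ v w = 1 ∧ v (w - algebraMap S E h₁) < v (ζ - 1) := by
  obtain ⟨h0, h1⟩ := C.pi hζ
  have hw : (algebraMap K E ω) ^ p = algebraMap S E f := by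
    have := hom_S (IsScalarTower.toAlgHom L K E) f
    rw [← this, ← C.hω, map_pow]; rfl
  obtain ⟨ε, hε, hlt⟩ := root_choice v C.hp hζ (w := algebraMap K E ω) (h := algebraMap S E h₁) (by
    rw [hw, ← map_pow, ← map_sub, C.hf]
    refine (C.hv.le_pn (n := 2) ?_).trans_lt ?_
    · rw [add_sub_cancel_left, pow_two]; exact mul_dvd_mul ha dvd_rfl
    · rw [← zeta_p v C.hp hζ, ← pow_mul]
      exact (pow_lt_pow_iff_right_of_lt_one₀ h0 h1).mpr (by have := C.hp3; omega))
  refine ⟨_, ?_, ?_, hlt⟩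
  · rw [mul_pow, hε, hw, one_mul]
  · have : ε * algebraMap K E ω = (ε * algebraMap K E ω - algebraMap S E h₁) + algebraMap S E h₁ := by ring
    rw [this, Valuation.map_add_eq_of_lt_right, C.hv.eq_one C.h1p]
    rw [C.hv.eq_one C.h1p]; exact hlt.trans h1

theorem pts (hv : GoodVal S p v) (hp : p.Prime) {ζ : E} (hζ : IsPrimitiveRoot ζ p) (h0 : 0 < v (ζ - 1)) {h : S} {w : E} (hw1 : v w = 1)
    (hw : v (w - algebraMap S E h) < v (ζ - 1)) : 
    (∀ s, v (ζ ^ s * w - algebraMap S E h) ≤ v (ζ - 1)) ∧ 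
    (∀ s < p, ∀ s' < p, s ≠ s' → v ((ζ ^ s * w - algebraMap S E h) / (ζ - 1) - (ζ ^ s' * w - algebraMap S E h) / (ζ - 1)) = 1) := by
  have h1 := zeta_one v hp.ne_zero hζ.pow_eq_one
  constructor
  · intro s
    have : ζ ^ s * w - algebraMap S E h = ζ ^ s * (w - algebraMap S E h) + (ζ ^ s - 1) * algebraMap S E h := by ring
    rw [this]
    refine v.map_add_le ?_ ?_
    · rw [map_mul, map_pow, h1, one_pow, one_mul]; exact hw.le
    · rw [map_mul]
      exact mul_le_of_le_of_le_one (zgeom_le v h1 s) (hv.le_one _)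
  · intro s hs s' hs' hne
    rw [← sub_div, map_div₀, sub_sub_sub_cancel_right, ← sub_mul, map_mul, zeta_sub v hp hζ hs hs' hne, hw1, mul_one, div_self h0.ne']

theorem caseIV (C : Ctx L v p f g h₁ h₂ a b ω μ) (ha : (p : S) ∣ a) (hb : (p : S) ∣ b) : HasMCM S K := by
  haveI := C.charE
  haveI : CharZero K := charZero_of_injective_algebraMap (algebraMap L K).injective
  obtain ⟨ζ, hζ⟩ := exists_zeta E C.hp
  obtain ⟨h0, h1⟩ := C.pi hζ
  obtain ⟨w, hw, hw1, hwh⟩ := C.w0 ha hζ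
  obtain ⟨m, hm, hm1, hmh⟩ := C.symm.w0 hb hζ
  obtain ⟨hx1, hx2⟩ := pts C.hv C.hp hζ h0 hw1 hwh
  obtain ⟨hy1, hy2⟩ := pts C.hv C.hp hζ h0 hm1 hmh
  have hpp := zeta_p v C.hp hζ
  have hp3 := C.hp3
  have hπ0 : ζ - 1 ≠ 0 := by rw [← Valuation.ne_zero_iff v]; exact h0.ne'
  set π := v (ζ - 1) with hπ
  set x := ω - algebraMap S K h₁ with hx
  set y := μ - algebraMap S K h₂ with hy
  obtain ⟨n, -, hn⟩ := rel_x (B := K) C.hp C.hf C.hω hx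
  obtain ⟨n', -, hn'⟩ := rel_x (B := K) C.hp C.hg C.hμ hy
  have hrt : ∀ s, (ζ ^ s) ^ p = 1 := fun s => by rw [← pow_mul, mul_comm, pow_mul, hζ.pow_eq_one, one_pow]
  let Φ : Set (K →ₐ[L] E) := {φ | ∃ s t : ℕ, φ x = ζ ^ s * w - algebraMap S E h₁ ∧ φ y = ζ ^ t * m - algebraMap S E h₂}
  have hΦ : ∀ s t : ℕ, ∃ φ ∈ Φ, φ x = ζ ^ s * w - algebraMap S E h₁ ∧ φ y = ζ ^ t * m - algebraMap S E h₂ := by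
    intro s t
    obtain ⟨φ, h1, h2⟩ := C.embed (w := ζ ^ s * w) (m := ζ ^ t * m) (by rw [mul_pow, hrt, hw, one_mul]) (by rw [mul_pow, hrt, hm, one_mul])
    have := And.intro (show φ x = ζ ^ s * w - algebraMap S E h₁ by rw [hx, map_sub, h1, hom_S]) 
       (show φ y = ζ ^ t * m - algebraMap S E h₂ by rw [hy, map_sub, h2, hom_S])
    exact ⟨φ, ⟨s, t, this⟩, this⟩
  refine assembly C.hp C.hpS C.hreg C.hfg C.hω C.hμ C.hKgen C.hdeg C.hv (F3 p (fun _ => (0 : S)) x y) 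
    (fun j k _ _ => F3_A C.xA C.yA _ j k) (fun z hz => F3_pA C.hp.pos C.span hz) Φ (π ^ p) ?_ ?_
  · rintro φ ⟨s, t, hφx, hφy⟩ j k hj hk
    have hX : v (φ x) ≤ π := hφx ▸ hx1 s
    have hY : v (φ y) ≤ π := hφy ▸ hy1 t
    have hF : F3 p (fun _ => (0 : S)) x y j k = 
      (p : K) ^ (if j + k = 0 then 2 else if j + k < p then 1 else 0) * (x ^ j * y ^ k) := by
      unfold F3
      split_ifs with h1 h2 h3
      · omega
      · omega
      all_goals simp
    rw [hF]
    simp only [map_mul, map_pow, map_natCast]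
    rw [← hpp]
    calc _ ≤ (π ^ (p - 1)) ^ (if j + k = 0 then 2 else if j + k < p then 1 else 0) * (π ^ j * π ^ k) := by gcongr
      _ = π ^ ((p - 1) * (if j + k = 0 then 2 else if j + k < p then 1 else 0) + (j + k)) := by rw [← pow_mul, ← pow_add, ← pow_add]
      _ ≤ π ^ p := by
        apply pow_le_pow_right_of_le_one' h1.le
        split_ifs <;> omega
  · intro z hz
    refine local_crit C.hp C.hpS C.hv _ Φ (π ^ p) (C.spanL (u := 1) (w := 0) one_ne_zero (l := x) (by simp [hx])) (fun j k => π ^ (j + k))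
      (fun j k => if j + k = 0 then 2 else if j + k < p then 1 else 0) ?_ ?_ ?_ z hz
    · intro c j₀ k₀ hj hk hc hmax
      by_contra hcon
      push Not at hcon
      have hcE : algebraMap L E (c j₀ k₀) ≠ 0 := by simpa using hc
      set D := algebraMap L E (c j₀ k₀) * (ζ - 1) ^ (j₀ + k₀) with hD
      have hD0 : D ≠ 0 := mul_ne_zero hcE (pow_ne_zero _ hπ0)
      have hDv : v D = v (algebraMap L E (c j₀ k₀)) * π ^ (j₀ + k₀) := by rw [hD, map_mul, map_pow]
      have hDv0 : 0 < v D := by rw [zero_lt_iff, Valuation.ne_zero_iff]; exact hD0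
      let d : ℕ → ℕ → E := fun j k => algebraMap L E (c j k) * (ζ - 1) ^ (j + k) / D
      have hd : ∀ j < p, ∀ k < p, v (d j k) ≤ 1 := by
        intro j hj k hk
        simp only [d]
        rw [map_div₀, div_le_one₀ hDv0, hDv, map_mul, map_pow]
        exact hmax j k hj hk
      let X : ℕ → E := fun s => (ζ ^ s * w - algebraMap S E h₁) / (ζ - 1)
      let Y : ℕ → E := fun s => (ζ ^ s * m - algebraMap S E h₂) / (ζ - 1)
      have hX : ∀ s < p, v (X s) ≤ 1 := fun s _ => by simp only [X]; rw [map_div₀, div_le_one₀ h0]; exact hx1 s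
      have hY : ∀ s < p, v (Y s) ≤ 1 := fun s _ => by simp only [Y]; rw [map_div₀, div_le_one₀ h0]; exact hy1 s
      have key : ∀ s t, v (∑ j ∈ Finset.range p, (∑ k ∈ Finset.range p, d j k * Y t ^ k) * X s ^ j) < 1 := by
        intro s t
        obtain ⟨φ, hφ, hφx, hφy⟩ := hΦ s t
        have := hcon φ hφ
        rw [hφx, hφy, ← hDv] at this
        have e : (∑ j ∈ Finset.range p, (∑ k ∈ Finset.range p, d j k * Y t ^ k) * X s ^ j) = 
          (∑ j ∈ Finset.range p, ∑ k ∈ Finset.range p, algebraMap L E (c j k) * ((ζ ^ s * w - algebraMap S E h₁) ^ j * (ζ ^ t * m - algebraMap S E h₂) ^ k)) / D := by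
          rw [Finset.sum_div]
          refine Finset.sum_congr rfl fun j _ => ?_
          rw [Finset.sum_div, Finset.sum_mul]
          refine Finset.sum_congr rfl fun k _ => ?_
          simp only [d, X, Y, div_pow, pow_add]
          field_simp
        rw [e, map_div₀, div_lt_one₀ hDv0]
        exact this
      have k1 : ∀ t < p, v (∑ k ∈ Finset.range p, d j₀ k * Y t ^ k) < 1 := by
        intro t ht
        refine poly_val v (fun j => ∑ k ∈ Finset.range p, d j k * Y t ^ k) ?_ X hX hx2 (fun s _ => key s t) j₀ hj
        intro j hj
        refine v.map_sum_le fun k hk => ?_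
        rw [map_mul, map_pow]
        exact mul_le_one' (hd j hj k (Finset.mem_range.mp hk)) (pow_le_one' (hY t ht) _)
      have k2 := poly_val v (fun k => d j₀ k) (hd j₀ hj) Y hY hy2 k1 k₀ hk
      have : d j₀ k₀ = 1 := div_self hD0
      simp only [this, map_one] at k2
      exact lt_irrefl _ k2
    · intro j k hj hk
      rw [← hpp, ← pow_mul, ← pow_add, ← pow_add]
      apply (pow_lt_pow_iff_right_of_lt_one₀ h0 h1).mpr
      split_ifs <;> omega
    · intro j k hj hk
      exact F3_l C.hp.pos C.xA C.yA C.span hn hn' (c := fun _ => (0 : S)) (by simpa using hb) (by simpa using ha) 1 0 (by rw [map_one, map_zero, one_mul, zero_mul, add_zero]) (by simp) hj hk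
end
end

section
set_option linter.all false

variable {S : Type*} [CommRing S] [IsDomain S] [IsNoetherianRing S] [IsLocalRing S] [IsIntegrallyClosed S]
    {L : Type*} [Field L] [CharZero L] [Algebra S L] [IsFractionRing S L]
    {K : Type*} [Field K] [Algebra L K] [Algebra S K] [IsScalarTower S L K]
    {E : Type*} [Field E] [IsAlgClosed E] [Algebra S E] [Algebra L E] [Algebra K E]
    [IsScalarTower S L E] [IsScalarTower L K E]
    {Γ : Type*} [LinearOrderedCommGroupWithZero Γ] {v : Valuation E Γ}
    {p : ℕ} {f g h₁ h₂ a b : S} {ω μ : K}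

theorem binom_val (v : Valuation E Γ) {A B : E} (hA : v A ≤ 1) (hB : v B ≤ 1) (n : ℕ) :
    v (A * (A + B) ^ n - A ^ (n + 1) - n * A ^ n * B) ≤ v B ^ 2 := by
  have hn : ∀ n : ℕ, v (n : E) ≤ 1 := fun n => by
    induction n with
    | zero => simp
    | succ n ih => push_cast; exact v.map_add_le ih (by simp)
  induction n with
  | zero => simp
  | succ n ih =>
    have : A * (A + B) ^ (n + 1) - A ^ (n + 1 + 1) - (n + 1 : ℕ) * A ^ (n + 1) * B = 
      (A + B) * (A * (A + B) ^ n - A ^ (n + 1) - n * A ^ n * B) + n * A ^ n * B ^ 2 := by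
      push_cast; ring
    rw [this]
    refine v.map_add_le ?_ ?_
    · rw [map_mul]
      exact (mul_le_of_le_one_left' (v.map_add_le hA hB)).trans ih
    · rw [map_mul, map_mul, map_pow, map_pow]
      exact mul_le_of_le_one_left' (mul_le_one' (hn n) (pow_le_one' hA _))

theorem dom_sum (v : Valuation E Γ) (T : ℕ → ℕ → E) {j₀ k₀ : ℕ} (hj₀ : j₀ < p) (hk₀ : k₀ < p)
    (h : ∀ j k, j < p → k < p → (j, k) ≠ (j₀, k₀) → v (T j k) < v (T j₀ k₀)) (h0 : v (T j₀ k₀) ≠ 0) :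
    v (T j₀ k₀) ≤ v (∑ j ∈ Finset.range p, ∑ k ∈ Finset.range p, T j k) := by
  classical
  rw [← Finset.sum_product' (Finset.range p) (Finset.range p) T]
  have hm : (j₀, k₀) ∈ Finset.range p ×ˢ Finset.range p := by simp [hj₀, hk₀]
  rw [← Finset.add_sum_erase _ _ hm, Valuation.map_add_eq_of_lt_left]
  refine v.map_sum_lt h0 ?_
  rintro ⟨j, k⟩ hjk
  rw [Finset.mem_erase, Finset.mem_product, Finset.mem_range, Finset.mem_range] at hjk
  exact h j k hjk.2.1 hjk.2.2 hjk.1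

theorem setupIII (C : Ctx L v p f g h₁ h₂ a b ω μ) (hb : ¬ (p : S) ∣ b) (i₀ : ℕ)
    (hcong : (p : S) ∣ h₂ ^ p * a - i₀ * h₁ ^ p * b) {l : K}
    (hl : l = algebraMap S K h₂ * (ω - algebraMap S K h₁) + algebraMap S K (-(i₀ * h₁)) * (μ - algebraMap S K h₂)) :
    ∃ (θ : Γ) (φ₀ φ₁ : K →ₐ[L] E), 0 < θ ∧ θ < 1 ∧ v (p : E) = θ ^ (p * (p - 1)) ∧ 
     (∀ φ : K →ₐ[L] E, v (φ (ω - algebraMap S K h₁)) ≤ θ ^ (p - 1) ∧ v (φ (μ - algebraMap S K h₂)) = θ ^ (p - 1)) ∧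
     v (φ₀ l) < θ ^ p ∧ v (φ₁ l) = θ ^ p := by
  haveI := C.charE
  have hp3 := C.hp3
  have hpp0 : p * (p - 1) ≠ 0 := Nat.mul_ne_zero (by omega) (by omega)
  obtain ⟨ζ, hζ⟩ := exists_zeta E C.hp
  obtain ⟨h0, h1⟩ := C.pi hζ
  have hζp := zeta_p v C.hp hζ
  obtain ⟨ρ, hρ⟩ := IsAlgClosed.exists_pow_nat_eq (p : E) (Nat.pos_of_ne_zero hpp0)
  set θ := v ρ with hθ
  have hθp : v (p : E) = θ ^ (p * (p - 1)) := by rw [hθ, ← map_pow, hρ]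
  have hθ0 : 0 < θ := by
    rw [zero_lt_iff]; intro h
    rw [h, zero_pow hpp0] at hθp
    exact C.hv.p_ne C.hp.ne_zero hθp
  have hθ1 : θ < 1 := lt_one_of_pow hpp0 (hθp ▸ C.hv.p_lt)
  have hπθ : v (ζ - 1) = θ ^ p := by
    apply (pow_left_inj₀ zero_le zero_le (show p - 1 ≠ 0 by omega)).mp
    rw [hζp, hθp, pow_mul]
  have hxy : ∀ φ : K →ₐ[L] E, v (φ (ω - algebraMap S K h₁)) ≤ θ ^ (p - 1) ∧ v (φ (μ - algebraMap S K h₂)) = θ ^ (p - 1) := by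
    intro φ
    constructor
    · apply (pow_le_pow_iff_left₀ zero_le zero_le C.hp.ne_zero).mp
      rw [← pow_mul, mul_comm (p - 1), ← hθp]
      exact (C.vx φ rfl).2.1
    · apply (pow_left_inj₀ zero_le zero_le C.hp.ne_zero).mp
      rw [← pow_mul, mul_comm (p - 1), ← hθp]
      exact (C.symm.vx φ rfl).2.2.1 hb
  set ψ : K →ₐ[L] E := IsScalarTower.toAlgHom L K E
  have hw1 : ψ ω ^ p = algebraMap S E f := by rw [← map_pow, C.hω, hom_S]
  have hm1 : ψ μ ^ p = algebraMap S E g := by rw [← map_pow, C.hμ, hom_S]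
  have hh2 : v (algebraMap S E h₂) = 1 := C.hv.eq_one C.h2p
  obtain ⟨ε, hε, hlt⟩ := root_choice v C.hp hζ (w := ψ ω * algebraMap S E h₂ ^ i₀) (h := algebraMap S E h₁ * ψ μ ^ i₀) (by
    set A := algebraMap S E (h₂ ^ p)
    set B := algebraMap S E (b * p)
    have hAB : algebraMap S E g = A + B := by rw [C.hg, map_add]
    obtain ⟨r, hr⟩ := hcong
    have hr' := congrArg (algebraMap S E) hr
    simp only [map_sub, map_mul, map_pow, map_natCast] at hr'
    have e1 : A * ((ψ ω * algebraMap S E h₂ ^ i₀) ^ p - (algebraMap S E h₁ * ψ μ ^ i₀) ^ p) =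
      algebraMap S E (h₂ ^ (p * i₀) * r * p ^ 2) - algebraMap S E (h₁ ^ p) * (A * (A + B) ^ i₀ - A ^ (i₀ + 1) - i₀ * A ^ i₀ * B) := by
      have e2 : (ψ ω * algebraMap S E h₂ ^ i₀) ^ p - (algebraMap S E h₁ * ψ μ ^ i₀) ^ p = 
        algebraMap S E f * A ^ i₀ - algebraMap S E (h₁ ^ p) * (A + B) ^ i₀ := by
        rw [mul_pow, mul_pow, hw1, ← pow_mul _ i₀ p, ← pow_mul _ i₀ p, mul_comm i₀ p, pow_mul, pow_mul, hm1, hAB]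
        simp only [A, map_pow]
      have e3 : algebraMap S E (h₂ ^ (p * i₀) * r * p ^ 2) = A ^ i₀ * p * (p * algebraMap S E r) := by
        simp only [A, map_pow, map_mul, map_natCast, pow_mul]; ring
      rw [e2, e3, ← hr', C.hf]
      simp only [A, B, map_pow, map_mul, map_natCast, map_add]
      ring
    have hA1 : v A = 1 := by simp only [A]; rw [map_pow, map_pow, hh2, one_pow]
    have hBp : v B ≤ v (p : E) := C.hv.le_p (dvd_mul_left _ _)
    have e4 : v (A * ((ψ ω * algebraMap S E h₂ ^ i₀) ^ p - (algebraMap S E h₁ * ψ μ ^ i₀) ^ p)) ≤ v (p : E) ^ 2 := by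
      rw [e1]
      refine v.map_sub_le (C.hv.le_pn (dvd_mul_left _ _)) ?_
      rw [map_mul]
      refine (mul_le_of_le_one_left' (C.hv.le_one _)).trans ((binom_val v hA1.le (C.hv.le_one _) i₀).trans ?_)
      exact pow_le_pow_left' hBp 2
    rw [map_mul, hA1, one_mul] at e4
    refine e4.trans_lt ?_
    rw [hπθ, hθp, ← pow_mul, ← pow_mul]
    apply (pow_lt_pow_iff_right_of_lt_one₀ hθ0 hθ1).mpr
    rw [mul_assoc]
    exact Nat.mul_lt_mul_of_pos_left (by omega) (by omega))
  have hw0 : (ε * ψ ω) ^ p = algebraMap S E f := by rw [mul_pow, hε, one_mul, hw1]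
  obtain ⟨φ₀, hφ0, hφ0'⟩ := C.embed hw0 hm1
  obtain ⟨φ₁, hφ1, hφ1'⟩ := C.embed (w := ζ * (ε * ψ ω)) (by rw [mul_pow, hζ.pow_eq_one, one_mul, hw0]) hm1
  have hl0 : v (φ₀ l) < θ ^ p := by
    have e : algebraMap S E h₂ ^ i₀ * φ₀ l = algebraMap S E h₂ * (ε * (ψ ω * algebraMap S E h₂ ^ i₀) - algebraMap S E h₁ * ψ μ ^ i₀) +
      algebraMap S E h₁ * (algebraMap S E h₂ * (algebraMap S E h₂ + φ₀ (μ - algebraMap S K h₂)) ^ i₀ - algebraMap S E h₂ ^ (i₀ + 1) - i₀ * algebraMap S E h₂ ^ i₀ * φ₀ (μ - algebraMap S K h₂)) := by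
      rw [hl, map_add, map_mul, map_mul, map_sub, map_sub, hom_S, hom_S, hom_S, hφ0, hφ0', map_neg, map_mul, map_natCast, add_sub_cancel]
      ring
    have e2 : v (φ₀ l) = v (algebraMap S E h₂ ^ i₀ * φ₀ l) := by rw [map_mul, map_pow, hh2, one_pow, one_mul]
    rw [e2, e]
    refine v.map_add_lt ?_ ?_
    · rw [map_mul, hh2, one_mul, ← hπθ]; exact hlt
    · rw [map_mul]
      refine (mul_le_of_le_one_left' (C.hv.le_one _)).trans_lt ((binom_val v hh2.le ?_ i₀).trans_lt ?_)
      · rw [(hxy φ₀).2]; exact pow_le_one' hθ1.le _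
      · rw [(hxy φ₀).2, ← pow_mul]
        exact (pow_lt_pow_iff_right_of_lt_one₀ hθ0 hθ1).mpr (by omega)
  refine ⟨θ, φ₀, φ₁, hθ0, hθ1, hθp, hxy, hl0, ?_⟩
  have e : φ₁ l = algebraMap S E h₂ * (ζ - 1) * φ₀ ω + φ₀ l := by
    simp only [hl, map_add, map_mul, map_sub, hom_S, hφ0, hφ0', hφ1, hφ1']; ring
  have hv1 : v (φ₀ ω) = 1 := by
    have h2 := (C.vx φ₀ rfl).1
    have : φ₀ ω = φ₀ (ω - algebraMap S K h₁) + algebraMap S E h₁ := by rw [map_sub, hom_S]; ring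
    rw [this, Valuation.map_add_eq_of_lt_right, C.hv.eq_one C.h1p]
    rw [C.hv.eq_one C.h1p]; exact h2
  have hv2 : v (algebraMap S E h₂ * (ζ - 1) * φ₀ ω) = θ ^ p := by rw [map_mul, map_mul, hv1, hh2, hπθ, one_mul, mul_one]
  rw [e, Valuation.map_add_eq_of_lt_left, hv2]
  rw [hv2]; exact hl0

theorem indIII (hv : GoodVal S p v) (hpS : Prime (p : S)) (hp : p.Prime) {θ : Γ} (hθ0 : 0 < θ) (hθ1 : θ < 1) 
    (hθp : v (p : E) = θ ^ (p * (p - 1))) {l0 l1 Y0 Y1 : E} (hl0 : v l0 < θ ^ p) (hl1 : v l1 = θ ^ p) (hY0 : v Y0 = θ ^ (p - 1))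
    (hY1 : v Y1 = θ ^ (p - 1)) 
    (c : ℕ → ℕ → L) (j₀ k₀ : ℕ) (hj₀ : j₀ < p) (hk₀ : k₀ < p) (hc : c j₀ k₀ ≠ 0)
    (hmax : ∀ j k, j < p → k < p → v (algebraMap L E (c j k)) * θ ^ (p * j + (p - 1) * k) ≤ v (algebraMap L E (c j₀ k₀)) * θ ^ (p * j₀ + (p - 1) * k₀)) :
    v (algebraMap L E (c j₀ k₀)) * θ ^ (p * j₀ + (p - 1) * k₀) ≤ v (∑ j ∈ Finset.range p, ∑ k ∈ Finset.range p,
        algebraMap L E (c j k) * (l0 ^ j * Y0 ^ k)) ∨ 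
    v (algebraMap L E (c j₀ k₀)) * θ ^ (p * j₀ + (p - 1) * k₀) ≤ v (∑ j ∈ Finset.range p, ∑ k ∈ Finset.range p,
        algebraMap L E (c j k) * (l1 ^ j * Y1 ^ k)) := by
  haveI : CharZero E := charZero_of_injective_algebraMap (algebraMap L E).injective
  obtain ⟨q, rfl⟩ : ∃ q, p = q + 1 := ⟨p - 1, by have := hp.pos; omega⟩
  simp only [Nat.add_sub_cancel] at *
  have hq0 : q ≠ 0 := by rintro rfl; exact hp.ne_one rfl
  have hcE : v (algebraMap L E (c j₀ k₀)) ≠ 0 := by rw [Valuation.ne_zero_iff]; simpa using hc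
  have hpos : 0 < v (algebraMap L E (c j₀ k₀)) * θ ^ ((q + 1) * j₀ + q * k₀) := by
    rw [zero_lt_iff]; exact mul_ne_zero hcE (pow_pos hθ0 _).ne'
  -- exponent comparison
  have hexp : ∀ j k, j < q + 1 → k < q + 1 → v (algebraMap L E (c j k)) * θ ^ ((q + 1) * j + q * k) = v (algebraMap L E (c j₀ k₀)) * θ ^ ((q + 1) * j₀ + q * k₀) →
      k = k₀ ∧ j ≡ j₀ [MOD q] := by
    intro j k hj hk h
    have hc' : c j k ≠ 0 := by
      intro h0; rw [h0, map_zero, map_zero, zero_mul] at h; exact hpos.ne h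
    have hm := exp_mod hv hpS hθ0 hθ1 hθp hc' hc h
    have h1 : q * k ≡ q * k₀ [MOD q + 1] := by
      have := Nat.ModEq.of_mul_right q hm
      unfold Nat.ModEq at this ⊢
      simpa [Nat.add_mod] using this
    have h2 : k ≡ k₀ [MOD q + 1] := Nat.ModEq.cancel_left_of_coprime (by simp) h1
    have h3 : k = k₀ := by unfold Nat.ModEq at h2; rwa [Nat.mod_eq_of_lt hk, Nat.mod_eq_of_lt hk₀] at h2
    subst h3
    exact ⟨rfl, Nat.ModEq.mul_left_cancel' (by omega) (Nat.ModEq.add_right_cancel' _ hm)⟩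
  by_cases hA : v (algebraMap L E (c 0 k₀)) * θ ^ ((q + 1) * 0 + q * k₀) = v (algebraMap L E (c j₀ k₀)) * θ ^ ((q + 1) * j₀ + q * k₀)
  · left
    have ev : v (algebraMap L E (c 0 k₀) * (l0 ^ 0 * Y0 ^ k₀)) = v (algebraMap L E (c j₀ k₀)) * θ ^ ((q + 1) * j₀ + q * k₀) := by
      rw [← hA, pow_zero, one_mul, map_mul, map_pow, hY0, ← pow_mul, mul_zero, zero_add]
    rw [← ev]
    refine dom_sum v (fun j k => algebraMap L E (c j k) * (l0 ^ j * Y0 ^ k)) (by omega) hk₀ ?_ (ev ▸ hpos.ne')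
    intro j k hj hk hne
    simp only [ev]
    rw [map_mul, map_mul, map_pow, map_pow, hY0]
    by_cases hjz : j = 0
    · subst hjz
      rw [pow_zero, one_mul, ← pow_mul]
      have := hmax 0 k hj hk
      rw [mul_zero, zero_add] at this
      refine lt_of_le_of_ne this fun h => hne ?_
      rw [(hexp 0 k hj hk (by rw [mul_zero, zero_add]; exact h)).1]
    · by_cases hcz : c j k = 0
      · rw [hcz, map_zero, map_zero, zero_mul]; exact hpos
      · refine lt_of_lt_of_le ?_ (hmax j k hj hk)
        have hcv : 0 < v (algebraMap L E (c j k)) := by rw [zero_lt_iff, Valuation.ne_zero_iff]; simpa using hcz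
        rw [pow_add, pow_mul, pow_mul]
        refine mul_lt_mul_of_pos_left ?_ hcv
        exact mul_lt_mul_of_pos_right (pow_lt_pow_left₀ hl0 zero_le hjz) (pow_pos (pow_pos hθ0 _) _)
  · right
    have ev : ∀ j k, v (algebraMap L E (c j k) * (l1 ^ j * Y1 ^ k)) = v (algebraMap L E (c j k)) * θ ^ ((q + 1) * j + q * k) := by
      intro j k
      rw [map_mul, map_mul, map_pow, map_pow, hY1, hl1, ← pow_mul, ← pow_mul, pow_add]
    rw [← ev]
    refine dom_sum v (fun j k => algebraMap L E (c j k) * (l1 ^ j * Y1 ^ k)) hj₀ hk₀ ?_ (by rw [ev]; exact hpos.ne')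
    intro j k hj hk hne
    simp only [ev]
    refine lt_of_le_of_ne (hmax j k hj hk) fun h => hne ?_
    obtain ⟨rfl, hjj⟩ := hexp j k hj hk h
    by_cases hj0 : j = 0
    · subst hj0; exact absurd h hA
    by_cases hj0' : j₀ = 0
    · subst hj0'; exact absurd rfl hA
    have : j = j₀ := by
      have : j - 1 ≡ j₀ - 1 [MOD q] := by
        refine Nat.ModEq.add_right_cancel' 1 ?_
        rwa [Nat.sub_add_cancel (by omega), Nat.sub_add_cancel (by omega)]
      unfold Nat.ModEq at this
      rw [Nat.mod_eq_of_lt (by omega), Nat.mod_eq_of_lt (by omega)] at this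
      omega
    rw [this]

theorem caseIII (C : Ctx L v p f g h₁ h₂ a b ω μ) (hb : ¬ (p : S) ∣ b) (i₀ : ℕ)
    (hcong : (p : S) ∣ h₂ ^ p * a - i₀ * h₁ ^ p * b) (c : ℕ → S) (hc0 : (p : S) ∣ b - c 0) (hcp : (p : S) ∣ a - c p)
    (hc : ∀ i < p, (p : S) ∣ h₂ * c (i + 1) + (-(i₀ * h₁)) * c i) : HasMCM S K := by
  haveI := C.charE
  haveI : CharZero K := charZero_of_injective_algebraMap (algebraMap L K).injective
  have hp3 := C.hp3
  obtain ⟨θ, φ₀, φ₁, hθ0, hθ1, hθp, hxy, hl0, hl1⟩ := setupIII C hb i₀ hcong rfl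
  have hh2 : v (algebraMap S E h₂) = 1 := C.hv.eq_one C.h2p
  have hvY := fun φ : K →ₐ[L] E => (C.symm.vx φ rfl).2.2.2
  set x := ω - algebraMap S K h₁ with hx
  set y := μ - algebraMap S K h₂ with hy
  set l := algebraMap S K h₂ * x + algebraMap S K (-(i₀ * h₁)) * y with hl
  obtain ⟨n, -, hn⟩ := rel_x (B := K) C.hp C.hf C.hω hx
  obtain ⟨n', -, hn'⟩ := rel_x (B := K) C.hp C.hg C.hμ hy
  have hq : p * (p - 1) + (p - 1) = (p - 1) * (p + 1) := by
    obtain ⟨q, rfl⟩ : ∃ q, p = q + 1 := ⟨p - 1, by omega⟩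
    simp only [Nat.add_sub_cancel]; ring
  have hq2 : p + (p - 1) * (p - 1) = p * (p - 1) + 1 := by
    obtain ⟨q, rfl⟩ : ∃ q, p = q + 1 := ⟨p - 1, by omega⟩
    simp only [Nat.add_sub_cancel]; ring
  have hpp1 : 1 ≤ p * (p - 1) := Nat.mul_pos (by omega) (by omega)
  refine assembly C.hp C.hpS C.hreg C.hfg C.hω C.hμ C.hKgen C.hdeg C.hv (F3 p c x y) 
    (fun j k _ _ => F3_A C.xA C.yA _ j k) (fun z hz => F3_pA C.hp.pos C.span hz) {φ₀, φ₁} (θ ^ (p * (p - 1) + 1)) ?_ ?_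
  · intro φ hφ j k hj hk
    have hφl : v (φ l) ≤ θ ^ p := by
      rcases hφ with h | h
      · rw [h]; exact hl0.le
      · rw [Set.mem_singleton_iff.mp h]; exact hl1.le
    obtain ⟨hX, hY⟩ := hxy φ
    have hbd : ∀ j k, v (φ x ^ j * φ y ^ k) ≤ θ ^ ((p - 1) * (j + k)) := by
      intro j k
      rw [map_mul, map_pow, map_pow, hY, mul_add, pow_add, pow_mul, pow_mul]
      gcongr
    have hS : ∀ s : S, (p : S) ∣ s → v (p * algebraMap S E s) ≤ θ ^ (p * (p - 1) + 1) := by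
      intro s hs
      rw [map_mul, pow_succ, ← hθp]
      refine mul_le_mul' le_rfl ((C.hv.le_p hs).trans ?_)
      rw [hθp]
      exact pow_le_of_le_one zero_le hθ1.le (by omega)
    by_cases hjk : j + k = p
    · rw [F3_eq hjk, map_sub, map_mul, map_mul, map_pow, map_pow, map_natCast, hom_S]
      have main : ∀ j ≤ p, v (φ x ^ j * φ y ^ (p - j) - p * algebraMap S E (c j)) ≤ θ ^ (p * (p - 1) + 1) := by
        intro j
        induction j with
        | zero =>
          intro _
          obtain ⟨q, hq1, hqr⟩ := hvY φ
          rw [pow_zero, one_mul, Nat.sub_zero, hqr]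
          have : (p : E) * (algebraMap S E b - algebraMap S E h₂ ^ (p - 1) * φ y + φ y ^ 2 * q) - p * algebraMap S E (c 0) = 
            p * algebraMap S E (b - c 0) + p * (φ y * (- algebraMap S E h₂ ^ (p - 1) + φ y * q)) := by rw [map_sub (algebraMap S E)]; ring
          rw [this]
          refine v.map_add_le (hS _ hc0) ?_
          rw [map_mul, pow_succ, ← hθp]
          refine mul_le_mul' le_rfl ?_
          rw [map_mul]
          refine mul_le_of_le_of_le_one ?_ (v.map_add_le ?_ ?_)
          · rw [hY]; exact pow_le_of_le_one zero_le hθ1.le (by omega)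
          · rw [Valuation.map_neg, map_pow, hh2, one_pow]
          · rw [map_mul, hY]; exact mul_le_one' (pow_le_one' hθ1.le _) hq1
        | succ j ih =>
          intro hj
          have ih' := ih (by omega)
          have e : algebraMap S E h₂ * (φ x ^ (j + 1) * φ y ^ (p - (j + 1)) - p * algebraMap S E (c (j + 1))) = 
            φ l * (φ x ^ j * φ y ^ (p - (j + 1))) + algebraMap S E (i₀ * h₁) * (φ x ^ j * φ y ^ (p - j) - p * algebraMap S E (c j)) 
             - p * algebraMap S E (h₂ * c (j + 1) + (-(i₀ * h₁)) * c j) := by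
            rw [show p - j = p - (j + 1) + 1 by omega, hl]
            simp only [map_add, map_mul, hom_S, map_neg]
            ring
          have e2 : v (φ x ^ (j + 1) * φ y ^ (p - (j + 1)) - p * algebraMap S E (c (j + 1))) = 
            v (algebraMap S E h₂ * (φ x ^ (j + 1) * φ y ^ (p - (j + 1)) - p * algebraMap S E (c (j + 1)))) := by
            rw [map_mul, hh2, one_mul]
          rw [e2, e]
          refine v.map_sub_le (v.map_add_le ?_ ?_) (hS _ (hc j (by omega)))
          · rw [map_mul, ← hq2, pow_add]
            refine mul_le_mul' hφl ((hbd _ _).trans (le_of_eq ?_))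
            congr 2; omega
          · rw [map_mul]
            exact (mul_le_of_le_one_left' (C.hv.le_one _)).trans ih'
      have := main j (by omega)
      rwa [show p - j = k by omega] at this
    · have hF : F3 p c x y j k = (p : K) ^ (if j + k = 0 then 2 else if j + k < p then 1 else 0) * (x ^ j * y ^ k) := if_neg hjk
      rw [hF, map_mul, map_mul, map_mul, map_pow, map_pow, map_pow, map_natCast, map_pow, hθp]
      refine (mul_le_mul' le_rfl (hbd j k)).trans ?_
      rw [← pow_mul, ← pow_add]
      apply pow_le_pow_right_of_le_one' hθ1.le
      split_ifs with h1 h2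
      · omega
      · have : (p - 1) * 1 ≤ (p - 1) * (j + k) := Nat.mul_le_mul_left _ (by omega)
        omega
      · have : (p - 1) * (p + 1) ≤ (p - 1) * (j + k) := Nat.mul_le_mul_left _ (by omega)
        omega
  · intro z hz
    have hh20 : h₂ ≠ 0 := by intro h; exact C.h2p (h ▸ dvd_zero _)
    refine local_crit C.hp C.hpS C.hv _ {φ₀, φ₁} (θ ^ (p * (p - 1) + 1)) (C.spanL hh20 hl) (fun j k => θ ^ (p * j + (p - 1) * k))
      (fun j k => if j + k = 0 then 2 else if j + k < p then 1 else 0) ?_ ?_ ?_ z hz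
    · intro c j₀ k₀ hj hk hc hmax
      rcases indIII C.hv C.hpS C.hp hθ0 hθ1 hθp hl0 hl1 (hxy φ₀).2 (hxy φ₁).2 c j₀ k₀ hj hk hc hmax with h | h
      · exact ⟨φ₀, by simp, h⟩
      · exact ⟨φ₁, by simp, h⟩
    · intro j k hj hk
      rw [hθp, ← pow_mul, ← pow_add, ← pow_add]
      apply (pow_lt_pow_iff_right_of_lt_one₀ hθ0 hθ1).mpr
      have h4 : (p - 1) * k ≤ p * k := Nat.mul_le_mul_right _ (by omega)
      split_ifs with h1 h2
      · have h5 : j = 0 := by omega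
        have h6 : k = 0 := by omega
        subst h5; subst h6; omega
      · have : p * (j + k) ≤ p * (p - 1) := Nat.mul_le_mul_left _ (by omega)
        rw [mul_add] at this; omega
      · have h5 : p * j ≤ p * (p - 1) := Nat.mul_le_mul_left _ (by omega)
        have h6 : p * k ≤ p * (p - 1) := Nat.mul_le_mul_left _ (by omega)
        omega
    · intro j k hj hk
      exact F3_l C.hp.pos C.xA C.yA C.span hn hn' hc0 hcp h₂ (-(i₀ * h₁)) hl hc hj hk
end

section
set_option linter.all false

theorem root_fp {S : Type*} [CommRing S] {p : ℕ} (hp : p.Prime) (hpS : Prime (p : S))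
    {C D : S} (hD : ¬ (p : S) ∣ D) (h : (p : S) ∣ D ^ (p - 1) - C ^ (p - 1)) : ∃ i < p, (p : S) ∣ C - i * D := by
  haveI := Fact.mk hp
  set I := Ideal.span {(p : S)} with hI
  haveI hIp : I.IsPrime := (Ideal.span_singleton_prime hpS.ne_zero).mpr hpS
  have hmk : ∀ s : S, Ideal.Quotient.mk I s = 0 ↔ (p : S) ∣ s := fun s => by
    rw [Ideal.Quotient.eq_zero_iff_mem, hI, Ideal.mem_span_singleton]
  let F := FractionRing (S ⧸ I)
  let r : S →+* F := (algebraMap (S ⧸ I) F).comp (Ideal.Quotient.mk I)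
  have hr : ∀ s : S, r s = 0 ↔ (p : S) ∣ s := fun s => by
    rw [← hmk]
    exact map_eq_zero_iff (algebraMap (S ⧸ I) F) (IsFractionRing.injective _ _)
  haveI : CharP F p := by
    refine (CharP.charP_iff_prime_eq_zero hp).mpr ?_
    have := (hr (p : S)).mpr dvd_rfl
    simpa using this
  have hD0 : r D ≠ 0 := fun h => hD ((hr D).mp h)
  have hCD := (hr _).mpr h
  rw [map_sub, map_pow, map_pow, sub_eq_zero] at hCD
  have ht : (r C / r D) ^ p = r C / r D := by
    conv_lhs => rw [← Nat.sub_add_cancel hp.one_le, pow_succ, div_pow, ← hCD, div_self (pow_ne_zero _ hD0), one_mul]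
  obtain ⟨n, hn⟩ := (mem_bot_iff_intCast p F).mp ((Subfield.mem_bot_iff_pow_eq_self F p).mpr ht)
  have hp0 : (0 : ℤ) < p := by exact_mod_cast hp.pos
  have h1 := Int.emod_nonneg n hp0.ne'
  have h2 := Int.emod_lt_of_pos n hp0
  refine ⟨(n % p).toNat, by omega, (hr _).mp ?_⟩
  have h3 : (((n % p).toNat : ℕ) : F) = n := by
    have : (((n % p).toNat : ℤ) : F) = ((n % p : ℤ) : F) := by rw [Int.toNat_of_nonneg h1]
    rw [Int.cast_natCast] at this
    rw [this]
    conv_rhs => rw [← Int.mul_ediv_add_emod n p]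
    push_cast
    rw [Int.cast_mul, Int.cast_natCast, CharP.cast_eq_zero F p, zero_mul, zero_add]
  rw [map_sub, map_mul, map_natCast, h3, hn, div_mul_cancel₀ _ hD0, sub_self]

theorem fermatS {S : Type*} [CommRing S] {p : ℕ} (hp : p.Prime) (i : ℕ) : (p : S) ∣ (i : S) ^ p - i := by
  haveI := Fact.mk hp
  have h : (p : ℤ) ∣ (i : ℤ) ^ p - i := by
    rw [← ZMod.intCast_zmod_eq_zero_iff_dvd]
    push_cast
    rw [ZMod.pow_card, sub_self]
  have := map_dvd (Int.castRingHom S) h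
  simpa using this

theorem final_ctx {S : Type*} [CommRing S] [IsDomain S] [IsNoetherianRing S] [IsLocalRing S] [IsIntegrallyClosed S]
    {L : Type*} [Field L] [CharZero L] [Algebra S L] [IsFractionRing S L]
    {K : Type*} [Field K] [Algebra L K] [Algebra S K] [IsScalarTower S L K]
    {E : Type*} [Field E] [IsAlgClosed E] [Algebra S E] [Algebra L E] [Algebra K E]
    [IsScalarTower S L E] [IsScalarTower L K E]
    {Γ : Type*} [LinearOrderedCommGroupWithZero Γ] {v : Valuation E Γ}
    {p : ℕ} {f g h₁ h₂ a b : S} {ω μ : K} (C : Ctx L v p f g h₁ h₂ a b ω μ) 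
    (hSmodp : IsIntegrallyClosed (S ⧸ Ideal.span {((p : ℕ) : S)}))
    (hpm : (p : S) ∈ IsLocalRing.maximalIdeal S)
    (hu : (¬ IsUnit f ∧ ¬ IsUnit g) ∨ (IsUnit f ∧ IsUnit g))
    (hgrade : ContainsRegSeq3 S (Ideal.span {((p : ℕ) : S), f, g})) : HasMCM S K := by
  have hp := C.hp
  have hpS := C.hpS
  have z1 : ∀ {b h₁ h₂ : S}, ∀ i < p, (p : S) ∣ h₂ * (if i + 1 = 0 then b else 0) + (-(((0 : ℕ) : S) * h₁)) * (if i = 0 then b else 0) := by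
    intro b h₁ h₂ i _; simp
  by_cases hb : (p : S) ∣ b
  · by_cases ha : (p : S) ∣ a
    · exact caseIV C ha hb
    · refine caseIII C.symm ha 0 ?_ (fun i => if i = 0 then a else 0) (by simp) (by simpa [hp.ne_zero] using hb) z1
      simpa using hb.mul_left _
  by_cases hi : ∃ i < p, (p : S) ∣ h₂ ^ p * a - (i : ℕ) * h₁ ^ p * b
  · obtain ⟨i, hip, hcong⟩ := hi
    rcases Nat.eq_zero_or_pos i with rfl | hi0
    · have ha : (p : S) ∣ a := by
        have : (p : S) ∣ h₂ ^ p * a := by simpa using hcong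
        exact (hpS.dvd_or_dvd this).resolve_left fun h => C.h2p (hpS.dvd_of_dvd_pow h)
      exact caseIII C hb 0 hcong (fun i => if i = 0 then b else 0) (by simp) (by simpa [hp.ne_zero] using ha) z1
    · obtain ⟨e, he1, he2⟩ := exists_e hp hpS hSmodp hpm C.hf C.hg hu hgrade C.h2p hi0 hip hcong
      refine caseIII C hb i hcong (fun k => e * (i * h₁) ^ k * h₂ ^ (p - k)) ?_ ?_ ?_
      · convert he1 using 1
        simp only [pow_zero, Nat.sub_zero]; ring
      · have h3 := (fermatS (S := S) hp i).mul_left (h₁ ^ p * e)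
        convert dvd_sub he2 h3 using 1
        simp only [Nat.sub_self, pow_zero, mul_pow]; ring
      · intro k hk
        have : h₂ * (e * (i * h₁) ^ (k + 1) * h₂ ^ (p - (k + 1))) + -(i * h₁) * (e * (i * h₁) ^ k * h₂ ^ (p - k)) = 0 := by
          rw [show p - k = p - (k + 1) + 1 by omega]; ring
        simp only [this]; exact dvd_zero _
  have ha : ¬ (p : S) ∣ a := fun h => hi ⟨0, hp.pos, by simpa using h.mul_left _⟩
  by_cases hno : ∀ c d : S, ¬ (p : S) ∣ d → ¬ (p : S) ∣ d ^ p * a - c ^ p * b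
  · exact caseI C ha hb hno
  push Not at hno
  obtain ⟨c, d, hd, hcd⟩ := hno
  have hdp : ¬ (p : S) ∣ d ^ p := fun h => hd (hpS.dvd_of_dvd_pow h)
  have hc : ¬ (p : S) ∣ c := by
    intro h
    have h1 : (p : S) ∣ d ^ p * a := (dvd_sub_left ((dvd_pow h hp.ne_zero).mul_right b)).mp hcd
    exact (hpS.dvd_or_dvd h1).elim hdp ha
  refine caseII C ha hb hc hd hcd fun hne => hi ?_
  obtain ⟨i, hip, h⟩ := root_fp hp hpS (C := c * h₂) (D := d * h₁) (fun h => (hpS.dvd_or_dvd h).elim hd C.h1p) hne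
  refine ⟨i, hip, ?_⟩
  have h1 : (p : S) ∣ (c * h₂) ^ p - (i * (d * h₁)) ^ p := h.trans (sub_dvd_pow_sub_pow _ _ _)
  have h2 := fermatS (S := S) hp i
  have h3 : (p : S) ∣ d ^ p * (h₂ ^ p * a - (i : ℕ) * h₁ ^ p * b) := by
    convert dvd_add (dvd_add (hcd.mul_left (h₂ ^ p)) (h1.mul_left b)) (h2.mul_left (d ^ p * h₁ ^ p * b)) using 1
    simp only [mul_pow]; ring
  exact (hpS.dvd_or_dvd h3).resolve_left hdp
end
theorem stmt16
    {S : Type*} [CommRing S] [IsDomain S] [IsNoetherianRing S] [IsLocalRing S]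
    [IsIntegrallyClosed S]
    {L : Type*} [Field L] [CharZero L] [Algebra S L] [IsFractionRing S L]
    {K : Type*} [Field K] [Algebra L K] [Algebra S K] [IsScalarTower S L K]
    {p : ℕ} (hp : p.Prime) (hp3 : 3 ≤ p) (hpS : Prime ((p : ℕ) : S))
    (hSmodp : IsIntegrallyClosed (S ⧸ Ideal.span {((p : ℕ) : S)}))
    (hreg : ∃ s : Finset S, Ideal.span (s : Set S) = IsLocalRing.maximalIdeal S ∧
      (s.card : WithBot ℕ∞) = ringKrullDim S)
    (hmix : ((p : ℕ) : S) ∈ IsLocalRing.maximalIdeal S ∧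
      ((p : ℕ) : S) ∉ IsLocalRing.maximalIdeal S ^ 2)
    {f g h₁ h₂ a b : S} (hf : f = h₁ ^ p + a * (p : S)) (hg : g = h₂ ^ p + b * (p : S))
    (hfg : (¬IsUnit f ∧ ¬IsUnit g ∧ PaperSquarefree f ∧ PaperSquarefree g ∧ SatisfiesA1 f g) ∨
      (IsUnit f ∧ IsUnit g ∧ (∀ x : S, x ^ p ≠ f) ∧ (∀ x : S, x ^ p ≠ g)))
    {ω μ : K} (hω : ω ^ p = algebraMap S K f) (hμ : μ ^ p = algebraMap S K g)
    (hKgen : Algebra.adjoin L ({ω, μ} : Set K) = ⊤)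
    (hdeg : Module.finrank L K = p ^ 2)
    (hgrade : ContainsRegSeq3 S (Ideal.span {((p : ℕ) : S), f, g})) :
    ∃ M : Submodule S K, M ≠ ⊥ ∧ M.FG ∧
      (∀ r ∈ integralClosure S K, ∀ m ∈ M, r * m ∈ M) ∧
      (modDepth S M : WithBot ℕ∞) = ringKrullDim S := by
  have hu : (¬ IsUnit f ∧ ¬ IsUnit g) ∨ (IsUnit f ∧ IsUnit g) := by
    rcases hfg with h | h
    · exact Or.inl ⟨h.1, h.2.1⟩
    · exact Or.inr ⟨h.1, h.2.1⟩
  have h1 : ¬ (p : S) ∣ h₁ := h_not_dvd hp.ne_zero hpS hmix.1 hf hu hgrade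
  have h2 : ¬ (p : S) ∣ h₂ := by
    refine h_not_dvd (g := f) hp.ne_zero hpS hmix.1 hg ?_ ?_
    · rcases hu with h | h
      · exact Or.inl h.symm
      · exact Or.inr h.symm
    · rw [Set.pair_comm]; exact hgrade
  have hinj : Function.Injective (algebraMap S (AlgebraicClosure K)) := by
    rw [IsScalarTower.algebraMap_eq S K (AlgebraicClosure K), IsScalarTower.algebraMap_eq S L K]
    exact (algebraMap K _).injective.comp ((algebraMap L K).injective.comp (IsFractionRing.injective S L))
  obtain ⟨V, hV⟩ := exists_goodVal S (AlgebraicClosure K) hinj p hpS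
  have hC : Ctx L V.valuation p f g h₁ h₂ a b ω μ :=
    ⟨hp, hp3, hpS, hreg, hf, hg, hfg, hω, hμ, hKgen, hdeg, hV, h1, h2⟩
  exact final_ctx hC hSmodp hmix.1 hu hgrade
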